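/- arXiv:1207.4105 — 4 statements merged into one kernel-verified Lean document; each statement's English description precedes it below -/
import Mathlib

section
/- Let (V,q) be a quadratic form of even rank n = 2m > 2 over a field k of characteristic ≠ 2. Then the following are equivalent: (a) the radical of q has dimension at most 1; (b) the center Z(q) of the even Clifford algebra C₀(q) is a k-algebra of dimension 2; (c) C₀(q) is an Azumaya algebra over Z(q) of degree 2^{m−1}. -/
/-!
STATEMENT 7: Let (V,q) be a quadratic form of even rank n = 2m > 2 over a field k of
characteristic ≠ 2. TFAE:
(a) the radical of q has dimension at most 1;
(b) the center Z(q) of the even Clifford algebra C₀(q) is a k-algebra of dimension 2;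
(c) C₀(q) is an Azumaya algebra over Z(q) of degree 2^{m−1}.
-/

open scoped TensorProduct

/-- The natural map `A ⊗[S] Aᵐᵒᵖ →ₗ[S] End_S A`, `a ⊗ bᵒᵖ ↦ (x ↦ a * x * b)`. -/
noncomputable def mulLeftRightMap (S A : Type*) [CommRing S] [Ring A] [Algebra S A] :
    A ⊗[S] Aᵐᵒᵖ →ₗ[S] Module.End S A :=
  TensorProduct.lift <| LinearMap.mk₂ S
    (fun a b => (LinearMap.mulLeft S a) ∘ₗ (LinearMap.mulRight S b.unop))
    (fun a a' b => by ext x; simp [add_mul])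
    (fun c a b => by ext x; simp [smul_mul_assoc])
    (fun a b b' => by ext x; simp [mul_add])
    (fun c a b => by ext x; simp [mul_smul_comm])

/-- `A` is an Azumaya algebra of degree `d` over `S`: it is a faithful finitely generated
projective `S`-module of rank `d ^ 2` such that the enveloping map
`A ⊗[S] Aᵐᵒᵖ → End_S A` is an isomorphism. -/
def IsAzumayaOfDegree (S A : Type*) [CommRing S] [Ring A] [Algebra S A] (d : ℕ) : Prop :=
  Module.Finite S A ∧ Module.Projective S A ∧ FaithfulSMul S A ∧
    Function.Bijective (mulLeftRightMap S A) ∧ Module.rank S A = (d ^ 2 : ℕ)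

/-- The center of a (possibly noncommutative) algebra acts on it, making it an algebra
over the center. -/
noncomputable instance centerAlgebra (k A : Type*) [CommRing k] [Ring A] [Algebra k A] :
    Algebra (Subalgebra.center k A) A :=
  RingHom.toAlgebra' (Subalgebra.center k A).val.toRingHom
    (fun c x => ((Subalgebra.mem_center_iff.mp c.2) x).symm)

/-!
Diagonalise `q` as `⟨a₁, …, aₙ⟩`. The monomials `e_S`, `#S` even, form a basis of the even Clifford
algebra, with `e_S e_T = ± (∏ i ∈ S ∩ T, a_i) e_{S ∆ T}` and `e_S e_T = (-1) ^ #(S ∩ T) e_T e_S`.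
Commuting with one `e_T` can be tested coefficientwise, so the center is spanned by the monomials it
contains: the top one, and those `e_S` with `a_i = 0` for all `i ∈ S`. Hence its dimension is `2`
exactly when at most one `a_i` vanishes. If `a_i ≠ 0` for all `i ≠ i₀`, then the `e_S` with `i₀ ∉ S`
are units forming a basis over the center, and they act on one another by conjugation through signs
`(-1) ^ #(S ∩ T)`. Since `{i₀}ᶜ` has odd cardinality, these signs are orthogonal characters, and
averaging against them writes every endomorphism as a sum of maps `x ↦ a x b`. Conversely, an
algebra of rank `2 ^ (2 m - 2)` over its center and of dimension `2 ^ (2 m - 1)` over `k` has a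
center of dimension at most `2`, while `1` and the top monomial are always central.
-/

section EvenSubsets

open Finset
open scoped symmDiff

variable {ι : Type*}

/-- The subsets of `s` with an even number of elements. Together with symmetric difference they
index the monomials of an even Clifford algebra. -/
def evenSubsets (s : Finset ι) : Finset (Finset ι) :=
  {S ∈ s.powerset | Even #S}

theorem mem_evenSubsets {s S : Finset ι} : S ∈ evenSubsets s ↔ S ⊆ s ∧ Even #S := by
  simp [evenSubsets]

theorem two_mul_card_evenSubsets {s : Finset ι} (hs : s.Nonempty) :
    2 * #(evenSubsets s) = 2 ^ #s := by
  have hsum : ∑ S ∈ s.powerset, (1 + (-1 : ℤ) ^ #S) = 2 ^ #s := by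
    simp [sum_add_distrib, sum_powerset_neg_one_pow_card_of_nonempty hs]
  have hterm (S : Finset ι) : (1 + (-1 : ℤ) ^ #S) = if Even #S then 2 else 0 := by
    split_ifs with h <;> simp [h, Nat.not_even_iff_odd.mp]
  simp only [hterm, ← sum_filter, sum_const, nsmul_eq_mul] at hsum
  exact_mod_cast (mul_comm _ _).trans hsum

theorem card_evenSubsets {s : Finset ι} {n : ℕ} (hs : #s = n + 1) :
    #(evenSubsets s) = 2 ^ n := by
  have := two_mul_card_evenSubsets (s := s) (card_pos.mp (by lia))
  grind

variable [DecidableEq ι]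

theorem card_symmDiff_add_two_mul_card_inter (S T : Finset ι) :
    #(S ∆ T) + 2 * #(S ∩ T) = #S + #T := by
  have hunion : S ∪ T = S ∆ T ∪ S ∩ T := (symmDiff_sup_inf S T).symm
  have hdisj : Disjoint (S ∆ T) (S ∩ T) := disjoint_symmDiff_inf S T
  rw [← card_union_add_card_inter, hunion, card_union_of_disjoint hdisj]
  ring

theorem even_card_symmDiff {S T : Finset ι} (hS : Even #S) (hT : Even #T) : Even #(S ∆ T) := by
  have := card_symmDiff_add_two_mul_card_inter S T
  grind

theorem neg_one_pow_card_symmDiff_inter {R : Type*} [Monoid R] [HasDistribNeg R]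
    (S T U : Finset ι) :
    (-1 : R) ^ #((S ∆ T) ∩ U) = (-1) ^ #(S ∩ U) * (-1) ^ #(T ∩ U) := by
  have hdistrib : (S ∆ T) ∩ U = (S ∩ U) ∆ (T ∩ U) := inf_symmDiff_distrib_right S T U
  rw [hdistrib, ← pow_add, ← card_symmDiff_add_two_mul_card_inter (S ∩ U) (T ∩ U), pow_add,
    pow_mul, neg_one_sq, one_pow, mul_one]

theorem symmDiff_mem_evenSubsets {s S T : Finset ι} (hS : S ∈ evenSubsets s)
    (hT : T ∈ evenSubsets s) : S ∆ T ∈ evenSubsets s := by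
  rw [mem_evenSubsets] at *
  exact ⟨symmDiff_le_sup.trans (union_subset hS.1 hT.1), even_card_symmDiff hS.2 hT.2⟩

theorem sum_evenSubsets_neg_one_pow_card_inter {R : Type*} [Ring R] {s D : Finset ι}
    (hD : D.Nonempty) (hDs : D ⊂ s) : ∑ W ∈ evenSubsets s, (-1 : R) ^ #(W ∩ D) = 0 := by
  obtain ⟨x, hx⟩ := hD
  obtain ⟨y, hys, hyD⟩ := exists_of_ssubset hDs
  have hxy : x ≠ y := by rintro rfl; exact hyD hx
  have hpair : {x, y} ∈ evenSubsets s := by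
    simp [mem_evenSubsets, insert_subset_iff, hDs.subset hx, hys, card_pair hxy]
  have hpairD : ({x, y} : Finset ι) ∩ D = {x} := by
    rw [insert_inter_of_mem hx, singleton_inter_of_notMem hyD, insert_empty_eq]
  refine sum_involution (fun W _ ↦ W ∆ {x, y}) (fun W _ ↦ ?_) (fun W _ _ ↦ ?_)
    (fun W hW ↦ symmDiff_mem_evenSubsets hW hpair) (fun W _ ↦ symmDiff_symmDiff_cancel_right _ _)
  · simp [neg_one_pow_card_symmDiff_inter, hpairD]
  · simp [symmDiff_eq_left, bot_eq_empty]

theorem sum_evenSubsets_neg_one_pow_mul {R : Type*} [Ring R] {s U T : Finset ι} (hs : Odd #s)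
    (hU : U ∈ evenSubsets s) (hT : T ∈ evenSubsets s) :
    ∑ W ∈ evenSubsets s, (-1 : R) ^ #(W ∩ U) * (-1) ^ #(W ∩ T) =
      if U = T then (#(evenSubsets s) : R) else 0 := by
  simp only [inter_comm _ U, inter_comm _ T, ← neg_one_pow_card_symmDiff_inter]
  split_ifs with h
  · simp [h]
  · obtain ⟨hsub, heven⟩ := mem_evenSubsets.1 (symmDiff_mem_evenSubsets hU hT)
    have hne : U ∆ T ≠ s := by
      rintro rfl
      exact Nat.not_even_iff_odd.2 hs heven
    simp only [inter_comm (U ∆ T)]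
    exact sum_evenSubsets_neg_one_pow_card_inter (symmDiff_nonempty.2 h) (hsub.ssubset_of_ne hne)

end EvenSubsets

section Monomials

open Finset
open scoped symmDiff

theorem exists_prod_map_eq_smul_of_perm {ι R : Type*} [Ring R] {g : ι → R}
    (hg : Pairwise fun i j ↦ g i * g j = -(g j * g i)) {l l' : List ι} (h : l.Perm l') :
    ∃ u : ℤˣ, (l.map g).prod = u • (l'.map g).prod := by
  induction h with
  | nil => exact ⟨1, by simp⟩
  | cons i _ ih =>
    obtain ⟨u, hu⟩ := ih
    exact ⟨u, by simp [hu, mul_smul_comm]⟩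
  | swap i j l =>
    obtain rfl | hij := eq_or_ne i j
    · exact ⟨1, by simp⟩
    · exact ⟨-1, by simp [← mul_assoc, hg hij]⟩
  | trans _ _ ih₁ ih₂ =>
    obtain ⟨u, hu⟩ := ih₁
    obtain ⟨w, hw⟩ := ih₂
    exact ⟨u * w, by rw [hu, hw, mul_smul]⟩

theorem neg_one_pow_mul_eq_iff {R : Type*} [Ring R] {n : ℕ} {x y : R} :
    (-1) ^ n * x = y ↔ x = (-1) ^ n * y := by
  obtain h | h := neg_one_pow_eq_or R n <;> simp [h, neg_eq_iff_eq_neg]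

theorem mul_mul_eq_neg_one_pow_mul {R : Type*} [Ring R] {m n : ℕ} {x y z : R}
    (hy : x * y = (-1) ^ m * (y * x)) (hz : x * z = (-1) ^ n * (z * x)) :
    x * (y * z) = (-1) ^ (m + n) * (y * z * x) := by
  have hcomm : y * (-1) ^ n = (-1) ^ n * y := ((Commute.neg_one_right y).pow_right n).eq
  rw [← mul_assoc, hy, mul_assoc, mul_assoc, hz, ← mul_assoc y, hcomm, pow_add]
  simp only [mul_assoc]

/-- The product of the `g i` for `i ∈ S`, in the order chosen by `Finset.toList`: for an
anticommuting family any other order gives the same element up to sign. -/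
noncomputable def cliffordMonomial {ι C : Type*} [Monoid C] (g : ι → C) (S : Finset ι) : C :=
  (S.toList.map g).prod

@[simp]
theorem cliffordMonomial_empty {ι C : Type*} [Monoid C] (g : ι → C) :
    cliffordMonomial g ∅ = 1 := by
  simp [cliffordMonomial]

/-- The relations between the images `g i` in a Clifford algebra of orthogonal vectors on which
the quadratic form takes the values `a i`. -/
structure IsCliffordFamily {ι k C : Type*} [CommRing k] [Ring C] [Algebra k C]
    (a : ι → k) (g : ι → C) : Prop where
  mul_self (i : ι) : g i * g i = algebraMap k C (a i)
  anticomm : Pairwise fun i j ↦ g i * g j = -(g j * g i)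

namespace IsCliffordFamily

variable {ι k C : Type*} [DecidableEq ι] [CommRing k] [Ring C] [Algebra k C]
  {a : ι → k} {g : ι → C}

theorem exists_monomial_insert (hg : IsCliffordFamily a g) {i : ι} {S : Finset ι} (hi : i ∉ S) :
    ∃ u : ℤˣ, cliffordMonomial g (insert i S) = u • (g i * cliffordMonomial g S) :=
  exists_prod_map_eq_smul_of_perm hg.anticomm (toList_insert hi)

theorem exists_generator_mul_monomial (hg : IsCliffordFamily a g) (i : ι) (S : Finset ι) :
    ∃ u : ℤˣ, g i * cliffordMonomial g S =
      u • (∏ j ∈ {i} ∩ S, a j) • cliffordMonomial g ({i} ∆ S) := by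
  by_cases hi : i ∈ S
  · obtain ⟨u, hu⟩ := hg.exists_monomial_insert (notMem_erase i S)
    rw [insert_erase hi] at hu
    refine ⟨u, ?_⟩
    have hsymm : {i} ∆ S = S.erase i := by grind [mem_symmDiff]
    rw [singleton_inter_of_mem hi, prod_singleton, hsymm, hu, mul_smul_comm, ← mul_assoc,
      hg.mul_self, Algebra.smul_def (a i)]
  · obtain ⟨u, hu⟩ := hg.exists_monomial_insert hi
    refine ⟨u⁻¹, ?_⟩
    have hsymm : {i} ∆ S = insert i S := by grind [mem_symmDiff]
    rw [singleton_inter_of_notMem hi, prod_empty, one_smul, hsymm, hu, inv_smul_smul]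

theorem exists_monomial_mul_monomial (hg : IsCliffordFamily a g) (S T : Finset ι) :
    ∃ u : ℤˣ, cliffordMonomial g S * cliffordMonomial g T =
      u • (∏ i ∈ S ∩ T, a i) • cliffordMonomial g (S ∆ T) := by
  induction S using Finset.induction_on with
  | empty => exact ⟨1, by simp [show (∅ : Finset ι) ∆ T = T from bot_symmDiff T]⟩
  | insert i S hi ih =>
    obtain ⟨u₁, h₁⟩ := hg.exists_monomial_insert hi
    obtain ⟨u₂, h₂⟩ := ih
    obtain ⟨u₃, h₃⟩ := hg.exists_generator_mul_monomial i (S ∆ T)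
    have hsymm : {i} ∆ (S ∆ T) = insert i S ∆ T := by grind [mem_symmDiff]
    have hprod : (∏ j ∈ S ∩ T, a j) * ∏ j ∈ {i} ∩ S ∆ T, a j = ∏ j ∈ insert i S ∩ T, a j := by
      rw [← prod_union (disjoint_left.2 (by grind [mem_symmDiff]))]
      exact prod_congr (by grind [mem_symmDiff]) fun _ _ ↦ rfl
    refine ⟨u₁ * u₂ * u₃, ?_⟩
    rw [h₁, smul_mul_assoc, mul_assoc, h₂, mul_smul_comm, mul_smul_comm, h₃, hsymm, ← hprod,
      smul_comm _ u₃, ← mul_smul, ← mul_smul, ← mul_smul]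

theorem generator_mul_monomial (hg : IsCliffordFamily a g) (i : ι) (T : Finset ι) :
    g i * cliffordMonomial g T =
      (-1) ^ (#T + #({i} ∩ T)) * (cliffordMonomial g T * g i) := by
  induction T using Finset.induction_on with
  | empty => simp
  | insert j T hj ih =>
    have hgen : g i * g j = (-1) ^ (1 + #(({i} : Finset ι) ∩ {j})) * (g j * g i) := by
      obtain rfl | hij := eq_or_ne i j
      · simp [pow_succ]
      · simp [hij, hg.anticomm hij]
    have hcard : #(insert j T) + #({i} ∩ insert j T) =
        1 + #(({i} : Finset ι) ∩ {j}) + (#T + #({i} ∩ T)) := by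
      rw [card_insert_of_notMem hj, insert_eq, inter_union_distrib_left,
        card_union_of_disjoint (disjoint_left.2 (by grind))]
      ring
    obtain ⟨u, hu⟩ := hg.exists_monomial_insert hj
    rw [hu, mul_smul_comm, mul_mul_eq_neg_one_pow_mul hgen ih, hcard, smul_mul_assoc,
      mul_smul_comm]

theorem monomial_mul_monomial (hg : IsCliffordFamily a g) (S T : Finset ι) :
    cliffordMonomial g S * cliffordMonomial g T =
      (-1) ^ (#S * #T + #(S ∩ T)) * (cliffordMonomial g T * cliffordMonomial g S) := by
  rw [eq_comm, neg_one_pow_mul_eq_iff]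
  induction S using Finset.induction_on with
  | empty => simp
  | insert i S hi ih =>
    have hgen := neg_one_pow_mul_eq_iff.1 (hg.generator_mul_monomial i T).symm
    have hcard : #(insert i S) * #T + #(insert i S ∩ T) =
        #T + #({i} ∩ T) + (#S * #T + #(S ∩ T)) := by
      rw [card_insert_of_notMem hi, insert_eq, union_inter_distrib_right,
        card_union_of_disjoint (disjoint_left.2 (by grind))]
      ring
    obtain ⟨u, hu⟩ := hg.exists_monomial_insert hi
    rw [hu, mul_smul_comm, mul_mul_eq_neg_one_pow_mul hgen ih, hcard, smul_mul_assoc,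
      mul_smul_comm]

end IsCliffordFamily

end Monomials

section EvenBasis

open Finset Module
open scoped symmDiff

variable {ι k V : Type*} [AddCommGroup V]

section CommRing

variable [CommRing k] [Module k V] {q : QuadraticForm k V}

theorem isCliffordFamily_ι {v : ι → V} (hv : Pairwise fun i j ↦ q.IsOrtho (v i) (v j)) :
    IsCliffordFamily (fun i ↦ q (v i)) (fun i ↦ CliffordAlgebra.ι q (v i)) where
  mul_self i := CliffordAlgebra.ι_sq_scalar q (v i)
  anticomm _ _ hij := CliffordAlgebra.ι_mul_ι_comm_of_isOrtho (hv hij)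

variable (q) in
theorem cliffordMonomial_ι_mem_evenOdd (v : ι → V) (S : Finset ι) :
    cliffordMonomial (fun i ↦ CliffordAlgebra.ι q (v i)) S ∈ CliffordAlgebra.evenOdd q #S := by
  simpa [cliffordMonomial] using SetLike.list_prod_map_mem_graded S.toList (fun _ ↦ (1 : ZMod 2))
    (fun i ↦ CliffordAlgebra.ι q (v i)) fun i _ ↦ CliffordAlgebra.ι_mem_evenOdd_one q (v i)

theorem span_cliffordMonomial_eq_top (v : Basis ι k V)
    (hv : Pairwise fun i j ↦ q.IsOrtho (v i) (v j)) :
    Submodule.span k (Set.range (cliffordMonomial fun i ↦ CliffordAlgebra.ι q (v i))) = ⊤ := by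
  classical
  set E := Submodule.span k (Set.range (cliffordMonomial fun i ↦ CliffordAlgebra.ι q (v i)))
  have hmem (S : Finset ι) : cliffordMonomial (fun i ↦ CliffordAlgebra.ι q (v i)) S ∈ E :=
    Submodule.subset_span (Set.mem_range_self S)
  have hbasis (i : ι) : E ≤ E.comap (LinearMap.mulLeft k (CliffordAlgebra.ι q (v i))) := by
    rw [Submodule.span_le]
    rintro _ ⟨S, rfl⟩
    obtain ⟨u, hu⟩ := (isCliffordFamily_ι hv).exists_generator_mul_monomial i S
    change CliffordAlgebra.ι q (v i) * _ ∈ E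
    rw [hu, Units.smul_def]
    exact zsmul_mem (E.smul_mem _ (hmem _)) _
  have hvector (x : CliffordAlgebra q) (hx : x ∈ E) (w : V) : CliffordAlgebra.ι q w * x ∈ E := by
    suffices ⊤ ≤ E.comap (LinearMap.mulRight k x ∘ₗ CliffordAlgebra.ι q) from
      this (Submodule.mem_top (x := w))
    rw [← v.span_eq, Submodule.span_le]
    rintro _ ⟨i, rfl⟩
    exact hbasis i hx
  refine Submodule.eq_top_iff'.2 fun x ↦ ?_
  induction x using CliffordAlgebra.left_induction with
  | algebraMap r =>
    rw [Algebra.algebraMap_eq_smul_one]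
    exact E.smul_mem r (by simpa using hmem ∅)
  | add x y hx hy => exact E.add_mem hx hy
  | ι_mul x w hx => exact hvector x hx w

theorem span_even_cliffordMonomial (v : Basis ι k V)
    (hv : Pairwise fun i j ↦ q.IsOrtho (v i) (v j)) :
    Submodule.span k ((cliffordMonomial fun i ↦ CliffordAlgebra.ι q (v i)) '' {S | Even #S}) =
      CliffordAlgebra.evenOdd q 0 := by
  set e := cliffordMonomial fun i ↦ CliffordAlgebra.ι q (v i)
  have heven : Submodule.span k (e '' {S | Even #S}) ≤ CliffordAlgebra.evenOdd q 0 := by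
    rw [Submodule.span_le]
    rintro _ ⟨S, hS, rfl⟩
    rw [← ZMod.natCast_eq_zero_iff_even.2 hS]
    exact cliffordMonomial_ι_mem_evenOdd q v S
  have hodd : Submodule.span k (e '' {S | Even #S}ᶜ) ≤ CliffordAlgebra.evenOdd q 1 := by
    rw [Submodule.span_le]
    rintro _ ⟨S, hS, rfl⟩
    rw [← ZMod.natCast_eq_one_iff_odd.2 (Nat.not_even_iff_odd.1 hS)]
    exact cliffordMonomial_ι_mem_evenOdd q v S
  have hcompl := CliffordAlgebra.evenOdd_isCompl q
  refine eq_of_le_of_inf_le_of_sup_le (z := Submodule.span k (e '' {S | Even #S}ᶜ)) heven ?_ ?_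
  · exact ((inf_le_inf_left _ hodd).trans hcompl.inf_eq_bot.le).trans bot_le
  · rw [← Submodule.span_union, ← Set.image_union, Set.union_compl_self, Set.image_univ,
      span_cliffordMonomial_eq_top v hv]
    exact le_top

end CommRing

section Field

variable [Finite ι] [Field k] [Invertible (2 : k)] [Module k V] {q : QuadraticForm k V}
  (v : Basis ι k V) (hv : Pairwise fun i j ↦ q.IsOrtho (v i) (v j))

include hv in
theorem linearIndependent_cliffordMonomial :
    LinearIndependent k (cliffordMonomial fun i ↦ CliffordAlgebra.ι q (v i)) := by
  classical
  have := Fintype.ofFinite ι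
  let := LinearOrder.lift' _ (Fintype.equivFin ι).injective
  refine linearIndependent_of_top_le_span_of_card_eq_finrank
    (span_cliffordMonomial_eq_top v hv).ge ?_
  rw [(CliffordAlgebra.equivExterior q).finrank_eq, finrank_eq_card_basis v.ExteriorAlgebra]

/-- The basis of the even Clifford algebra formed by the monomials of even length in an orthogonal
basis of the quadratic space. -/
noncomputable def evenCliffordBasis :
    Basis {S : Finset ι // Even #S} k (CliffordAlgebra.even q) :=
  Basis.mk (v := fun S ↦ ⟨cliffordMonomial (fun i ↦ CliffordAlgebra.ι q (v i)) S, by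
      simpa [ZMod.natCast_eq_zero_iff_even.2 S.2] using! cliffordMonomial_ι_mem_evenOdd q v S⟩)
    (((linearIndependent_cliffordMonomial v hv).comp _ Subtype.val_injective).of_comp
      (CliffordAlgebra.even q).val.toLinearMap)
    (by
      refine (Submodule.map_le_map_iff_of_injective
        (f := (CliffordAlgebra.even q).val.toLinearMap) Subtype.val_injective _ _).1 ?_
      rw [Submodule.map_span, ← Set.range_comp]
      rintro _ ⟨x, -, rfl⟩
      have hx := (span_even_cliffordMonomial v hv).ge x.2
      rwa [Set.image_eq_range] at hx)

@[simp]
theorem coe_evenCliffordBasis (S : {S : Finset ι // Even #S}) :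
    (evenCliffordBasis v hv S : CliffordAlgebra q) =
      cliffordMonomial (fun i ↦ CliffordAlgebra.ι q (v i)) S := by
  simp [evenCliffordBasis]

theorem evenCliffordBasis_empty : evenCliffordBasis v hv ⟨∅, by simp⟩ = 1 := by
  ext
  simp

theorem evenCliffordBasis_mul [DecidableEq ι] {S T U : {S : Finset ι // Even #S}}
    (h : S.1 ∆ T = U) :
    ∃ u : ℤˣ, evenCliffordBasis v hv S * evenCliffordBasis v hv T =
      (u • ∏ i ∈ S.1 ∩ T, q (v i)) • evenCliffordBasis v hv U := by
  obtain ⟨u, hu⟩ := (isCliffordFamily_ι hv).exists_monomial_mul_monomial S.1 T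
  rw [h] at hu
  refine ⟨u, ?_⟩
  rw [smul_assoc]
  ext
  simpa [Units.smul_def] using hu

theorem evenCliffordBasis_comm [DecidableEq ι] (S T : {S : Finset ι // Even #S}) :
    evenCliffordBasis v hv S * evenCliffordBasis v hv T =
      (-1) ^ #(S.1 ∩ T) * (evenCliffordBasis v hv T * evenCliffordBasis v hv S) := by
  ext
  simpa [pow_add, (S.2.mul_right _).neg_one_pow] using
    (isCliffordFamily_ι hv).monomial_mul_monomial S.1 T

theorem isUnit_evenCliffordBasis {S : {S : Finset ι // Even #S}} (hS : ∀ i ∈ S.1, q (v i) ≠ 0) :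
    IsUnit (evenCliffordBasis v hv S) := by
  classical
  obtain ⟨u, hu⟩ := evenCliffordBasis_mul v hv (S := S) (T := S) (U := ⟨∅, by simp⟩)
    (symmDiff_self S.1)
  have hprod : u • ∏ i ∈ S.1 ∩ S, q (v i) ≠ 0 := by
    simpa [smul_eq_zero_iff_eq, prod_eq_zero_iff] using hS
  rw [← isUnit_mul_self_iff, hu, evenCliffordBasis_empty, ← Algebra.algebraMap_eq_smul_one]
  exact hprod.isUnit.map (algebraMap k _)

end Field

end EvenBasis

section Center

open Finset Module
open scoped symmDiff

theorem mem_center_iff_forall_basis {J k A : Type*} [CommRing k] [Ring A] [Algebra k A]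
    (b : Basis J k A) {x : A} : x ∈ Subalgebra.center k A ↔ ∀ t, b t * x = x * b t := by
  rw [Subalgebra.mem_center_iff]
  refine ⟨fun h t ↦ h (b t), fun h y ↦ ?_⟩
  suffices LinearMap.mulRight k x = LinearMap.mulLeft k x from LinearMap.congr_fun this y
  exact b.ext h

theorem center_eq_span_of_commutator_basis {J k A : Type*} [CommRing k] [NoZeroDivisors k] [Ring A]
    [Algebra k A] (b : Basis J k A)
    (h : ∀ t, ∃ σ : J → J, σ.Injective ∧ ∀ s, ∃ c : k, b s * b t - b t * b s = c • b (σ s)) :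
    Subalgebra.toSubmodule (Subalgebra.center k A) =
      Submodule.span k (b '' {s | b s ∈ Subalgebra.center k A}) := by
  refine le_antisymm (fun z hz ↦ ?_) (Submodule.span_le.2 (Set.image_subset_iff.2 fun s hs ↦ hs))
  have hcomm (s : J) (hs : b.repr z s ≠ 0) (t : J) : b s * b t = b t * b s := by
    obtain ⟨σ, hσ, hc⟩ := h t
    choose c hc using hc
    have hz' : ∑ s ∈ (b.repr z).support, b.repr z s • b s = z := b.linearCombination_repr z
    have hsum : ∑ s ∈ (b.repr z).support, (b.repr z s * c s) • b (σ s) = 0 := calc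
      _ = z * b t - b t * z := by
        conv_rhs => rw [← hz', sum_mul, mul_sum, ← sum_sub_distrib]
        refine sum_congr rfl fun s _ ↦ ?_
        rw [mul_smul, ← hc, smul_sub, smul_mul_assoc, mul_smul_comm]
      _ = 0 := sub_eq_zero.2 ((Subalgebra.mem_center_iff (R := k)).1 hz (b t)).symm
    have hcoeff := linearIndependent_iff'.1 (b.linearIndependent.comp σ hσ) _ _ hsum s
      (Finsupp.mem_support_iff.2 hs)
    rw [← sub_eq_zero, hc, (mul_eq_zero.1 hcoeff).resolve_left hs, zero_smul]
  rw [b.mem_span_image]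
  exact fun s hs ↦ (mem_center_iff_forall_basis (k := k) b).2 fun t ↦
    (hcomm s (Finsupp.mem_support_iff.1 hs) t).symm

variable {ι k V : Type*} [Field k] [Invertible (2 : k)] [AddCommGroup V] [Module k V]
  {q : QuadraticForm k V} (v : Basis ι k V) (hv : Pairwise fun i j ↦ q.IsOrtho (v i) (v j))

theorem center_even_eq_span [Finite ι] :
    Subalgebra.toSubmodule (Subalgebra.center k (CliffordAlgebra.even q)) =
      Submodule.span k (evenCliffordBasis v hv ''
        {S | evenCliffordBasis v hv S ∈ Subalgebra.center k (CliffordAlgebra.even q)}) := by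
  classical
  refine center_eq_span_of_commutator_basis (evenCliffordBasis v hv) fun T ↦
    ⟨fun S ↦ ⟨S ∆ T, even_card_symmDiff S.2 T.2⟩, fun S S' h ↦ ?_, fun S ↦ ?_⟩
  · exact Subtype.ext (symmDiff_left_injective T.1 (congrArg Subtype.val h))
  · obtain ⟨u, hu⟩ := evenCliffordBasis_mul v hv (S := S) (T := T)
      (U := ⟨S ∆ T, even_card_symmDiff S.2 T.2⟩) rfl
    obtain h | h := neg_one_pow_eq_or (CliffordAlgebra.even q) #(T.1 ∩ S)
    · exact ⟨0, by rw [evenCliffordBasis_comm v hv T S, h]; simp⟩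
    · refine ⟨2 * u • ∏ i ∈ S.1 ∩ T, q (v i), ?_⟩
      rw [evenCliffordBasis_comm v hv T S, h, hu, mul_smul, two_smul, neg_one_mul, sub_neg_eq_add]

theorem finrank_center_even [Finite ι] :
    finrank k (Subalgebra.center k (CliffordAlgebra.even q)) =
      {S | evenCliffordBasis v hv S ∈ Subalgebra.center k (CliffordAlgebra.even q)}.ncard := by
  classical
  have := Fintype.ofFinite {S | evenCliffordBasis v hv S ∈
    Subalgebra.center k (CliffordAlgebra.even q)}
  have hli := (evenCliffordBasis v hv).linearIndependent.comp
    (fun S : {S | evenCliffordBasis v hv S ∈ Subalgebra.center k (CliffordAlgebra.even q)} ↦ S.1)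
    Subtype.val_injective
  rw [← Subalgebra.finrank_toSubmodule, center_even_eq_span v hv, Set.image_eq_range,
    ← Nat.card_coe_set_eq, Nat.card_eq_fintype_card]
  exact finrank_span_eq_card hli

theorem evenCliffordBasis_mul_comm_iff [Finite ι] [DecidableEq ι]
    (S T : {S : Finset ι // Even #S}) :
    evenCliffordBasis v hv S * evenCliffordBasis v hv T =
        evenCliffordBasis v hv T * evenCliffordBasis v hv S ↔
      ((∀ i ∈ S.1 ∩ T, q (v i) ≠ 0) → Even #(S.1 ∩ T)) := by
  obtain ⟨u, hu⟩ := evenCliffordBasis_mul v hv (S := T) (T := S)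
    (U := ⟨T ∆ S, even_card_symmDiff T.2 S.2⟩) rfl
  rw [evenCliffordBasis_comm v hv S T, hu, inter_comm T.1, ← prod_ne_zero_iff]
  by_cases h : Even #(S.1 ∩ T)
  · simp [h]
  · rw [(Nat.not_even_iff_odd.1 h).neg_one_pow, neg_one_mul, eq_comm, eq_neg_iff_add_eq_zero,
      ← two_smul k, smul_eq_zero_iff_right (Invertible.ne_zero 2),
      smul_eq_zero_iff_left ((evenCliffordBasis v hv).ne_zero _), smul_eq_zero_iff_eq]
    simp [h]

theorem evenCliffordBasis_mem_center_iff [Finite ι] (S : {S : Finset ι // Even #S}) :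
    evenCliffordBasis v hv S ∈ Subalgebra.center k (CliffordAlgebra.even q) ↔
      (∀ i, i ∈ S.1) ∨ ∀ i ∈ S.1, q (v i) = 0 := by
  classical
  simp only [mem_center_iff_forall_basis (evenCliffordBasis v hv), evenCliffordBasis_mul_comm_iff]
  refine ⟨fun h ↦ or_iff_not_imp_left.2 fun hS i hi ↦ ?_, ?_⟩
  · obtain ⟨j, hj⟩ := not_forall.1 hS
    have hij : i ≠ j := by rintro rfl; exact hj hi
    have hinter : {i, j} ∩ S.1 = {i} := by
      rw [insert_inter_of_mem hi, singleton_inter_of_notMem hj, insert_empty_eq]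
    simpa [hinter] using h ⟨{i, j}, by simp [card_pair hij]⟩
  · rintro (h | h) T hT
    · rw [inter_eq_left.2 fun i _ ↦ h i]
      exact T.2
    · have hempty : T.1 ∩ S = ∅ :=
        eq_empty_of_forall_notMem fun i hi ↦ hT i hi (h i (mem_inter.1 hi).2)
      simp [hempty]

theorem mk_empty_ne_mk_univ {ι : Type*} [Fintype ι] [Nonempty ι] (heven : Even (Fintype.card ι)) :
    (⟨∅, by simp⟩ : {S : Finset ι // Even #S}) ≠ ⟨univ, heven⟩ :=
  fun h ↦ univ_nonempty.ne_empty (congrArg Subtype.val h).symm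

variable [Fintype ι]

theorem pair_subset_setOf_evenCliffordBasis_mem_center (heven : Even (Fintype.card ι)) :
    {⟨∅, by simp⟩, ⟨univ, heven⟩} ⊆
      {S | evenCliffordBasis v hv S ∈ Subalgebra.center k (CliffordAlgebra.even q)} := by
  simp [Set.insert_subset_iff, evenCliffordBasis_mem_center_iff]

include hv in
theorem two_le_finrank_center_even [Nonempty ι] (heven : Even (Fintype.card ι)) :
    2 ≤ finrank k (Subalgebra.center k (CliffordAlgebra.even q)) := by
  rw [finrank_center_even v hv, ← Set.ncard_pair (mk_empty_ne_mk_univ heven)]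
  exact Set.ncard_le_ncard (pair_subset_setOf_evenCliffordBasis_mem_center v hv heven)

include hv in
theorem finrank_center_even_eq_two [Nonempty ι] (heven : Even (Fintype.card ι))
    (hZ : {i | q (v i) = 0}.Subsingleton) :
    finrank k (Subalgebra.center k (CliffordAlgebra.even q)) = 2 := by
  rw [finrank_center_even v hv, ← Set.ncard_pair (mk_empty_ne_mk_univ heven)]
  congr 1
  refine (pair_subset_setOf_evenCliffordBasis_mem_center v hv heven).antisymm' fun S hS ↦ ?_
  refine ((evenCliffordBasis_mem_center_iff v hv S).1 hS).symm.imp (fun h ↦ Subtype.ext ?_)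
    fun h ↦ Subtype.ext (eq_univ_iff_forall.2 h)
  have hcard : #S.1 ≤ 1 := card_le_one.2 fun i hi j hj ↦ hZ (h i hi) (h j hj)
  have := S.2
  exact card_eq_zero.1 (by grind)

include hv in
theorem finrank_center_even_eq_two_iff (heven : Even (Fintype.card ι))
    (hcard : 2 < Fintype.card ι) :
    finrank k (Subalgebra.center k (CliffordAlgebra.even q)) = 2 ↔
      {i | q (v i) = 0}.Subsingleton := by
  classical
  have : Nonempty ι := Fintype.card_pos_iff.1 (by lia)
  refine ⟨fun hX i hi j hj ↦ ?_, finrank_center_even_eq_two v hv heven⟩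
  by_contra hij
  rw [finrank_center_even v hv, ← Set.ncard_pair (mk_empty_ne_mk_univ heven)] at hX
  have hmem : (⟨{i, j}, by simp [card_pair hij]⟩ : {S : Finset ι // Even #S}) ∈
      {S | evenCliffordBasis v hv S ∈ Subalgebra.center k (CliffordAlgebra.even q)} :=
    (evenCliffordBasis_mem_center_iff v hv _).2 (.inr (by simpa using ⟨hi, hj⟩))
  rw [← Set.eq_of_subset_of_ncard_le
    (pair_subset_setOf_evenCliffordBasis_mem_center v hv heven) hX.le] at hmem
  have : #{i, j} = 0 ∨ #{i, j} = Fintype.card ι := by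
    simpa [Subtype.ext_iff, card_eq_iff_eq_univ] using hmem
  rw [card_pair hij] at this
  lia

end Center

section Radical

open Module

theorem ker_polarBilin_eq_span {ι k V : Type*} [Field k] [NeZero (2 : k)] [AddCommGroup V]
    [Module k V] {q : QuadraticForm k V} (v : Basis ι k V)
    (hv : Pairwise fun i j ↦ q.IsOrtho (v i) (v j)) :
    LinearMap.ker (QuadraticMap.polarBilin q) = Submodule.span k (v '' {i | q (v i) = 0}) := by
  have hpolar (w : V) (i : ι) :
      QuadraticMap.polarBilin q w (v i) = v.repr w i * (2 * q (v i)) := by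
    conv_lhs => rw [← v.linearCombination_repr w, Finsupp.linearCombination_apply, Finsupp.sum,
      map_sum, LinearMap.sum_apply]
    rw [Finset.sum_eq_single i]
    · simp [two_mul, QuadraticMap.polar_self]
    · intro j _ hji
      simp [(hv hji).polar_eq_zero]
    · simp +contextual
  ext w
  rw [v.mem_span_image, LinearMap.mem_ker]
  have hext : QuadraticMap.polarBilin q w = 0 ↔ ∀ i, QuadraticMap.polarBilin q w (v i) = 0 :=
    ⟨fun h i ↦ by simp [h], fun h ↦ v.ext h⟩
  simp [hext, hpolar, Set.subset_def, or_iff_not_imp_left, -QuadraticMap.polarBilin_apply_apply,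
    two_ne_zero]

theorem rank_ker_polarBilin_le_one_iff {ι k V : Type*} [Field k] [NeZero (2 : k)] [AddCommGroup V]
    [Module k V] {q : QuadraticForm k V} (v : Basis ι k V)
    (hv : Pairwise fun i j ↦ q.IsOrtho (v i) (v j)) :
    Module.rank k (LinearMap.ker (QuadraticMap.polarBilin q)) ≤ 1 ↔
      {i | q (v i) = 0}.Subsingleton := by
  have hli : LinearIndepOn k v {i | q (v i) = 0} := v.linearIndependent.linearIndepOn _
  rw [ker_polarBilin_eq_span v hv, rank_span_set hli.id_image,
    Cardinal.mk_le_one_iff_set_subsingleton, v.injective.subsingleton_image_iff]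

end Radical

section Azumaya

open Module

theorem mulLeftRightMap_tmul {Z A : Type*} [CommRing Z] [Ring A] [Algebra Z A] (a x : A)
    (b : Aᵐᵒᵖ) : mulLeftRightMap Z A (a ⊗ₜ[Z] b) x = a * (x * b.unop) := by
  simp [mulLeftRightMap]

theorem mulLeftRightMap_surjective_of_conj_characters {Z A J : Type*} [CommRing Z] [Ring A]
    [Algebra Z A] [Fintype J] [DecidableEq J] (e : J → Aˣ)
    (hspan : Submodule.span Z (Set.range fun U ↦ (e U : A)) = ⊤) {ε : J → J → Z}
    (hconj : ∀ W U, (e W * e U : A) = ε W U • (e U * e W : A)) {N : Z} (hN : IsUnit N)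
    (horth : ∀ U T, ∑ W, ε W U * ε W T = if U = T then N else 0) :
    Function.Surjective (mulLeftRightMap Z A) := by
  intro f
  obtain ⟨N, rfl⟩ := hN
  have hterm (T U W : J) :
      f (e T) * ↑(e T)⁻¹ * (((↑N⁻¹ : Z) * ε W T) • (e W : A)) * (e U * ↑(e W)⁻¹) =
        (↑N⁻¹ * (ε W U * ε W T)) • (f (e T) * ↑(e T)⁻¹ * e U) := by
    rw [mul_assoc (f (e T) * _), smul_mul_assoc, ← mul_assoc (e W : A), hconj, smul_mul_assoc,
      Units.mul_inv_cancel_right, smul_smul, mul_smul_comm]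
    congr 1
    ring
  -- Orthogonality makes `π T = N⁻¹ ∑ W, ε W T • (e W * · * (e W)⁻¹)` the projection onto
  -- `Z • e T`, and `f` equals `∑ T, f (e T) * (e T)⁻¹ * π T`.
  refine ⟨∑ T, ∑ W, (f (e T) * ↑(e T)⁻¹ * (((↑N⁻¹ : Z) * ε W T) • (e W : A))) ⊗ₜ[Z]
    MulOpposite.op (↑(e W)⁻¹ : A), LinearMap.ext_on_range hspan fun U ↦ ?_⟩
  simp only [map_sum, LinearMap.sum_apply, mulLeftRightMap_tmul, MulOpposite.unop_op, hterm,
    ← Finset.sum_smul, ← Finset.mul_sum, horth]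
  simp

theorem mulLeftRightMap_injective_of_surjective {Z A : Type*} [CommRing Z] [Ring A] [Algebra Z A]
    [Module.Finite Z A] [Module.Free Z A] (h : Function.Surjective (mulLeftRightMap Z A)) :
    Function.Injective (mulLeftRightMap Z A) := by
  let b := Module.Free.chooseBasis Z A
  let φ : A ⊗[Z] Aᵐᵒᵖ ≃ₗ[Z] Module.End Z A :=
    (b.tensorProduct (b.map (MulOpposite.opLinearEquiv Z))).equiv b.end (Equiv.refl _)
  have hinj := OrzechProperty.injective_of_surjective_endomorphism
    (φ.symm.toLinearMap ∘ₗ mulLeftRightMap Z A) (φ.symm.surjective.comp h)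
  exact Function.Injective.of_comp (f := φ.symm) hinj

theorem isAzumayaOfDegree_of_basis {Z A J : Type*} [CommRing Z] [Ring A] [Nontrivial A]
    [Algebra Z A] [Fintype J] (b : Basis J Z A) {d : ℕ} (hd : Fintype.card J = d ^ 2)
    (h : Function.Surjective (mulLeftRightMap Z A)) : IsAzumayaOfDegree Z A d := by
  have := Module.nontrivial Z A
  have := Module.Finite.of_basis b
  have := Module.Free.of_basis b
  exact ⟨inferInstance, inferInstance, inferInstance,
    ⟨mulLeftRightMap_injective_of_surjective h, h⟩, by rw [rank_eq_card_basis b, hd]⟩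

theorem linearIndependent_of_span_eq_top_of_finrank_eq {k Z M J : Type*} [Field k] [Ring Z]
    [Algebra k Z] [AddCommGroup M] [Module k M] [Module Z M] [IsScalarTower k Z M]
    [FiniteDimensional k Z] [FiniteDimensional k M] [Fintype J] {e : J → M}
    (hspan : Submodule.span Z (Set.range e) = ⊤)
    (hfin : finrank k M = Fintype.card J * finrank k Z) : LinearIndependent Z e := by
  rw [linearIndependent_iff_injective_fintypeLinearCombination]
  have hsurj : Function.Surjective ((Fintype.linearCombination Z e).restrictScalars k) := by
    rwa [LinearMap.coe_restrictScalars, ← LinearMap.range_eq_top, Fintype.range_linearCombination]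
  exact (LinearMap.injective_iff_surjective_of_finrank_eq_finrank
    (by simp [hfin, finrank_pi_fintype])).2 hsurj

theorem mul_finrank_le_finrank_of_rank_eq {k Z M : Type*} [Field k] [Ring Z] [Nontrivial Z]
    [Algebra k Z] [AddCommGroup M] [Module k M] [Module Z M] [IsScalarTower k Z M]
    [FiniteDimensional k Z] [FiniteDimensional k M] {n : ℕ} (h : Module.rank Z M = n) :
    n * finrank k Z ≤ finrank k M := by
  obtain ⟨f, hf⟩ := Module.le_rank_iff_exists_linearMap.1 h.ge
  simpa [finrank_pi_fintype] using
    LinearMap.finrank_le_finrank_of_injective (f := f.restrictScalars k) hf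

instance isScalarTower_center (k A : Type*) [CommRing k] [Ring A] [Algebra k A] :
    IsScalarTower k (Subalgebra.center k A) A :=
  IsScalarTower.of_algebraMap_eq fun _ ↦ rfl

end Azumaya

section EvenClifford

open Finset Module
open scoped symmDiff

variable {ι k V : Type*} [Fintype ι] [Field k] [Invertible (2 : k)] [AddCommGroup V]
  [Module k V] {q : QuadraticForm k V} (v : Basis ι k V)
  (hv : Pairwise fun i j ↦ q.IsOrtho (v i) (v j))

theorem span_center_evenCliffordBasis [DecidableEq ι] (heven : Even (Fintype.card ι)) {i₀ : ι}
    (hi₀ : ∀ i ≠ i₀, q (v i) ≠ 0) :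
    Submodule.span (Subalgebra.center k (CliffordAlgebra.even q))
      (Set.range fun W : evenSubsets {i₀}ᶜ ↦
        evenCliffordBasis v hv ⟨W, (mem_evenSubsets.1 W.2).2⟩) = ⊤ := by
  set E := Submodule.span (Subalgebra.center k (CliffordAlgebra.even q))
    (Set.range fun W : evenSubsets {i₀}ᶜ ↦ evenCliffordBasis v hv ⟨W, (mem_evenSubsets.1 W.2).2⟩)
  have hmem (T : {S : Finset ι // Even #S}) (hT : i₀ ∉ T.1) : evenCliffordBasis v hv T ∈ E :=
    Submodule.subset_span ⟨⟨T, mem_evenSubsets.2 ⟨by simpa, T.2⟩⟩, rfl⟩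
  suffices ⊤ ≤ E.restrictScalars k from top_le_iff.1 this
  rw [← (evenCliffordBasis v hv).span_eq, Submodule.span_le]
  rintro _ ⟨S, rfl⟩
  by_cases hS : i₀ ∈ S.1
  -- Up to a nonzero scalar, `e_S` is the central element `e_univ` times `e_{Sᶜ}`.
  · let z : Subalgebra.center k (CliffordAlgebra.even q) :=
      ⟨evenCliffordBasis v hv ⟨univ, heven⟩,
        (evenCliffordBasis_mem_center_iff v hv _).2 (.inl mem_univ)⟩
    let T : {S : Finset ι // Even #S} := ⟨S.1ᶜ, by
      have := card_add_card_compl S.1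
      have := S.2
      grind⟩
    have hT : i₀ ∉ T.1 := by simpa [T] using hS
    obtain ⟨u, hu⟩ := evenCliffordBasis_mul v hv (S := ⟨univ, heven⟩) (T := T) (U := S)
      ((top_symmDiff _).trans (compl_compl _))
    have hprod : u • ∏ i ∈ univ ∩ T.1, q (v i) ≠ 0 := by
      simp only [ne_eq, smul_eq_zero_iff_eq, prod_eq_zero_iff, univ_inter, not_exists, not_and]
      exact fun i hi ↦ hi₀ i fun h ↦ hT (h ▸ hi)
    have hzT : evenCliffordBasis v hv ⟨univ, heven⟩ * evenCliffordBasis v hv T ∈ E :=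
      E.smul_mem z (hmem T hT)
    rw [← inv_smul_smul₀ hprod (evenCliffordBasis v hv S), ← hu]
    exact (E.restrictScalars k).smul_mem _ hzT
  · exact hmem S hS

include hv in
theorem mulLeftRightMap_center_even_surjective (heven : Even (Fintype.card ι)) {i₀ : ι}
    (hi₀ : ∀ i ≠ i₀, q (v i) ≠ 0) :
    Function.Surjective (mulLeftRightMap (Subalgebra.center k (CliffordAlgebra.even q))
      (CliffordAlgebra.even q)) := by
  classical
  set Z := Subalgebra.center k (CliffordAlgebra.even q)
  have hunit (W : evenSubsets {i₀}ᶜ) :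
      IsUnit (evenCliffordBasis v hv ⟨W, (mem_evenSubsets.1 W.2).2⟩) :=
    isUnit_evenCliffordBasis v hv fun i hi ↦ hi₀ i <| by
      simpa using (mem_evenSubsets.1 W.2).1 hi
  have hodd : Odd #({i₀}ᶜ : Finset ι) := by
    have := card_add_card_compl {i₀}
    rw [card_singleton] at this
    grind
  have htwo : IsUnit (2 : Z) := by
    have := (isUnit_of_invertible (2 : k)).map (algebraMap k Z)
    rwa [map_ofNat] at this
  obtain ⟨n, hn⟩ := hodd
  refine mulLeftRightMap_surjective_of_conj_characters (fun W ↦ (hunit W).unit)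
    (span_center_evenCliffordBasis v hv heven hi₀)
    (ε := fun W U ↦ (-1) ^ #(W.1 ∩ U)) (fun W U ↦ ?_)
    (N := (#(evenSubsets ({i₀}ᶜ : Finset ι)) : Z)) ?_ fun U T ↦ ?_
  · rw [Algebra.smul_def, map_pow, map_neg, map_one]
    exact evenCliffordBasis_comm v hv _ _
  · rw [card_evenSubsets hn]
    exact_mod_cast htwo.pow _
  · rw [sum_coe_sort (evenSubsets {i₀}ᶜ) fun W ↦ (-1 : Z) ^ #(W ∩ U) * (-1) ^ #(W ∩ T),
      sum_evenSubsets_neg_one_pow_mul ⟨n, hn⟩ U.2 T.2]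
    simp only [Subtype.ext_iff]

include hv in
theorem finrank_even {n : ℕ} (hcard : Fintype.card ι = n + 1) :
    finrank k (CliffordAlgebra.even q) = 2 ^ n := by
  classical
  rw [finrank_eq_card_basis (evenCliffordBasis v hv), Fintype.card_subtype,
    ← card_evenSubsets (s := (univ : Finset ι)) hcard, evenSubsets, powerset_univ]

include hv in
theorem finrank_center_even_eq_two_of_isAzumayaOfDegree {m : ℕ} (hm : 0 < m)
    (hcard : Fintype.card ι = 2 * m)
    (h : IsAzumayaOfDegree (Subalgebra.center k (CliffordAlgebra.even q))
      (CliffordAlgebra.even q) (2 ^ (m - 1))) :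
    finrank k (Subalgebra.center k (CliffordAlgebra.even q)) = 2 := by
  have := Module.Finite.of_basis (evenCliffordBasis v hv)
  have : Nonempty ι := Fintype.card_pos_iff.1 (by lia)
  obtain ⟨-, -, -, -, hrank⟩ := h
  have hle := mul_finrank_le_finrank_of_rank_eq (k := k)
    (Z := Subalgebra.center k (CliffordAlgebra.even q)) (M := CliffordAlgebra.even q) hrank
  obtain ⟨n, rfl⟩ := Nat.exists_eq_add_of_lt hm
  rw [finrank_even v hv (n := 2 * n + 1) (by lia)] at hle
  refine le_antisymm ?_ (two_le_finrank_center_even v hv (by grind))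
  refine Nat.le_of_mul_le_mul_left (hle.trans_eq ?_) (by positivity)
  rw [zero_add, Nat.add_sub_cancel, ← pow_mul, pow_succ, mul_comm 2 n]

include hv in
theorem isAzumayaOfDegree_center_even {m : ℕ} (hm : 0 < m) (hcard : Fintype.card ι = 2 * m)
    (hZ : {i | q (v i) = 0}.Subsingleton) :
    IsAzumayaOfDegree (Subalgebra.center k (CliffordAlgebra.even q)) (CliffordAlgebra.even q)
      (2 ^ (m - 1)) := by
  classical
  have := Module.Finite.of_basis (evenCliffordBasis v hv)
  have : Nonempty ι := Fintype.card_pos_iff.1 (by lia)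
  have heven : Even (Fintype.card ι) := ⟨m, by lia⟩
  obtain ⟨i₀, hi₀⟩ : ∃ i₀, ∀ i ≠ i₀, q (v i) ≠ 0 := by
    obtain h | ⟨i₀, h⟩ := hZ.eq_empty_or_singleton
    · exact ⟨Classical.arbitrary ι, fun i _ hi ↦ (h ▸ hi : i ∈ (∅ : Set ι))⟩
    · exact ⟨i₀, fun i hne hi ↦ hne (h ▸ hi : i ∈ ({i₀} : Set ι))⟩
  have hcompl : #({i₀}ᶜ : Finset ι) = 2 * (m - 1) + 1 := by
    rw [card_compl, card_singleton]
    lia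
  have hJ : Fintype.card (evenSubsets ({i₀}ᶜ : Finset ι)) = (2 ^ (m - 1)) ^ 2 := by
    rw [Fintype.card_coe, card_evenSubsets hcompl, mul_comm, pow_mul]
  have hspan := span_center_evenCliffordBasis v hv heven hi₀
  have hli := linearIndependent_of_span_eq_top_of_finrank_eq (k := k) hspan <| by
    rw [finrank_even v hv (n := 2 * (m - 1) + 1) (by lia), hJ,
      finrank_center_even_eq_two v hv heven hZ, ← pow_mul, ← pow_succ, mul_comm]
  exact isAzumayaOfDegree_of_basis (Basis.mk hli hspan.ge) hJ
    (mulLeftRightMap_center_even_surjective v hv heven hi₀)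

end EvenClifford

set_option maxHeartbeats 1000000 in
theorem simple_degeneration_iff_center_rank_two_iff_azumaya
    {k V : Type*} [Field k] [Invertible (2 : k)]
    [AddCommGroup V] [Module k V] [FiniteDimensional k V]
    (m : ℕ) (hm : 1 < m) (q : QuadraticForm k V)
    (hrank : Module.finrank k V = 2 * m) :
    (Module.rank k ↥(LinearMap.ker (QuadraticMap.polarBilin q)) ≤ 1 ↔
      Module.rank k
        ↥(Subalgebra.toSubmodule (Subalgebra.center k ↥(CliffordAlgebra.even q))) = 2) ∧
    (Module.rank k
        ↥(Subalgebra.toSubmodule (Subalgebra.center k ↥(CliffordAlgebra.even q))) = 2 ↔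
      IsAzumayaOfDegree (Subalgebra.center k ↥(CliffordAlgebra.even q))
        ↥(CliffordAlgebra.even q) (2 ^ (m - 1))) := by
  obtain ⟨v, hv⟩ := LinearMap.BilinForm.exists_orthogonal_basis
    (B := QuadraticMap.associated q) ⟨QuadraticMap.associated_isSymm k q⟩
  have hortho : Pairwise fun i j ↦ q.IsOrtho (v i) (v j) :=
    fun i j hij ↦ QuadraticMap.associated_isOrtho.1 (hv hij)
  have hcard : Fintype.card (Fin (Module.finrank k V)) = 2 * m := by rw [Fintype.card_fin, hrank]
  rw [Subalgebra.rank_toSubmodule, Module.rank_eq_ofNat_iff_finrank_eq_ofNat,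
    rank_ker_polarBilin_le_one_iff v hortho]
  have hcenter := finrank_center_even_eq_two_iff v hortho ⟨m, by lia⟩ (by lia)
  exact ⟨hcenter.symm, fun h ↦ isAzumayaOfDegree_center_even v hortho (by lia) hcard (hcenter.1 h),
    finrank_center_even_eq_two_of_isAzumayaOfDegree v hortho (by lia) hcard⟩
end

section
/- Let R be a semilocal principal ideal domain with 2 invertible, K its fraction field, R̂ the completion of R at its Jacobson radical and K̂ the total ring of fractions of R̂. Let (V,q) be a quadratic form over R that is nondegenerate over K, and h the hyperbolic plane. Then every element φ ∈ O(q ⊥ h)(K̂) factors as φ = φ₁φ₂ with φ₁ ∈ O(q ⊥ h)(K) and φ₂ ∈ O(q ⊥ h)(R̂). -/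
/-!
STATEMENT 12: Let R be a semilocal principal ideal domain with 2 invertible, K its
fraction field, R̂ the completion of R at its Jacobson radical and K̂ the total ring of
fractions of R̂. Let (V,q) be a quadratic form over R that is nondegenerate over K, and
h the hyperbolic plane. Then every element φ ∈ O(q ⊥ h)(K̂) factors as φ = φ₁φ₂ with
φ₁ ∈ O(q ⊥ h)(K) and φ₂ ∈ O(q ⊥ h)(R̂).

Since 2 is invertible, the form q ⊥ h is encoded by its Gram matrix
G' = G ⊕ (½)·[[0,1],[1,0]] (G the Gram matrix of q on a free module, nondegenerate over K
meaning det G ≠ 0), and orthogonal-group elements over an R-algebra A are matrices M with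
Mᵀ G' M = G'.  The canonical map K → K̂ is the localization lift along R → K̂, for which
nonzero elements of R must be units in K̂ (they are nonzerodivisors in R̂).
-/

open Matrix

noncomputable section

/-- The completion `R̂` of `R` at its Jacobson radical. -/
abbrev jacobsonCompletion (R : Type*) [CommRing R] : Type _ :=
  AdicCompletion ((⊥ : Ideal R).jacobson) R

/-- The total ring of fractions `K̂` of the completion `R̂`. -/
abbrev jacobsonCompletionFractions (R : Type*) [CommRing R] : Type _ :=
  FractionRing (jacobsonCompletion R)

instance (R : Type*) [CommRing R] : Algebra R (jacobsonCompletionFractions R) :=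
  ((algebraMap (jacobsonCompletion R) (jacobsonCompletionFractions R)).comp
    (algebraMap R (jacobsonCompletion R))).toAlgebra

/-- `M` is an orthogonal matrix for the Gram matrix `H`. -/
def IsOrthogonalFor {A ι : Type*} [CommRing A] [Fintype ι] (H M : Matrix ι ι A) : Prop :=
  Mᵀ * H * M = H

end

/-!
Write `H` for the Gram matrix. An orthogonal `M` with `1 + M` invertible is `B⁻¹ Bᵀ` for
`B = H (1 + M)⁻¹`, which satisfies `B + Bᵀ = H`. Conversely any invertible `B₀` with
`B₀ + B₀ᵀ = H` gives an orthogonal `B₀⁻¹ B₀ᵀ`. Since the equation `B + Bᵀ = H` is affine, `B` can be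
approximated by a solution `B₀` over `K`; when the approximation is close, `B₀ = V B` with
`V ≡ 1` modulo the Jacobson radical, and then `(B₀⁻¹ B₀ᵀ)⁻¹ M` has entries in `R̂`.

To reach `1 + M` invertible, multiply a general `M` by an involution over `R̂` that is diagonal with
entries `±1` on each component of `R̂` in an orthogonal `R`-basis. The signs are chosen one diagonal
entry at a time by Schur complements: `K̂` is von Neumann regular, and `x = e w - 1` with `e`
idempotent and `w` a unit becomes invertible after adding the sign `2 e - 1`.
-/

section OrthogonalBasis

open Module
open LinearMap (BilinForm)

variable {R M : Type*} [CommRing R] [AddCommGroup M] [Module R M] {B : BilinForm R M}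

theorem apply_mem_span_range_apply_self [Invertible (2 : R)] (hB : B.IsSymm) (x y : M) :
    B x y ∈ Ideal.span (Set.range fun z ↦ B z z) := by
  have self_mem (z : M) : B z z ∈ Ideal.span (Set.range fun z ↦ B z z) :=
    Ideal.subset_span ⟨z, rfl⟩
  have polarization : B x y = ⅟2 * (B (x + y) (x + y) - B x x - B y y) := by
    rw [eq_comm, invOf_mul_eq_iff_eq_mul_left]
    simp only [map_add, LinearMap.add_apply, hB.eq y x]
    ring
  rw [polarization]
  exact Ideal.mul_mem_left _ _ (sub_mem (sub_mem (self_mem _) (self_mem x)) (self_mem y))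

theorem apply_mem_mul_of_mem_smul_top {I m : Ideal R} (hI : ∀ x y, B x y ∈ I) {x : M}
    (hx : x ∈ m • (⊤ : Submodule R M)) (y : M) : B x y ∈ m * I := by
  refine Submodule.smul_induction_on hx (fun r hr z _ ↦ ?_) (fun z w hz hw ↦ ?_)
  · rw [map_smul, LinearMap.smul_apply, smul_eq_mul]
    exact Ideal.mul_mem_mul hr (hI z y)
  · rw [map_add, LinearMap.add_apply]
    exact add_mem hz hw

theorem pairwise_isCoprime_asIdeal (R : Type*) [CommRing R] :
    Pairwise (Function.onFun IsCoprime (MaximalSpectrum.asIdeal (R := R))) :=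
  fun _ _ hne ↦ Ideal.isCoprime_of_isMaximal fun h ↦ hne (MaximalSpectrum.ext h)

theorem exists_forall_sub_mem_smul_top [Finite (MaximalSpectrum R)] (v : MaximalSpectrum R → M) :
    ∃ w : M, ∀ m, w - v m ∈ m.asIdeal • (⊤ : Submodule R M) := by
  classical
  have := Fintype.ofFinite (MaximalSpectrum R)
  choose t ht using fun m ↦
    Ideal.exists_forall_sub_mem_ideal (pairwise_isCoprime_asIdeal R) (Pi.single m (1 : R))
  refine ⟨∑ m, t m • v m, fun m ↦ ?_⟩
  have expand : ∑ m', t m' • v m' - v m =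
      ∑ m', (t m' - Pi.single (M := fun _ ↦ R) m' 1 m) • v m' := by
    simp only [sub_smul, Finset.sum_sub_distrib, Pi.single_apply, ite_smul, one_smul, zero_smul,
      Finset.sum_ite_eq, Finset.mem_univ, if_true]
  rw [expand]
  exact sum_mem fun m' _ ↦ Submodule.smul_mem_smul (ht m' m) trivial

theorem exists_forall_apply_self_notMem [Finite (MaximalSpectrum R)] (hB : B.IsSymm) {I : Ideal R}
    (hI : ∀ x y, B x y ∈ I) (hself : ∀ m : MaximalSpectrum R, ∃ x, B x x ∉ m.asIdeal * I) :
    ∃ v, ∀ m : MaximalSpectrum R, B v v ∉ m.asIdeal * I := by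
  choose x hx using hself
  obtain ⟨v, hv⟩ := exists_forall_sub_mem_smul_top x
  refine ⟨v, fun m hm ↦ hx m ?_⟩
  have expand : B (x m) (x m) = B v v - B (v - x m) v - B (v - x m) (x m) := by
    simp only [map_sub, LinearMap.sub_apply, hB.eq v (x m)]
    ring
  rw [expand]
  exact sub_mem (sub_mem hm (apply_mem_mul_of_mem_smul_top hI (hv m) v))
    (apply_mem_mul_of_mem_smul_top hI (hv m) (x m))

variable [IsDomain R] [IsPrincipalIdealRing R] [Finite (MaximalSpectrum R)] [Invertible (2 : R)]

theorem exists_forall_apply_self_dvd_apply (hB : B.IsSymm) : ∃ v, ∀ x y, B v v ∣ B x y := by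
  obtain ⟨c, hc⟩ := IsPrincipalIdealRing.principal (Ideal.span (Set.range fun z ↦ B z z))
  rw [Ideal.submodule_span_eq] at hc
  have hI (x y : M) : B x y ∈ Ideal.span {c} := hc ▸ apply_mem_span_range_apply_self hB x y
  rcases eq_or_ne c 0 with rfl | hc0
  · exact ⟨0, fun x y ↦ by simpa using hI x y⟩
  have hself (m : MaximalSpectrum R) : ∃ x, B x x ∉ m.asIdeal * Ideal.span {c} := by
    by_contra! h
    have hle : Ideal.span {c} ≤ m.asIdeal * Ideal.span {c} := by
      rw [← hc, Ideal.span_le, hc]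
      rintro _ ⟨z, rfl⟩
      exact h z
    obtain ⟨w, hw, hwc⟩ := Ideal.mem_mul_span_singleton.1 (hle (Ideal.mem_span_singleton_self c))
    exact m.isMaximal.ne_top ((Ideal.eq_top_iff_one _).2 (mul_right_cancel₀ hc0
      (hwc.trans (one_mul c).symm) ▸ hw))
  obtain ⟨v, hv⟩ := exists_forall_apply_self_notMem hB hI hself
  obtain ⟨w, hw⟩ := Ideal.mem_span_singleton'.1 (hI v v)
  have hw_unit : IsUnit w := by
    by_contra hw'
    obtain ⟨m, hm, hwm⟩ := exists_max_ideal_of_mem_nonunits hw'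
    exact hv ⟨m, hm⟩ (Ideal.mem_mul_span_singleton.2 ⟨w, hwm, hw⟩)
  refine ⟨v, fun x y ↦ ?_⟩
  rw [← hw, hw_unit.mul_left_dvd]
  exact Ideal.mem_span_singleton.1 (hI x y)

theorem exists_isOrthoᵢ_basis [Module.Free R M] [Module.Finite R M] (hB : B.IsSymm) :
    ∃ (n : ℕ) (b : Basis (Fin n) R M), B.IsOrthoᵢ b := by
  induction hn : finrank R M using Nat.strong_induction_on generalizing M with
  | _ n ih =>
  obtain ⟨v, hv⟩ := exists_forall_apply_self_dvd_apply hB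
  by_cases hv0 : B v v = 0
  · refine ⟨_, finBasis R M, fun i j _ ↦ zero_dvd_iff.1 (hv0 ▸ hv _ _)⟩
  have hli (c : R) (x : M) (hx : x ∈ LinearMap.ker (B v)) (h : c • v + x = 0) : c = 0 := by
    have hBv := congrArg (B v) h
    rw [map_add, map_smul, LinearMap.mem_ker.1 hx, add_zero, map_zero, smul_eq_mul] at hBv
    exact (mul_eq_zero.1 hBv).resolve_right hv0
  have hsp (z : M) : ∃ c : R, z + c • v ∈ LinearMap.ker (B v) := by
    obtain ⟨c, hc⟩ := hv v z
    refine ⟨-c, LinearMap.mem_ker.2 ?_⟩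
    rw [map_add, map_smul, hc, smul_eq_mul]
    ring
  have hlt : finrank R (LinearMap.ker (B v)) < n := by
    rw [← hn, finrank_eq_card_basis (Basis.mkFinCons v (finBasis R _) hli hsp), Fintype.card_fin]
    exact Nat.lt_succ_self _
  obtain ⟨k, b, hb⟩ := ih _ hlt (B := B.restrict (LinearMap.ker (B v)))
    ⟨fun x y ↦ hB.eq x y⟩ rfl
  refine ⟨k + 1, Basis.mkFinCons v b hli hsp, ?_⟩
  rw [Basis.coe_mkFinCons, LinearMap.isOrthoᵢ_def]
  intro i j hij
  refine i.cases (fun hij ↦ ?_) (fun i hij ↦ ?_) hij <;>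
    refine j.cases (fun hij ↦ ?_) (fun j hij ↦ ?_) hij
  · exact absurd rfl hij
  · exact LinearMap.mem_ker.1 (b j).2
  · exact (hB.eq _ _).trans (LinearMap.mem_ker.1 (b i).2)
  · exact LinearMap.isOrthoᵢ_def.1 hb i j (ne_of_apply_ne Fin.succ hij)

theorem exists_transpose_mul_mul_eq_diagonal {ι : Type*} [Fintype ι] [DecidableEq ι]
    {H : Matrix ι ι R} (hH : H.IsSymm) :
    ∃ (P : Matrix ι ι R) (d : ι → R), IsUnit P ∧ Pᵀ * H * P = diagonal d := by
  have hB : (toBilin (Pi.basisFun R ι) H).IsSymm := (isSymm_toBilin_iff_isSymm _).2 hH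
  obtain ⟨n, b₀, hb₀⟩ := exists_isOrthoᵢ_basis hB
  let b := b₀.reindex (b₀.indexEquiv (Pi.basisFun R ι))
  have hb : b.toMatrix (Pi.basisFun R ι) * (Pi.basisFun R ι).toMatrix b = 1 :=
    Basis.toMatrix_mul_toMatrix_flip _ _
  refine ⟨(Pi.basisFun R ι).toMatrix b, fun i ↦ toBilin (Pi.basisFun R ι) H (b i) (b i),
    IsUnit.of_mul_eq_one_right _ hb, ?_⟩
  rw [← LinearMap.BilinForm.toMatrix_toBilin (Pi.basisFun R ι) H,
    LinearMap.BilinForm.toMatrix_mul_basis_toMatrix, LinearMap.BilinForm.toMatrix_toBilin]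
  ext i j
  rw [LinearMap.BilinForm.toMatrix_apply, diagonal_apply]
  split_ifs with hij
  · rw [hij]
  · simp only [b, Basis.reindex_apply]
    exact LinearMap.isOrthoᵢ_def.1 hb₀ _ _ ((Equiv.injective _).ne hij)

end OrthogonalBasis

section Orthogonal

variable {A F ι : Type*} [CommRing A] [CommRing F] [Fintype ι]

theorem IsOrthogonalFor.mul {H M N : Matrix ι ι A} (hM : IsOrthogonalFor H M)
    (hN : IsOrthogonalFor H N) : IsOrthogonalFor H (M * N) := by
  calc (M * N)ᵀ * H * (M * N) = Nᵀ * (Mᵀ * H * M) * N := by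
        rw [transpose_mul]; simp only [Matrix.mul_assoc]
    _ = H := by rw [show Mᵀ * H * M = H from hM]; exact hN

theorem IsOrthogonalFor.of_mul_left {H M N : Matrix ι ι A} (hM : IsOrthogonalFor H M)
    (hMN : IsOrthogonalFor H (M * N)) : IsOrthogonalFor H N := by
  calc Nᵀ * H * N = Nᵀ * (Mᵀ * H * M) * N := by rw [show Mᵀ * H * M = H from hM]
    _ = (M * N)ᵀ * H * (M * N) := by rw [transpose_mul]; simp only [Matrix.mul_assoc]
    _ = H := hMN

theorem IsOrthogonalFor.map {H M : Matrix ι ι A} (hM : IsOrthogonalFor H M) (f : A →+* F) :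
    IsOrthogonalFor (H.map f) (M.map f) := by
  rw [IsOrthogonalFor, ← transpose_map, ← Matrix.map_mul, ← Matrix.map_mul]
  exact congrArg (Matrix.map · f) hM

theorem IsOrthogonalFor.of_map {f : A →+* F} (hf : Function.Injective f) {H M : Matrix ι ι A}
    (hM : IsOrthogonalFor (H.map f) (M.map f)) : IsOrthogonalFor H M := by
  rw [IsOrthogonalFor, ← transpose_map, ← Matrix.map_mul, ← Matrix.map_mul] at hM
  exact Matrix.map_injective hf hM

theorem isOrthogonalFor_add_transpose {B M : Matrix ι ι A} (h : B * M = Bᵀ) :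
    IsOrthogonalFor (B + Bᵀ) M := by
  have hT : Mᵀ * Bᵀ = B := by rw [← transpose_mul, h, transpose_transpose]
  calc Mᵀ * (B + Bᵀ) * M = Mᵀ * (B * M) + (Mᵀ * Bᵀ) * M := by noncomm_ring
    _ = B + Bᵀ := by rw [h, hT, h]

variable [DecidableEq ι]

theorem IsOrthogonalFor.add_transpose_eq {H M B : Matrix ι ι A} (hH : H.IsSymm)
    (hM : IsOrthogonalFor H M) (h1M : IsUnit (1 + M)) (hB : B * (1 + M) = H) : B + Bᵀ = H := by
  have hBT : (1 + M)ᵀ * Bᵀ = H := by rw [← transpose_mul, hB, hH.eq]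
  have hconj : (1 + M)ᵀ * (B + Bᵀ) * (1 + M) = (1 + M)ᵀ * H * (1 + M) :=
    calc (1 + M)ᵀ * (B + Bᵀ) * (1 + M)
        = (1 + M)ᵀ * (B * (1 + M)) + (1 + M)ᵀ * Bᵀ * (1 + M) := by noncomm_ring
      _ = (1 + Mᵀ) * H + Mᵀ * H * M + H * M := by
        rw [hB, hBT, transpose_add, transpose_one, show Mᵀ * H * M = H from hM]; noncomm_ring
      _ = (1 + M)ᵀ * H * (1 + M) := by
        rw [transpose_add, transpose_one]; noncomm_ring
  exact ((isUnit_transpose _).2 h1M).mul_left_cancel (h1M.mul_right_cancel hconj)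

end Orthogonal

section DiagonalShift

variable {F ι κ : Type*} [CommRing F] [Fintype ι] [Fintype κ] [DecidableEq ι] [DecidableEq κ]
  {S : Set F}

theorem exists_isUnit_add_diagonal_of_equiv (e : ι ≃ κ)
    (h : ∀ M : Matrix ι ι F, ∃ d : ι → F, (∀ i, d i ∈ S) ∧ IsUnit (M + diagonal d))
    (M : Matrix κ κ F) : ∃ d : κ → F, (∀ k, d k ∈ S) ∧ IsUnit (M + diagonal d) := by
  obtain ⟨d, hdS, hd⟩ := h (M.submatrix e e)
  refine ⟨d ∘ e.symm, fun k ↦ hdS _, ?_⟩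
  have hsub : (M + diagonal (d ∘ e.symm)).submatrix e e = M.submatrix e e + diagonal d := by
    ext i j
    simp [diagonal_apply]
  rwa [← isUnit_submatrix_equiv e e, hsub]

theorem exists_isUnit_add_diagonal_sum
    (hι : ∀ M : Matrix ι ι F, ∃ d : ι → F, (∀ i, d i ∈ S) ∧ IsUnit (M + diagonal d))
    (hκ : ∀ M : Matrix κ κ F, ∃ d : κ → F, (∀ k, d k ∈ S) ∧ IsUnit (M + diagonal d))
    (M : Matrix (ι ⊕ κ) (ι ⊕ κ) F) :
    ∃ d : ι ⊕ κ → F, (∀ i, d i ∈ S) ∧ IsUnit (M + diagonal d) := by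
  obtain ⟨d₂, hd₂S, hd₂⟩ := hκ M.toBlocks₂₂
  have := hd₂.invertible
  obtain ⟨d₁, hd₁S, hd₁⟩ := hι
    (M.toBlocks₁₁ - M.toBlocks₁₂ * ⅟(M.toBlocks₂₂ + diagonal d₂) * M.toBlocks₂₁)
  refine ⟨Sum.elim d₁ d₂, Sum.rec hd₁S hd₂S, ?_⟩
  rw [← fromBlocks_toBlocks M, ← fromBlocks_diagonal, fromBlocks_add, add_zero, add_zero,
    isUnit_fromBlocks_iff_of_invertible₂₂]
  rwa [add_sub_right_comm]

theorem exists_isUnit_add_diagonal (hS : ∀ x, ∃ s ∈ S, IsUnit (x + s)) (M : Matrix ι ι F) :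
    ∃ d : ι → F, (∀ i, d i ∈ S) ∧ IsUnit (M + diagonal d) := by
  refine Fintype.induction_empty_option (P := fun α _ ↦ ∀ [DecidableEq α] (M : Matrix α α F),
    ∃ d : α → F, (∀ i, d i ∈ S) ∧ IsUnit (M + diagonal d)) ?_ ?_ ?_ ι M
  · intro α β _ e h _
    classical
    let _ := Fintype.ofEquiv β e.symm
    exact exists_isUnit_add_diagonal_of_equiv e h
  · exact fun M ↦ ⟨0, PEmpty.rec, isUnit_of_subsingleton _⟩
  · intro α _ h _
    classical
    refine exists_isUnit_add_diagonal_of_equiv (Equiv.optionEquivSumPUnit.{0} α).symm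
      (exists_isUnit_add_diagonal_sum h fun M ↦ ?_)
    obtain ⟨s, hsS, hs⟩ := hS (M default default)
    exact ⟨fun _ ↦ s, fun _ ↦ hsS, by simpa [isUnit_iff_isUnit_det, det_unique] using hs⟩

end DiagonalShift

section IdempotentFactorization

variable {A : Type*} [CommRing A]

theorem exists_isIdempotentElem_dvd_of_isCoprime {b c : A} [IsAdicComplete (Ideal.span {b * c}) A]
    (hbc : IsCoprime b c) : ∃ e : A, IsIdempotentElem e ∧ b ∣ e ∧ c ∣ 1 - e := by
  obtain ⟨u, v, huv⟩ := hbc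
  have hmem : u * b * (u * b - 1) ∈ Ideal.span {b * c} :=
    Ideal.mem_span_singleton.2 ⟨-(u * v), by linear_combination u * b * huv⟩
  have hunit : IsUnit (Ideal.Quotient.mk (Ideal.span {b * c}) (2 * (u * b) - 1)) := by
    refine IsUnit.of_mul_eq_one (Ideal.Quotient.mk _ (2 * (u * b) - 1)) ?_
    rw [← map_mul, ← map_one (Ideal.Quotient.mk (Ideal.span {b * c})),
      Ideal.Quotient.mk_eq_mk_iff_sub_mem,
      show (2 * (u * b) - 1) * (2 * (u * b) - 1) - 1 = 4 * (u * b * (u * b - 1)) by ring]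
    exact Ideal.mul_mem_left _ _ hmem
  obtain ⟨e, he, hsub⟩ := HenselianRing.is_henselian (Polynomial.X * (Polynomial.X - 1))
    (Polynomial.monic_X.mul (Polynomial.monic_X_sub_C 1)) (u * b) (by simpa using hmem)
    (by simpa [two_mul, add_sub_right_comm, ← add_sub_assoc] using hunit)
  obtain ⟨w, hw⟩ := Ideal.mem_span_singleton.1 hsub
  refine ⟨e, ?_, ⟨u + c * w, by linear_combination hw⟩,
    ⟨v - b * w, by linear_combination -hw - huv⟩⟩
  have hroot : e * (e - 1) = 0 := by simpa using he
  exact sub_eq_zero.1 (by linear_combination hroot)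

theorem eq_zero_of_forall_pow_dvd {p x : A} [IsHausdorff (Ideal.span {p}) A]
    (h : ∀ k, p ^ k ∣ x) : x = 0 := by
  refine IsHausdorff.haus' (I := Ideal.span {p}) x fun k ↦ SModEq.zero.2 ?_
  rw [Ideal.smul_eq_mul, Ideal.mul_top, Ideal.span_singleton_pow]
  exact Ideal.mem_span_singleton.2 (h k)

variable {ι : Type*} [Fintype ι] {q : ι → A}

theorem exists_isIdempotentElem_finiteMultiplicity [IsAdicComplete (Ideal.span {∏ i, q i}) A]
    (hq : Pairwise (Function.onFun IsCoprime q)) (hq_unit : ∀ i, ¬IsUnit (q i)) (a : A) :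
    ∃ e : A, IsIdempotentElem e ∧ e * a = a ∧ ∀ i, FiniteMultiplicity (q i) (a + (1 - e)) := by
  classical
  -- `e` is `0` modulo the `q i` all of whose powers divide `a` and `1` modulo the others.
  let S : Finset ι := {i | ¬FiniteMultiplicity (q i) a}
  have mem_S (i : ι) : i ∈ S ↔ ¬FiniteMultiplicity (q i) a := Finset.mem_filter_univ i
  have hprod : (∏ i ∈ S, q i) * ∏ i ∈ Sᶜ, q i = ∏ i, q i := Finset.prod_mul_prod_compl S q
  have : IsAdicComplete (Ideal.span {(∏ i ∈ S, q i) * ∏ i ∈ Sᶜ, q i}) A := hprod ▸ ‹_›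
  have hcoprime : IsCoprime (∏ i ∈ S, q i) (∏ i ∈ Sᶜ, q i) :=
    IsCoprime.prod_left fun i hi ↦ IsCoprime.prod_right fun j hj ↦
      hq (ne_of_mem_of_not_mem hi (Finset.mem_compl.1 hj))
  obtain ⟨e, he, hSe, hSce⟩ := exists_isIdempotentElem_dvd_of_isCoprime hcoprime
  have hdvd (i : ι) (hi : i ∈ S) (k : ℕ) : q i ^ k ∣ a :=
    FiniteMultiplicity.not_iff_forall.1 ((mem_S i).1 hi) k
  have hpow (k : ℕ) : (∏ i, q i) ^ k ∣ (1 - e) * a := by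
    rw [← hprod, mul_pow, mul_comm, ← Finset.prod_pow S]
    refine mul_dvd_mul (he.one_sub.pow_succ_eq k ▸ ?_) ?_
    · exact (pow_dvd_pow_of_dvd hSce k).trans (pow_dvd_pow _ k.le_succ)
    · exact Finset.prod_dvd_of_coprime (fun i _ j _ hij ↦ (hq hij).pow) fun i hi ↦ hdvd i hi k
  have hea : (1 - e) * a = 0 := eq_zero_of_forall_pow_dvd hpow
  refine ⟨e, he, by linear_combination -hea, fun i ↦ ?_⟩
  by_cases hi : i ∈ S
  · refine FiniteMultiplicity.def.2 ⟨0, fun h ↦ hq_unit i (isUnit_of_dvd_one ?_)⟩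
    have hie : q i ∣ e := (Finset.dvd_prod_of_mem q hi).trans hSe
    have hia : q i ∣ a := by simpa using hdvd i hi 1
    rw [zero_add, pow_one] at h
    exact (dvd_sub_left hie).1 ((dvd_add_right hia).1 h)
  · obtain ⟨n, hn⟩ := FiniteMultiplicity.def.1 (not_not.1 (mt (mem_S i).2 hi))
    have hie : q i ^ (n + 1) ∣ 1 - e := by
      rw [← he.one_sub.pow_succ_eq n]
      exact pow_dvd_pow_of_dvd
        ((Finset.dvd_prod_of_mem q (Finset.mem_compl.2 hi)).trans hSce) _
    exact FiniteMultiplicity.def.2 ⟨n, fun h ↦ hn ((dvd_add_left hie).1 h)⟩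

theorem exists_isUnit_mul_prod_pow_multiplicity (hq : Pairwise (Function.onFun IsCoprime q))
    (hunit : ∀ y, (∀ i, ¬q i ∣ y) → IsUnit y) {x : A} (hx : ∀ i, FiniteMultiplicity (q i) x) :
    ∃ u : A, IsUnit u ∧ x = u * ∏ i, q i ^ multiplicity (q i) x := by
  obtain ⟨u, hu⟩ := Fintype.prod_dvd_of_coprime
    (fun i j hij ↦ (hq hij).pow) fun i ↦ pow_multiplicity_dvd (q i) x
  refine ⟨u, hunit u fun i hi ↦ ?_, by rw [mul_comm]; exact hu⟩
  refine (hx i).not_pow_dvd_of_multiplicity_lt (Nat.lt_succ_self _) ?_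
  rw [pow_succ]
  conv_rhs => rw [hu]
  exact mul_dvd_mul
    (Finset.dvd_prod_of_mem (fun i ↦ q i ^ multiplicity (q i) x) (Finset.mem_univ i)) hi

/-- Every element of the `R`-algebra `A` is the product of an idempotent, a unit and a nonzero
scalar. For `A = R̂` this is what makes the total ring of fractions von Neumann regular. -/
def HasIdempotentFactorization (R A : Type*) [CommRing R] [CommRing A] [Algebra R A] : Prop :=
  ∀ a : A, ∃ (e u : A) (r : R),
    IsIdempotentElem e ∧ IsUnit u ∧ r ≠ 0 ∧ a = e * u * algebraMap R A r

theorem hasIdempotentFactorization_of_isAdicComplete {R : Type*} [CommRing R] [IsDomain R]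
    [Algebra R A] {p : ι → R} [IsAdicComplete (Ideal.span {∏ i, algebraMap R A (p i)}) A]
    (hp : Pairwise (Function.onFun IsCoprime p)) (hp_unit : ∀ i, ¬IsUnit (algebraMap R A (p i)))
    (hunit : ∀ y, (∀ i, ¬algebraMap R A (p i) ∣ y) → IsUnit y) :
    HasIdempotentFactorization R A := by
  have hq : Pairwise (Function.onFun IsCoprime fun i ↦ algebraMap R A (p i)) :=
    fun i j hij ↦ (hp hij).map (algebraMap R A)
  intro a
  obtain ⟨e, he, hea, hfin⟩ := exists_isIdempotentElem_finiteMultiplicity hq hp_unit a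
  obtain ⟨u, hu, hfactor⟩ := exists_isUnit_mul_prod_pow_multiplicity hq hunit hfin
  refine ⟨e, u, ∏ i, p i ^ multiplicity (algebraMap R A (p i)) (a + (1 - e)), he, hu,
    Finset.prod_ne_zero_iff.2 fun i _ hzero ↦ (hfin i).ne_zero ?_, ?_⟩
  · rw [← zero_dvd_iff, ← map_zero (algebraMap R A), ← hzero, map_pow]
    exact pow_multiplicity_dvd _ _
  · simp only [map_prod, map_pow]
    rw [mul_assoc, ← hfactor]
    linear_combination -hea + he.eq

end IdempotentFactorization

section Completion

variable {R : Type*} [CommRing R]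

theorem exists_sub_algebraMap_mem_map_pow {J : Ideal R} (hJ : J.FG) (k : ℕ)
    (a : AdicCompletion J R) :
    ∃ r : R, a - algebraMap R _ r ∈ (J ^ k).map (algebraMap R (AdicCompletion J R)) := by
  obtain ⟨r, hr⟩ := Submodule.mkQ_surjective _ (AdicCompletion.eval J R k a)
  refine ⟨r, ?_⟩
  rw [← Submodule.restrictScalars_mem R, ← Ideal.smul_top_eq_map,
    AdicCompletion.pow_smul_top_eq_ker_eval hJ, LinearMap.mem_ker, map_sub, ← hr, sub_eq_zero]
  rfl

theorem isAdicComplete_map_algebraMap_adicCompletion {J : Ideal R} (hJ : J.FG) :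
    IsAdicComplete (J.map (algebraMap R (AdicCompletion J R))) (AdicCompletion J R) :=
  (IsAdicComplete.map_algebraMap_iff _ _).2 (AdicCompletion.isAdicComplete hJ)

theorem isLocalHom_algebraMap_jacobsonCompletion :
    IsLocalHom (algebraMap R (jacobsonCompletion R)) := by
  refine ⟨fun r hr ↦ ?_⟩
  have := isLocalHom_of_le_jacobson_bot _ (le_refl (⊥ : Ideal R).jacobson)
  refine IsUnit.of_map (Ideal.Quotient.mk (⊥ : Ideal R).jacobson) r ?_
  rw [← AdicCompletion.evalOneₐ_comp_algebraMap_eq_mk]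
  exact hr.map (AdicCompletion.evalOneₐ (⊥ : Ideal R).jacobson)

theorem nontrivial_jacobsonCompletion (R : Type*) [CommRing R] [Nontrivial R] :
    Nontrivial (jacobsonCompletion R) := by
  refine nontrivial_of_ne 0 1 fun h ↦ not_isUnit_zero (M₀ := R) ?_
  refine isLocalHom_algebraMap_jacobsonCompletion.map_nonunit 0 ?_
  rw [map_zero, h]
  exact isUnit_one

theorem map_jacobson_bot_le_jacobson_bot_jacobsonCompletion (hJ : (⊥ : Ideal R).jacobson.FG) :
    (⊥ : Ideal R).jacobson.map (algebraMap R (jacobsonCompletion R)) ≤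
      (⊥ : Ideal (jacobsonCompletion R)).jacobson :=
  have := isAdicComplete_map_algebraMap_adicCompletion hJ
  IsAdicComplete.le_jacobson_bot _

theorem exists_jacobson_bot_pow_le [IsDomain R] [Ring.DimensionLEOne R]
    (hJ : (⊥ : Ideal R).jacobson.FG) {r : R} (hr : r ≠ 0) :
    ∃ k : ℕ, (⊥ : Ideal R).jacobson ^ k ≤ Ideal.span {r} := by
  refine Ideal.exists_pow_le_of_le_radical_of_fg ?_ hJ
  rw [Ideal.radical_eq_sInf]
  refine le_sInf fun P hP ↦ sInf_le ⟨bot_le, hP.2.isMaximal ?_⟩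
  rintro rfl
  exact hr (hP.1 (Ideal.mem_span_singleton_self r))

/-- The image of `R` is dense in the `R`-algebra `A` for the topology whose neighbourhoods of zero
are generated by the ideals `r • Jac A` with `r ≠ 0` in `R`. -/
def IsJacobsonDense (R A : Type*) [CommRing R] [CommRing A] [Algebra R A] : Prop :=
  ∀ r : R, r ≠ 0 → ∀ a : A, ∃ r₀ : R, ∃ y ∈ (⊥ : Ideal A).jacobson,
    a = algebraMap R A r₀ + algebraMap R A r * y

theorem isJacobsonDense_jacobsonCompletion [IsDomain R] [Ring.DimensionLEOne R]
    (hJ : (⊥ : Ideal R).jacobson.FG) : IsJacobsonDense R (jacobsonCompletion R) := by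
  intro r hr a
  obtain ⟨k, hk⟩ := exists_jacobson_bot_pow_le hJ hr
  obtain ⟨r₀, hr₀⟩ := exists_sub_algebraMap_mem_map_pow hJ (k + 1) a
  have hle : ((⊥ : Ideal R).jacobson ^ (k + 1)).map (algebraMap R (jacobsonCompletion R)) ≤
      Ideal.span {algebraMap R (jacobsonCompletion R) r} *
        (⊥ : Ideal (jacobsonCompletion R)).jacobson := by
    rw [pow_succ, Ideal.map_mul, ← Set.image_singleton, ← Ideal.map_span]
    exact Ideal.mul_mono (Ideal.map_mono hk)
      (map_jacobson_bot_le_jacobson_bot_jacobsonCompletion hJ)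
  obtain ⟨y, hy, hay⟩ := Ideal.mem_span_singleton_mul.1 (hle hr₀)
  exact ⟨r₀, y, hy, by rw [hay]; ring⟩

theorem isUnit_jacobsonCompletion_of_forall_not_dvd {ι : Type*} {p : ι → R}
    (hJ : (⊥ : Ideal R).jacobson.FG) (hJp : ∀ i, (⊥ : Ideal R).jacobson ≤ Ideal.span {p i})
    (hp : ∀ r, (∀ i, ¬p i ∣ r) → IsUnit r) {y : jacobsonCompletion R}
    (hy : ∀ i, ¬algebraMap R (jacobsonCompletion R) (p i) ∣ y) : IsUnit y := by
  obtain ⟨r, hr⟩ := exists_sub_algebraMap_mem_map_pow hJ 1 y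
  rw [pow_one] at hr
  have hr_unit : IsUnit r := hp r fun i hi ↦ hy i <| by
    have hdvd : algebraMap R (jacobsonCompletion R) (p i) ∣ y - algebraMap R _ r := by
      rw [← Ideal.mem_span_singleton, ← Set.image_singleton, ← Ideal.map_span]
      exact Ideal.map_mono (hJp i) hr
    exact (dvd_sub_left (map_dvd _ hi)).1 hdvd
  have := isLocalHom_of_le_jacobson_bot _ (map_jacobson_bot_le_jacobson_bot_jacobsonCompletion hJ)
  refine IsUnit.of_map
    (Ideal.Quotient.mk ((⊥ : Ideal R).jacobson.map (algebraMap R (jacobsonCompletion R)))) y ?_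
  rw [(Ideal.Quotient.mk_eq_mk_iff_sub_mem _ _).2 hr]
  exact (hr_unit.map _).map _

theorem isUnit_of_forall_not_dvd_generator {p : MaximalSpectrum R → R}
    (hp : ∀ m, m.asIdeal = Ideal.span {p m}) {r : R} (hr : ∀ m, ¬p m ∣ r) : IsUnit r := by
  by_contra hr_unit
  obtain ⟨m, hm, hrm⟩ := exists_max_ideal_of_mem_nonunits hr_unit
  exact hr ⟨m, hm⟩ (Ideal.mem_span_singleton.1 (hp ⟨m, hm⟩ ▸ hrm))

theorem pairwise_isCoprime_generator {p : MaximalSpectrum R → R}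
    (hp : ∀ m, m.asIdeal = Ideal.span {p m}) : Pairwise (Function.onFun IsCoprime p) := by
  intro m m' hmm'
  rw [Function.onFun, ← Ideal.isCoprime_span_singleton_iff, ← hp, ← hp]
  exact pairwise_isCoprime_asIdeal R hmm'

theorem jacobson_bot_eq_span_prod_generator [Fintype (MaximalSpectrum R)]
    {p : MaximalSpectrum R → R} (hp : ∀ m, m.asIdeal = Ideal.span {p m}) :
    (⊥ : Ideal R).jacobson = Ideal.span {∏ m, p m} := by
  rw [← Ideal.iInf_span_singleton fun _ _ h ↦ pairwise_isCoprime_generator hp h]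
  simp only [← hp]
  exact le_antisymm (le_iInf fun m ↦ sInf_le ⟨bot_le, m.isMaximal⟩)
    (le_sInf fun I hI ↦ iInf_le (MaximalSpectrum.asIdeal) ⟨I, hI.2⟩)

theorem hasIdempotentFactorization_jacobsonCompletion [IsDomain R]
    [IsPrincipalIdealRing R] [Finite (MaximalSpectrum R)] :
    HasIdempotentFactorization R (jacobsonCompletion R) := by
  have := Fintype.ofFinite (MaximalSpectrum R)
  choose p hp using show ∀ m : MaximalSpectrum R, ∃ r, m.asIdeal = Ideal.span {r} from
    fun m ↦ (IsPrincipalIdealRing.principal m.asIdeal).principal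
  have hJ := jacobson_bot_eq_span_prod_generator hp
  have hfg := IsNoetherian.noetherian (⊥ : Ideal R).jacobson
  have : IsAdicComplete (Ideal.span {∏ m, algebraMap R (jacobsonCompletion R) (p m)})
      (jacobsonCompletion R) := by
    rw [← map_prod, ← Set.image_singleton, ← Ideal.map_span, ← hJ]
    exact isAdicComplete_map_algebraMap_adicCompletion hfg
  refine hasIdempotentFactorization_of_isAdicComplete (pairwise_isCoprime_generator hp)
    (fun m hm ↦ m.isMaximal.ne_top ?_) fun y ↦ isUnit_jacobsonCompletion_of_forall_not_dvd hfg
      (fun m ↦ ?_) fun r ↦ isUnit_of_forall_not_dvd_generator hp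
  · rw [hp, Ideal.span_singleton_eq_top]
    exact isLocalHom_algebraMap_jacobsonCompletion.map_nonunit _ hm
  · rw [← hp]
    exact sInf_le ⟨bot_le, m.isMaximal⟩

end Completion

section Fractions

open scoped nonZeroDivisors

theorem isUnit_mul_add_one_sub_mul {B : Type*} [CommRing B] {e u v : B} (he : IsIdempotentElem e)
    (hu : IsUnit u) (hv : IsUnit v) : IsUnit (e * u + (1 - e) * v) := by
  obtain ⟨u', hu'⟩ := hu.exists_right_inv
  obtain ⟨v', hv'⟩ := hv.exists_right_inv
  refine .of_mul_eq_one (e * u' + (1 - e) * v') ?_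
  linear_combination
    (u * u' + v * v' - u * v' - v * u') * he.eq + e * hu' + (1 - e) * hv'

variable {R A F : Type*} [CommRing R] [CommRing A] [CommRing F] [Algebra R A]
  [Algebra A F] [IsFractionRing A F]

theorem HasIdempotentFactorization.exists_dvd_algebraMap (hA : HasIdempotentFactorization R A)
    (s : A⁰) : ∃ r : R, r ≠ 0 ∧ (s : A) ∣ algebraMap R A r := by
  obtain ⟨e, u, r, he, hu, hr, hs⟩ := hA s
  have he1 : 1 - e = 0 := by
    refine (mem_nonZeroDivisors_iff.1 s.2).2 _ ?_
    rw [hs]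
    linear_combination (-u * algebraMap R A r) * he.eq
  refine ⟨r, hr, ?_⟩
  rw [hs, ← sub_eq_zero.1 he1, one_mul]
  exact (hu.mul_left_dvd).2 dvd_rfl

theorem HasIdempotentFactorization.exists_map_eq_smul {ι : Type*} [Finite ι]
    (hA : HasIdempotentFactorization R A) (M : Matrix ι ι F) :
    ∃ (r : R) (N : Matrix ι ι A), r ≠ 0 ∧
      N.map (algebraMap A F) = algebraMap A F (algebraMap R A r) • M := by
  obtain ⟨s, hs⟩ := IsLocalization.exist_integer_multiples_of_finite A⁰ fun k : ι × ι ↦ M k.1 k.2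
  obtain ⟨r, hr, c, hc⟩ := hA.exists_dvd_algebraMap s
  choose N hN using hs
  refine ⟨r, .of fun i j ↦ c * N (i, j), hr, ?_⟩
  ext i j
  simp only [map_apply, of_apply, Matrix.smul_apply, smul_eq_mul, map_mul, hN, hc,
    algebra_compatible_smul F (s : A)]
  ring

theorem HasIdempotentFactorization.exists_isIdempotentElem_mul_isUnit
    (hA : HasIdempotentFactorization R A)
    (hu : ∀ r : R, r ≠ 0 → IsUnit (algebraMap A F (algebraMap R A r))) (x : F) :
    ∃ (e : A) (w : F), IsIdempotentElem e ∧ IsUnit w ∧ x = algebraMap A F e * w := by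
  obtain ⟨⟨a, s⟩, hx⟩ := IsLocalization.surj A⁰ x
  obtain ⟨e, u, r, he, hu_unit, hr, rfl⟩ := hA a
  obtain ⟨s', hs'⟩ := (IsLocalization.map_units F s).exists_right_inv
  refine ⟨e, algebraMap A F u * algebraMap A F (algebraMap R A r) * s', he,
    ((hu_unit.map _).mul (hu r hr)).mul (.of_mul_eq_one _ (mul_comm _ _ |>.trans hs')), ?_⟩
  simp only [map_mul] at hx
  linear_combination s' * hx - x * hs'

theorem HasIdempotentFactorization.exists_sign_isUnit_add [Invertible (2 : R)]
    (hA : HasIdempotentFactorization R A)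
    (hu : ∀ r : R, r ≠ 0 → IsUnit (algebraMap A F (algebraMap R A r))) (x : F) :
    ∃ s : A, s * s = 1 ∧ IsUnit (x + algebraMap A F s) := by
  obtain ⟨e, w, he, hw, hx⟩ := hA.exists_isIdempotentElem_mul_isUnit hu (x + 1)
  have h2 : IsUnit (-2 : F) := by
    rw [← map_ofNat ((algebraMap A F).comp (algebraMap R A))]
    exact ((isUnit_of_invertible (2 : R)).map _).neg
  refine ⟨2 * e - 1, by linear_combination 4 * he.eq, ?_⟩
  convert isUnit_mul_add_one_sub_mul (he.map (algebraMap A F)) hw h2 using 1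
  simp only [map_sub, map_mul, map_ofNat, map_one]
  linear_combination hx

end Fractions

section Cayley

variable {F ι : Type*} [CommRing F] [Fintype ι] [DecidableEq ι]

theorem IsOrthogonalFor.exists_add_transpose_eq {H M : Matrix ι ι F} (hH : H.IsSymm)
    (hH_unit : IsUnit H) (hM : IsOrthogonalFor H M) (h1M : IsUnit (1 + M)) :
    ∃ B, IsUnit B ∧ B + Bᵀ = H ∧ B * M = Bᵀ := by
  obtain ⟨N, hN⟩ := h1M.exists_left_inv
  have hB : H * N * (1 + M) = H := by rw [Matrix.mul_assoc, hN, Matrix.mul_one]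
  have hadd := hM.add_transpose_eq hH h1M hB
  refine ⟨H * N, hH_unit.mul (.of_mul_eq_one _ hN), hadd, ?_⟩
  rw [mul_add, mul_one] at hB
  exact add_left_cancel (hB.trans hadd.symm)

end Cayley

section Approximation

variable {R A K F ι : Type*} [CommRing R] [CommRing A] [CommRing F] [Algebra R A] [Algebra A F]

section Denominators

variable [IsDomain R] [CommRing K] [Algebra R K] [IsFractionRing R K] [IsFractionRing A F]
  {j : K →+* F}

theorem exists_matrix_map_eq_add_smul [Finite ι] (hA : HasIdempotentFactorization R A)
    (hdense : IsJacobsonDense R A)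
    (hj : ∀ r, j (algebraMap R K r) = algebraMap A F (algebraMap R A r)) {r : R} (hr : r ≠ 0)
    (B : Matrix ι ι F) : ∃ (B₀ : Matrix ι ι K) (E : Matrix ι ι A),
      (∀ i k, E i k ∈ (⊥ : Ideal A).jacobson) ∧
      B₀.map j = B + algebraMap A F (algebraMap R A r) • E.map (algebraMap A F) := by
  obtain ⟨t, C, ht, hC⟩ := hA.exists_map_eq_smul B
  choose C₀ Y hY hC₀ using fun i k ↦ hdense (t * r) (mul_ne_zero ht hr) (C i k)
  obtain ⟨t', ht'⟩ := (IsLocalization.map_units K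
    (⟨t, mem_nonZeroDivisors_of_ne_zero ht⟩ : nonZeroDivisors R)).exists_right_inv
  have hjt : algebraMap A F (algebraMap R A t) * j t' = 1 := by rw [← hj, ← map_mul, ht', map_one]
  refine ⟨.of fun i k ↦ t' * algebraMap R K (C₀ i k), .of fun i k ↦ -Y i k,
    fun i k ↦ neg_mem (hY i k), ?_⟩
  ext i k
  have hCik := congrFun₂ hC i k
  simp only [map_apply, Matrix.smul_apply, smul_eq_mul, hC₀, map_add, map_mul] at hCik
  simp only [map_apply, of_apply, Matrix.add_apply, Matrix.smul_apply, smul_eq_mul, map_mul,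
    map_neg, hj]
  linear_combination
    j t' * hCik + (B i k - algebraMap A F (algebraMap R A r) * algebraMap A F (Y i k)) * hjt

theorem exists_add_transpose_eq_map_eq_add_smul [Finite ι] [Invertible (2 : R)]
    (hA : HasIdempotentFactorization R A) (hdense : IsJacobsonDense R A)
    (hj : ∀ r, j (algebraMap R K r) = algebraMap A F (algebraMap R A r)) {r : R} (hr : r ≠ 0)
    {H : Matrix ι ι R} (hH : H.IsSymm) {B : Matrix ι ι F}
    (hB : B + Bᵀ = (H.map (algebraMap R A)).map (algebraMap A F)) :
    ∃ (B₀ : Matrix ι ι K) (E : Matrix ι ι A), B₀ + B₀ᵀ = H.map (algebraMap R K) ∧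
      (∀ i k, E i k ∈ (⊥ : Ideal A).jacobson) ∧
      B₀.map j = B + algebraMap A F (algebraMap R A r) • E.map (algebraMap A F) := by
  obtain ⟨B₁, E, hE, hB₁⟩ := exists_matrix_map_eq_add_smul hA hdense hj hr B
  have h2K : algebraMap R K ⅟2 * 2 = 1 := by
    rw [← map_ofNat (algebraMap R K) 2, ← map_mul, invOf_mul_self, map_one]
  have h2F : algebraMap A F (algebraMap R A ⅟2) * 2 = 1 := by
    rw [← hj, ← map_ofNat j 2, ← map_mul, h2K, map_one]
  refine ⟨algebraMap R K ⅟2 • (H.map (algebraMap R K) + B₁ - B₁ᵀ),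
    algebraMap R A ⅟2 • (E - Eᵀ), ?_,
    fun i k ↦ Ideal.mul_mem_left _ _ (sub_mem (hE i k) (hE k i)), ?_⟩
  · ext i k
    simp only [Matrix.add_apply, Matrix.sub_apply, Matrix.smul_apply, transpose_apply, smul_eq_mul,
      map_apply, hH.apply i k]
    linear_combination algebraMap R K (H i k) * h2K
  · ext i k
    have hBik := congrFun₂ hB i k
    have hB₁ik := congrFun₂ hB₁ i k
    have hB₁ki := congrFun₂ hB₁ k i
    simp only [Matrix.add_apply, Matrix.sub_apply, Matrix.smul_apply, transpose_apply, smul_eq_mul,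
      map_apply, map_mul, map_add, map_sub, hj] at hBik hB₁ik hB₁ki ⊢
    linear_combination algebraMap A F (algebraMap R A ⅟2) * (hB₁ik - hB₁ki - hBik) + B i k * h2F

end Denominators

variable [Fintype ι] [DecidableEq ι]

theorem isUnit_one_add_of_forall_mem_jacobson {N : Matrix ι ι A}
    (hN : ∀ i k, N i k ∈ (⊥ : Ideal A).jacobson) : IsUnit (1 + N) := by
  have := isLocalHom_of_le_jacobson_bot _ (le_refl (⊥ : Ideal A).jacobson)
  have hmap : (Ideal.Quotient.mk (⊥ : Ideal A).jacobson).mapMatrix (1 + N) = 1 := by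
    rw [map_add, map_one, add_eq_left]
    ext i k
    exact Ideal.Quotient.eq_zero_iff_mem.2 (hN i k)
  rw [isUnit_iff_isUnit_det]
  refine IsUnit.of_map (Ideal.Quotient.mk (⊥ : Ideal A).jacobson) _ ?_
  rw [RingHom.map_det, hmap, det_one]
  exact isUnit_one

theorem isUnit_and_exists_mul_eq_transpose_mul_map {B B₀ M : Matrix ι ι F} {s t : A}
    {P Q E : Matrix ι ι A} (hB : IsUnit B) (hBM : B * M = Bᵀ)
    (hP : P.map (algebraMap A F) = algebraMap A F s • B⁻¹)
    (hQ : Q.map (algebraMap A F) = algebraMap A F t • M)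
    (hE : ∀ i k, E i k ∈ (⊥ : Ideal A).jacobson)
    (hB₀ : B₀ = B + algebraMap A F (s * t) • E.map (algebraMap A F)) :
    IsUnit B₀ ∧ ∃ U : Matrix ι ι A, B₀ * M = B₀ᵀ * U.map (algebraMap A F) := by
  have hinv : B⁻¹ * B = 1 := nonsing_inv_mul B ((isUnit_iff_isUnit_det B).1 hB)
  let V : Matrix ι ι A := 1 + t • (E * P)
  have hV : IsUnit V := isUnit_one_add_of_forall_mem_jacobson fun i k ↦
    Ideal.mul_mem_left _ _ (sum_mem fun _ _ ↦ Ideal.mul_mem_right _ _ (hE _ _))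
  have hVB : V.map (algebraMap A F) * B = B₀ := by
    rw [hB₀, Matrix.map_add _ (map_add _), Matrix.map_one _ (map_zero _) (map_one _),
      Matrix.map_smul' _ _ _ (map_mul _), Matrix.map_mul, hP, Matrix.mul_smul, smul_smul, ← map_mul,
      Matrix.add_mul, Matrix.one_mul, Matrix.smul_mul, Matrix.mul_assoc, hinv, Matrix.mul_one,
      mul_comm t]
  obtain ⟨W, hW⟩ := ((isUnit_transpose V).2 hV).exists_right_inv
  refine ⟨hVB ▸ (hV.map (algebraMap A F).mapMatrix).mul hB, W * (1 + Pᵀ * E * Q), ?_⟩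
  have hcorr : (Pᵀ * E * Q).map (algebraMap A F) =
      algebraMap A F (s * t) • (B⁻¹ᵀ * E.map (algebraMap A F) * M) := by
    rw [Matrix.map_mul, Matrix.map_mul, transpose_map, hP, hQ, transpose_smul, Matrix.smul_mul,
      Matrix.smul_mul, Matrix.mul_smul, smul_smul, map_mul]
  calc B₀ * M = Bᵀ + algebraMap A F (s * t) • (E.map (algebraMap A F) * M) := by
        rw [hB₀, Matrix.add_mul, hBM, Matrix.smul_mul]
    _ = Bᵀ * (1 + Pᵀ * E * Q).map (algebraMap A F) := by
        rw [Matrix.map_add _ (map_add _), Matrix.map_one _ (map_zero _) (map_one _), hcorr,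
          Matrix.mul_add, Matrix.mul_one, Matrix.mul_smul, ← Matrix.mul_assoc, ← Matrix.mul_assoc,
          ← transpose_mul, hinv, transpose_one, Matrix.one_mul]
    _ = Bᵀ * (Vᵀ * W * (1 + Pᵀ * E * Q)).map (algebraMap A F) := by rw [hW, Matrix.one_mul]
    _ = B₀ᵀ * (W * (1 + Pᵀ * E * Q)).map (algebraMap A F) := by
        rw [← hVB, transpose_mul, ← transpose_map, Matrix.mul_assoc Vᵀ, Matrix.map_mul,
          Matrix.mul_assoc Bᵀ]

end Approximation

section SignMatrix

variable {A ι : Type*} [CommRing A] [Fintype ι] [DecidableEq ι]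

theorem isOrthogonalFor_diagonal {d c : ι → A} (hc : ∀ i, c i * c i = 1) :
    IsOrthogonalFor (diagonal d) (diagonal c) := by
  rw [IsOrthogonalFor, diagonal_transpose, diagonal_mul_diagonal, diagonal_mul_diagonal]
  exact congrArg diagonal <| funext fun i ↦ by linear_combination d i * hc i

theorem IsOrthogonalFor.conj {H P Q N : Matrix ι ι A} (hN : IsOrthogonalFor (Pᵀ * H * P) N)
    (hPQ : P * Q = 1) : IsOrthogonalFor H (P * N * Q) := by
  calc (P * N * Q)ᵀ * H * (P * N * Q) = Qᵀ * (Nᵀ * (Pᵀ * H * P) * N) * Q := by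
        simp only [transpose_mul, Matrix.mul_assoc]
    _ = (P * Q)ᵀ * H * (P * Q) := by
        rw [show Nᵀ * (Pᵀ * H * P) * N = _ from hN]
        simp only [transpose_mul, Matrix.mul_assoc]
    _ = H := by rw [hPQ, transpose_one, Matrix.one_mul, Matrix.mul_one]

theorem exists_isOrthogonalFor_mul_self_eq_one_isUnit_add {F : Type*} [CommRing F] {f : A →+* F}
    (hsign : ∀ x : F, ∃ s : A, s * s = 1 ∧ IsUnit (x + f s)) {H P : Matrix ι ι A} {d : ι → A}
    (hP : IsUnit P) (hPH : Pᵀ * H * P = diagonal d) (M : Matrix ι ι F) :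
    ∃ S : Matrix ι ι A, IsOrthogonalFor H S ∧ S * S = 1 ∧ IsUnit (M + S.map f) := by
  obtain ⟨Q, hPQ⟩ := hP.exists_right_inv
  have hQP : Q * P = 1 := mul_eq_one_comm.1 hPQ
  have hfPQ : P.map f * Q.map f = 1 := by
    rw [← Matrix.map_mul, hPQ, Matrix.map_one _ (map_zero _) (map_one _)]
  obtain ⟨c', hc', hunit⟩ := exists_isUnit_add_diagonal (S := {y | ∃ s : A, s * s = 1 ∧ f s = y})
    (fun x ↦ let ⟨s, hs, hx⟩ := hsign x; ⟨f s, ⟨s, hs, rfl⟩, hx⟩) (Q.map f * M * P.map f)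
  choose c hc hcc' using hc'
  have hcc : diagonal c * diagonal c = 1 := by
    rw [diagonal_mul_diagonal, funext hc, diagonal_one]
  refine ⟨P * diagonal c * Q, (hPH ▸ isOrthogonalFor_diagonal hc : IsOrthogonalFor _ _).conj hPQ,
    ?_, ?_⟩
  · calc P * diagonal c * Q * (P * diagonal c * Q)
        = P * diagonal c * (Q * P) * diagonal c * Q := by simp only [Matrix.mul_assoc]
      _ = P * (diagonal c * diagonal c) * Q := by
        rw [hQP, Matrix.mul_one, Matrix.mul_assoc P]
      _ = 1 := by rw [hcc, Matrix.mul_one, hPQ]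
  · have hconj : M + (P * diagonal c * Q).map f =
        P.map f * (Q.map f * M * P.map f + diagonal c') * Q.map f :=
      calc M + (P * diagonal c * Q).map f
          = M + P.map f * diagonal c' * Q.map f := by
            rw [Matrix.map_mul, Matrix.map_mul, diagonal_map (map_zero f), funext hcc']
        _ = (P.map f * Q.map f) * M * (P.map f * Q.map f) + P.map f * diagonal c' * Q.map f := by
            rw [hfPQ, Matrix.one_mul, Matrix.mul_one]
        _ = P.map f * (Q.map f * M * P.map f + diagonal c') * Q.map f := by noncomm_ring
    rw [hconj]
    exact ((IsUnit.of_mul_eq_one _ hfPQ).mul hunit).mul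
      (.of_mul_eq_one _ (mul_eq_one_comm.1 hfPQ))

end SignMatrix

section Factorization

variable {R A K F ι : Type*} [CommRing R] [IsDomain R] [Invertible (2 : R)] [CommRing A]
  [Algebra R A] [Field K] [Algebra R K] [IsFractionRing R K] [CommRing F] [Nontrivial F]
  [Algebra A F] [IsFractionRing A F] {j : K →+* F} [Fintype ι] [DecidableEq ι]

theorem IsOrthogonalFor.exists_eq_mul_of_isUnit_one_add (hA : HasIdempotentFactorization R A)
    (hdense : IsJacobsonDense R A)
    (hj : ∀ r, j (algebraMap R K r) = algebraMap A F (algebraMap R A r))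
    {H : Matrix ι ι R} (hH : H.IsSymm)
    (hH_unit : IsUnit ((H.map (algebraMap R A)).map (algebraMap A F)))
    {M : Matrix ι ι F} (hM : IsOrthogonalFor ((H.map (algebraMap R A)).map (algebraMap A F)) M)
    (h1M : IsUnit (1 + M)) :
    ∃ (M₀ : Matrix ι ι K) (U : Matrix ι ι A), IsOrthogonalFor (H.map (algebraMap R K)) M₀ ∧
      IsOrthogonalFor (H.map (algebraMap R A)) U ∧ M = M₀.map j * U.map (algebraMap A F) := by
  obtain ⟨B, hB_unit, hB, hBM⟩ :=
    hM.exists_add_transpose_eq ((hH.map _).map _) hH_unit h1M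
  obtain ⟨s, P, hs, hP⟩ := hA.exists_map_eq_smul B⁻¹
  obtain ⟨t, Q, ht, hQ⟩ := hA.exists_map_eq_smul M
  obtain ⟨B₀, E, hB₀, hE, hB₀E⟩ :=
    exists_add_transpose_eq_map_eq_add_smul hA hdense hj (mul_ne_zero hs ht) hH hB
  rw [map_mul] at hB₀E
  obtain ⟨hB₀j_unit, U, hU⟩ :=
    isUnit_and_exists_mul_eq_transpose_mul_map hB_unit hBM hP hQ hE hB₀E
  have hB₀_unit : IsUnit B₀.det := by
    rw [isUnit_iff_isUnit_det, ← RingHom.mapMatrix_apply, ← RingHom.map_det] at hB₀j_unit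
    exact hB₀j_unit.of_map
  have hB₀M₀ : B₀ * (B₀⁻¹ * B₀ᵀ) = B₀ᵀ := mul_nonsing_inv_cancel_left _ _ hB₀_unit
  have hM₀ : IsOrthogonalFor (H.map (algebraMap R K)) (B₀⁻¹ * B₀ᵀ) :=
    hB₀ ▸ isOrthogonalFor_add_transpose hB₀M₀
  have hMU : M = (B₀⁻¹ * B₀ᵀ).map j * U.map (algebraMap A F) :=
    hB₀j_unit.mul_left_cancel <| by
      rw [hU, ← Matrix.mul_assoc, ← Matrix.map_mul, hB₀M₀, transpose_map]
  have hM₀j := hM₀.map j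
  rw [show (H.map (algebraMap R K)).map j = (H.map (algebraMap R A)).map (algebraMap A F) from
    Matrix.ext fun i k ↦ hj (H i k)] at hM₀j
  exact ⟨_, U, hM₀, (hM₀j.of_mul_left (hMU ▸ hM)).of_map (IsFractionRing.injective A F), hMU⟩

theorem IsOrthogonalFor.exists_eq_mul [IsPrincipalIdealRing R] [Finite (MaximalSpectrum R)]
    (hA : HasIdempotentFactorization R A) (hdense : IsJacobsonDense R A)
    (hj : ∀ r, j (algebraMap R K r) = algebraMap A F (algebraMap R A r))
    {H : Matrix ι ι R} (hH : H.IsSymm) (hH_det : H.det ≠ 0) {M : Matrix ι ι F}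
    (hM : IsOrthogonalFor ((H.map (algebraMap R A)).map (algebraMap A F)) M) :
    ∃ (M₁ : Matrix ι ι K) (M₂ : Matrix ι ι A), IsOrthogonalFor (H.map (algebraMap R K)) M₁ ∧
      IsOrthogonalFor (H.map (algebraMap R A)) M₂ ∧ M = M₁.map j * M₂.map (algebraMap A F) := by
  have hu (r : R) (hr : r ≠ 0) : IsUnit (algebraMap A F (algebraMap R A r)) :=
    hj r ▸ (IsLocalization.map_units K
      (⟨r, mem_nonZeroDivisors_of_ne_zero hr⟩ : nonZeroDivisors R)).map j
  have hH_unit : IsUnit ((H.map (algebraMap R A)).map (algebraMap A F)) := by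
    rw [isUnit_iff_isUnit_det, ← RingHom.mapMatrix_apply, ← RingHom.mapMatrix_apply,
      ← RingHom.map_det, ← RingHom.map_det]
    exact hu _ hH_det
  obtain ⟨P, d, hP, hPH⟩ := exists_transpose_mul_mul_eq_diagonal hH
  have hPHA : (P.map (algebraMap R A))ᵀ * H.map (algebraMap R A) * P.map (algebraMap R A) =
      diagonal fun i ↦ algebraMap R A (d i) := by
    rw [← transpose_map, ← Matrix.map_mul, ← Matrix.map_mul, hPH, diagonal_map (map_zero _)]
  obtain ⟨S, hS, hSS, hMS⟩ := exists_isOrthogonalFor_mul_self_eq_one_isUnit_add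
    (fun x ↦ hA.exists_sign_isUnit_add hu x) (hP.map (algebraMap R A).mapMatrix) hPHA M
  have hSSF : S.map (algebraMap A F) * S.map (algebraMap A F) = 1 := by
    rw [← Matrix.map_mul, hSS, Matrix.map_one _ (map_zero _) (map_one _)]
  have h1MS : IsUnit (1 + M * S.map (algebraMap A F)) := by
    rw [← hSSF, ← add_mul, add_comm]
    exact hMS.mul (.of_mul_eq_one _ hSSF)
  obtain ⟨M₁, U, hM₁, hU, hMSU⟩ :=
    (hM.mul (hS.map (algebraMap A F))).exists_eq_mul_of_isUnit_one_add hA hdense hj hH hH_unit h1MS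
  refine ⟨M₁, U * S, hM₁, hU.mul hS, ?_⟩
  rw [Matrix.map_mul, ← Matrix.mul_assoc, ← hMSU, Matrix.mul_assoc, hSSF, Matrix.mul_one]

end Factorization

section HyperbolicSum

variable {R ι : Type*} [CommRing R] [Invertible (2 : R)] {G : Matrix ι ι R}

theorem isSymm_fromBlocks_invOf_two_smul (hG : G.IsSymm) :
    (fromBlocks G 0 0 (⅟(2 : R) • !![0, 1; 1, 0])).IsSymm :=
  hG.fromBlocks transpose_zero <| by
    ext i k
    fin_cases i <;> fin_cases k <;> rfl

theorem det_fromBlocks_invOf_two_smul_ne_zero [IsDomain R] [Fintype ι] [DecidableEq ι]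
    (hG : G.det ≠ 0) : (fromBlocks G 0 0 (⅟(2 : R) • !![0, 1; 1, 0])).det ≠ 0 := by
  rw [det_fromBlocks_zero₂₁]
  refine mul_ne_zero hG ?_
  simp [det_fin_two_of, (isUnit_of_invertible (⅟(2 : R))).ne_zero]

end HyperbolicSum

theorem orthogonal_group_factorization_completion_general
    {R : Type*} [CommRing R] [IsDomain R] [IsPrincipalIdealRing R]
    (hsemilocal : {I : Ideal R | I.IsMaximal}.Finite) [Invertible (2 : R)]
    {ι : Type*} [Fintype ι] [DecidableEq ι] (H : Matrix ι ι R) (hsymm : H.IsSymm)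
    (hnondeg : H.det ≠ 0)
    (hu : ∀ y : nonZeroDivisors R,
      IsUnit (algebraMap R (jacobsonCompletionFractions R) y))
    (M : Matrix ι ι (jacobsonCompletionFractions R))
    (hM : IsOrthogonalFor (H.map (algebraMap R (jacobsonCompletionFractions R))) M) :
    ∃ (M₁ : Matrix ι ι (FractionRing R)) (M₂ : Matrix ι ι (jacobsonCompletion R)),
      IsOrthogonalFor (H.map (algebraMap R (FractionRing R))) M₁ ∧
      IsOrthogonalFor (H.map (algebraMap R (jacobsonCompletion R))) M₂ ∧
      M = (M₁.map (IsLocalization.lift (M := nonZeroDivisors R)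
            (S := FractionRing R) hu)) *
          (M₂.map (algebraMap (jacobsonCompletion R) (jacobsonCompletionFractions R))) := by
  have : Finite {I : Ideal R // I.IsMaximal} := hsemilocal
  have : Finite (MaximalSpectrum R) := .of_equiv _ (MaximalSpectrum.equivSubtype R).symm
  have := nontrivial_jacobsonCompletion R
  exact IsOrthogonalFor.exists_eq_mul hasIdempotentFactorization_jacobsonCompletion
    (isJacobsonDense_jacobsonCompletion (IsNoetherian.noetherian _))
    (IsLocalization.lift_eq hu) hsymm hnondeg hM

set_option maxHeartbeats 1000000 in
theorem orthogonal_group_factorization_completion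
    {R : Type*} [CommRing R] [IsDomain R] [IsPrincipalIdealRing R]
    (hsemilocal : {I : Ideal R | I.IsMaximal}.Finite) [Invertible (2 : R)]
    (n : ℕ) (G : Matrix (Fin n) (Fin n) R) (hsymm : Gᵀ = G)
    (hnondeg : G.det ≠ 0)
    (hu : ∀ y : nonZeroDivisors R,
      IsUnit (algebraMap R (jacobsonCompletionFractions R) y))
    (G' : Matrix (Fin n ⊕ Fin 2) (Fin n ⊕ Fin 2) R)
    (hG' : G' = Matrix.fromBlocks G 0 0 ((⅟(2 : R)) • !![0, 1; 1, 0]))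
    (M : Matrix (Fin n ⊕ Fin 2) (Fin n ⊕ Fin 2) (jacobsonCompletionFractions R))
    (hM : IsOrthogonalFor (G'.map (algebraMap R (jacobsonCompletionFractions R))) M) :
    ∃ (M₁ : Matrix (Fin n ⊕ Fin 2) (Fin n ⊕ Fin 2) (FractionRing R))
      (M₂ : Matrix (Fin n ⊕ Fin 2) (Fin n ⊕ Fin 2) (jacobsonCompletion R)),
      IsOrthogonalFor (G'.map (algebraMap R (FractionRing R))) M₁ ∧
      IsOrthogonalFor (G'.map (algebraMap R (jacobsonCompletion R))) M₂ ∧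
      M = (M₁.map (IsLocalization.lift (M := nonZeroDivisors R)
            (S := FractionRing R) hu)) *
          (M₂.map (algebraMap (jacobsonCompletion R) (jacobsonCompletionFractions R))) := by
  subst hG'
  exact orthogonal_group_factorization_completion_general hsemilocal _
    (isSymm_fromBlocks_invOf_two_smul hsymm) (det_fromBlocks_invOf_two_smul_ne_zero hnondeg) hu M hM
end

section
/- Let R be a semilocal principal ideal domain with 2 invertible and K its fraction field. If q and q′ are quadratic forms over R with simple degeneration and multiplicity one that become isometric over K, then q and q′ are isometric over R. -/
/-!
STATEMENT 13: Let R be a semilocal principal ideal domain with 2 invertible and K its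
fraction field. If q and q′ are quadratic forms over R with simple degeneration and
multiplicity one that become isometric over K, then q and q′ are isometric over R.

Simple degeneration with multiplicity one: over each discrete valuation overring of R
(the localization at each nonzero maximal ideal) the form is isometric to a diagonal form
⟨u₁,…,u_{r−1}, u_r π⟩ with the u_j units and π a uniformizer.
-/

/-- A quadratic form over `A` has a diagonalization with simple degeneration of
multiplicity one: all diagonal entries are units except one, which is a unit times an
irreducible element (a uniformizer when `A` is a DVR). -/
def HasSimpleDegenerationMultOneDiag {A M : Type*} [CommRing A] [AddCommGroup M]
    [Module A M] (r : ℕ) (Q : QuadraticForm A M) : Prop :=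
  ∃ (w : Fin r → A) (j : Fin r),
    (∀ i, i ≠ j → IsUnit (w i)) ∧
    (∃ u π : A, IsUnit u ∧ Irreducible π ∧ w j = u * π) ∧
    Nonempty (Q.IsometryEquiv (QuadraticMap.weightedSumSquares A w))

/-!
Induct on the rank. In rank at least two no prime divides all values of `q`, so by the Chinese
remainder theorem `q` takes a unit value `u = q v`. The isometry over `K` gives `q' z = u * t ^ 2`
with `t ≠ 0`, and we may take `z` primitive at the primes dividing `t`. For a suitable lattice
vector `y`, the line through `y` and `z / t` meets the quadric `q' = u` in a second point `v'` that
is integral (Cassels–Pfister); such a `y` can be found prime by prime, since simple degeneration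
prevents `z` from being radical modulo a prime divisor of `t`. By Witt's theorem the isometry over
`K` can be corrected to carry `v` to `v'`, so it restricts to the orthogonal complements of `v` and
`v'`, while over `R` both forms split off `⟨u⟩`. In rank one the forms are `⟨a⟩` and `⟨a'⟩` with
`a` and `a'` squarefree and `a / a'` a square in `K`, hence the square of a unit of `R`.
-/

open QuadraticMap (polar polar_add_right polar_comm polar_self polar_smul_left polar_smul_right
  polar_sub_left polar_sub_right polar_zero_right)
open scoped TensorProduct

section Congruences

variable {R M : Type*} [CommRing R] [AddCommGroup M] [Module R M]

lemma exists_forall_sub_mem_smul_top_s13 {ι : Type*} [Finite ι] {I : ι → Ideal R}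
    (hI : Pairwise (Function.onFun IsCoprime I)) (y : ι → M) :
    ∃ x : M, ∀ i, x - y i ∈ I i • (⊤ : Submodule R M) := by
  obtain ⟨x, hx⟩ := Ideal.pi_tensorProductMk_quotient_surjective M I hI fun i => 1 ⊗ₜ[R] y i
  refine ⟨x, fun i => (Submodule.Quotient.eq _).1 ?_⟩
  simpa using congrArg (TensorProduct.quotTensorEquivQuotSMul M (I i)) (congrFun hx i)

lemma sub_mem_of_sub_mem_smul_top {N : M → R} (hN : ∀ a y m, a ∣ N (y + a • m) - N y)
    {I : Ideal R} {x y : M} (h : x - y ∈ I • (⊤ : Submodule R M)) : N x - N y ∈ I := by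
  suffices ∀ z ∈ I • (⊤ : Submodule R M), ∀ y, N (y + z) - N y ∈ I by
    simpa using this _ h y
  refine fun z hz => Submodule.smul_induction_on hz
    (fun a ha m _ y => I.mem_of_dvd (hN a y m) ha) fun z₁ z₂ h₁ h₂ y => ?_
  rw [← add_assoc, ← sub_add_sub_cancel _ (N (y + z₁))]
  exact I.add_mem (h₂ _) (h₁ y)

lemma exists_isUnit_of_forall_isMaximal [Finite (MaximalSpectrum R)] {N : M → R}
    (hN : ∀ a y m, a ∣ N (y + a • m) - N y)
    (h : ∀ I : Ideal R, I.IsMaximal → ∃ y, N y ∉ I) : ∃ y, IsUnit (N y) := by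
  choose y hy using fun I : MaximalSpectrum R => h I.asIdeal I.isMaximal
  have hcoprime : Pairwise (Function.onFun IsCoprime (MaximalSpectrum.asIdeal (R := R))) :=
    fun I J hIJ => Ideal.isCoprime_of_isMaximal fun h => hIJ (MaximalSpectrum.ext h)
  obtain ⟨x, hx⟩ := exists_forall_sub_mem_smul_top_s13 hcoprime y
  refine ⟨x, by_contra fun hnonunit => ?_⟩
  obtain ⟨I, hI, hxI⟩ := exists_max_ideal_of_mem_nonunits hnonunit
  exact hy ⟨I, hI⟩ ((I.sub_mem_iff_right hxI).1 (sub_mem_of_sub_mem_smul_top hN (hx ⟨I, hI⟩)))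

lemma exists_isUnit_of_forall_prime [IsDomain R] [IsPrincipalIdealRing R]
    [Finite (MaximalSpectrum R)] (hR : ¬IsField R) {N : M → R}
    (hN : ∀ a y m, a ∣ N (y + a • m) - N y) (h : ∀ p, Prime p → ∃ y, ¬p ∣ N y) :
    ∃ y, IsUnit (N y) := by
  refine exists_isUnit_of_forall_isMaximal hN fun I hI => ?_
  have hprime := Submodule.IsPrincipal.prime_generator_of_isPrime I
    (Ring.ne_bot_of_isMaximal_of_not_isField hI hR)
  obtain ⟨y, hy⟩ := h _ hprime
  exact ⟨y, mt (Submodule.IsPrincipal.mem_iff_generator_dvd I).1 hy⟩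

end Congruences

section Squarefree

variable {R : Type*} [CommRing R] [IsDomain R] [UniqueFactorizationMonoid R]

lemma dvd_of_sq_mul_eq_sq_mul {a b c d : R} (hb : Squarefree b) (hd : d ≠ 0)
    (h : c ^ 2 * b = d ^ 2 * a) : d ∣ c := by
  obtain ⟨d', c', g, hrel, rfl, rfl⟩ := UniqueFactorizationMonoid.exists_reduced_factors d hd c
  have hg : g ^ 2 ≠ 0 := pow_ne_zero 2 (left_ne_zero_of_mul hd)
  have hcancel : c' ^ 2 * b = d' ^ 2 * a := mul_left_cancel₀ hg (by linear_combination h)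
  have hdvd : d' ^ 2 ∣ b := (hrel.pow (m := 2) (n := 2)).dvd_of_dvd_mul_left ⟨a, hcancel⟩
  exact mul_dvd_mul_left g (hb d' (by rwa [← sq])).dvd

lemma exists_units_sq_mul_eq {a b c d : R} (ha : Squarefree a) (hb : Squarefree b) (hd : d ≠ 0)
    (h : c ^ 2 * b = d ^ 2 * a) : ∃ u : Rˣ, (u : R) ^ 2 * b = a := by
  have hc : c ≠ 0 := by
    rintro rfl
    exact mul_ne_zero (pow_ne_zero 2 hd) ha.ne_zero (by rw [← h]; ring)
  obtain ⟨u, rfl⟩ := associated_of_dvd_dvd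
    (dvd_of_sq_mul_eq_sq_mul hb hd h) (dvd_of_sq_mul_eq_sq_mul ha hc h.symm)
  exact ⟨u, mul_left_cancel₀ (pow_ne_zero 2 hd) (by linear_combination h)⟩

end Squarefree

section OrthogonalSplitting

variable {R M : Type*} [CommRing R] [AddCommGroup M] [Module R M]

lemma quadraticForm_smul_add_smul (q : QuadraticForm R M) (a b : R) (x y : M) :
    q (a • x + b • y) = a ^ 2 * q x + b ^ 2 * q y + a * b * polar q x y := by
  rw [QuadraticMap.map_add q (a • x) (b • y), QuadraticMap.map_smul, QuadraticMap.map_smul,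
    polar_smul_left, polar_smul_right]
  simp only [smul_eq_mul]
  ring

lemma dvd_quadraticForm_add_smul_sub (q : QuadraticForm R M) (a : R) (y m : M) :
    a ∣ q (y + a • m) - q y := by
  have := quadraticForm_smul_add_smul q 1 a y m
  rw [one_smul] at this
  exact ⟨a * q m + polar q y m, by linear_combination this⟩

/-- The submodule of vectors orthogonal to `v`. -/
def perp (q : QuadraticForm R M) (v : M) : Submodule R M := LinearMap.ker (q.polarBilin v)

@[simp] lemma mem_perp {q : QuadraticForm R M} {v x : M} : x ∈ perp q v ↔ polar q v x = 0 :=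
  LinearMap.mem_ker

lemma equivalent_prod_restrict_perp [Invertible (2 : R)] (q : QuadraticForm R M) {v : M}
    (hv : IsUnit (q v)) :
    ((q v • QuadraticMap.sq (R := R)).prod (q.restrict (perp q v))).Equivalent q := by
  have hvv : polar q v v = 2 * q v := by
    rw [polar_self, nsmul_eq_mul, Nat.cast_ofNat]
  have hunit : IsUnit (polar q v v) := hvv ▸ (isUnit_of_invertible 2).mul hv
  let sum : (R × perp q v) →ₗ[R] M := (LinearMap.toSpanSingleton R M v).coprod (perp q v).subtype
  have hsum (a : R) (y : perp q v) : sum (a, y) = a • v + y := by simp [sum]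
  have hpolar (a : R) (y : perp q v) : polar q v (sum (a, y)) = a * polar q v v := by
    rw [hsum, polar_add_right, polar_smul_right, mem_perp.1 y.2, smul_eq_mul, add_zero]
  have hinj : Function.Injective sum := by
    rw [injective_iff_map_eq_zero]
    rintro ⟨a, y⟩ h
    obtain rfl : a = 0 := by
      rw [← hunit.mul_left_eq_zero, ← hpolar a y, h, polar_zero_right]
    simpa [hsum] using h
  have hsurj : Function.Surjective sum := fun x => by
    obtain ⟨a, ha⟩ := hunit.dvd (a := polar q v x)
    refine ⟨(a, ⟨x - a • v, ?_⟩), by simp [hsum]⟩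
    rw [mem_perp, polar_sub_right, polar_smul_right, ha, smul_eq_mul, mul_comm, sub_self]
  refine ⟨⟨LinearEquiv.ofBijective sum ⟨hinj, hsurj⟩, fun ⟨a, y⟩ => ?_⟩⟩
  have := quadraticForm_smul_add_smul q a 1 v y
  rw [mem_perp.1 y.2, one_smul] at this
  change q (sum (a, y)) = q v * (a * a) + q y
  rw [hsum]
  linear_combination this

lemma finrank_perp_add_one [StrongRankCondition R] [Invertible (2 : R)] (q : QuadraticForm R M)
    {v : M} (hv : IsUnit (q v)) [Module.Free R (perp q v)] [Module.Finite R (perp q v)] :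
    Module.finrank R (perp q v) + 1 = Module.finrank R M := by
  obtain ⟨E⟩ := equivalent_prod_restrict_perp q hv
  rw [← E.toLinearEquiv.finrank_eq, Module.finrank_prod, Module.finrank_self, add_comm]

variable {M' : Type*} [AddCommGroup M'] [Module R M'] {q : QuadraticForm R M}
  {q' : QuadraticForm R M'}

lemma equivalent_of_equivalent_restrict_perp [Invertible (2 : R)] {v : M} {v' : M'}
    (hv : IsUnit (q v)) (h : q' v' = q v)
    (hperp : (q.restrict (perp q v)).Equivalent (q'.restrict (perp q' v'))) : q.Equivalent q' := by
  have hsplit := equivalent_prod_restrict_perp q hv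
  have hsplit' := equivalent_prod_restrict_perp q' (h ▸ hv)
  rw [h] at hsplit'
  exact hsplit.symm.trans ((QuadraticMap.Equivalent.prod (.refl _) hperp).trans hsplit')

lemma equivalent_of_unique_basis {ι : Type*} [Unique ι] (b : Module.Basis ι R M)
    (b' : Module.Basis ι R M') (u : Rˣ) (h : (u : R) ^ 2 * q' (b' default) = q (b default)) :
    q.Equivalent q' := by
  refine ⟨⟨b.equiv (b'.unitsSMul fun _ => u) (.refl ι), fun x => ?_⟩⟩
  obtain ⟨a, rfl⟩ : ∃ a : R, x = a • b default :=
    ⟨b.repr x default, by simpa using (b.sum_repr x).symm⟩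
  change q' (b.equiv (b'.unitsSMul fun _ => u) (.refl ι) (a • b default)) = _
  rw [map_smul, Module.Basis.equiv_apply, Module.Basis.unitsSMul_apply, Equiv.refl_apply,
    Units.smul_def, QuadraticMap.map_smul, QuadraticMap.map_smul, QuadraticMap.map_smul, ← h]
  simp only [smul_eq_mul]
  ring

end OrthogonalSplitting

section SimpleDegeneration

variable {R M M' : Type*} [CommRing R] [AddCommGroup M'] [Module R M'] [AddCommGroup M] [Module R M]

/-- Basis-free form of simple degeneration of multiplicity one at `p`: the radical of `q` modulo
`p` is the line spanned by a vector `e`, and `p ^ 2` does not divide `q e`. -/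
def HasSimpleDegenerationAt (q : QuadraticForm R M) (p : R) : Prop :=
  ∃ e : M, (∀ y, p ∣ polar q e y) ∧ ¬p ^ 2 ∣ q e ∧
    ∀ z, (∀ y, p ∣ polar q z y) → ∃ (a : R) (m : M), z = a • e + p • m

namespace HasSimpleDegenerationAt

lemma of_equivalent {q : QuadraticForm R M} {q' : QuadraticForm R M'} {p : R}
    (hq : HasSimpleDegenerationAt q p) (h : q.Equivalent q') : HasSimpleDegenerationAt q' p := by
  obtain ⟨E⟩ := h
  obtain ⟨e, he, hsq, hline⟩ := hq
  have hpolar (x y) : polar q' (E x) y = polar q x (E.symm y) := by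
    simp only [polar, ← E.map_app, map_add, E.apply_symm_apply]
  refine ⟨E e, fun y => hpolar e y ▸ he _, by rwa [E.map_app], fun z hz => ?_⟩
  obtain ⟨a, m, hzam⟩ := hline (E.symm z) fun y => by
    rw [← E.symm_apply_apply y, ← hpolar, E.apply_symm_apply]
    exact hz _
  exact ⟨a, E m, by rw [← E.apply_symm_apply z, hzam, map_add, map_smul, map_smul]⟩

lemma of_prod {Q₁ : QuadraticForm R M} {Q : QuadraticForm R M'} {p : R}
    (hQ₁ : ∀ x, (∀ y, p ∣ polar Q₁ x y) → ∃ m, x = p • m)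
    (h : HasSimpleDegenerationAt (Q₁.prod Q) p) : HasSimpleDegenerationAt Q p := by
  have hpolar (x y : M) (x' y' : M') :
      polar (Q₁.prod Q) (x, x') (y, y') = polar Q₁ x y + polar Q x' y' :=
    QuadraticMap.polar_prod Q₁ Q (x, x') (y, y')
  obtain ⟨⟨e₁, e⟩, he, hsq, hline⟩ := h
  obtain ⟨m₁, rfl⟩ := hQ₁ e₁ fun y => by simpa [hpolar] using he (y, 0)
  refine ⟨e, fun y => by simpa [hpolar] using he (0, y), fun hdvd => hsq ?_, fun z hz => ?_⟩
  · rw [QuadraticMap.prod_apply, QuadraticMap.map_smul, smul_eq_mul, ← pow_two]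
    exact (dvd_mul_right _ _).add hdvd
  · obtain ⟨a, m, hzam⟩ := hline (0, z) fun ⟨y, y'⟩ => by simpa [hpolar] using hz y'
    exact ⟨a, m.2, congrArg Prod.snd hzam⟩

lemma restrict_perp [Invertible (2 : R)] {q : QuadraticForm R M} {p : R}
    (h : HasSimpleDegenerationAt q p) {v : M} (hv : IsUnit (q v)) :
    HasSimpleDegenerationAt (q.restrict (perp q v)) p := by
  refine of_prod (fun x hx => ?_) (h.of_equivalent (equivalent_prod_restrict_perp q hv).symm)
  have hpolar : polar (q v • QuadraticMap.sq : QuadraticForm R R) x 1 = 2 * q v * x := by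
    simp only [polar, smul_apply, QuadraticMap.sq_apply, smul_eq_mul]
    ring
  obtain ⟨m, hm⟩ := ((isUnit_of_invertible 2).mul hv).dvd_mul_left.1 (hpolar ▸ hx 1)
  exact ⟨m, hm⟩

/-- A radical vector modulo `p` is `a • e` modulo `p`, so `p ^ 2 ∣ q z` forces `p ∣ a`. -/
lemma exists_eq_smul [IsDomain R] {q : QuadraticForm R M} {p : R} (h : HasSimpleDegenerationAt q p)
    (hp : Prime p) {z : M} (hz : ∀ y, p ∣ polar q z y) (hqz : p ^ 2 ∣ q z) :
    ∃ m, z = p • m := by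
  obtain ⟨e, he, hsq, hline⟩ := h
  obtain ⟨a, m, rfl⟩ := hline z hz
  obtain ⟨b, hb⟩ := he m
  have hae : p ^ 2 ∣ a ^ 2 * q e := by
    have hexpand : q (a • e + p • m) = a ^ 2 * q e + p ^ 2 * (q m + a * b) := by
      rw [quadraticForm_smul_add_smul, hb]
      ring
    exact (dvd_add_left (dvd_mul_right _ _)).1 (hexpand ▸ hqz)
  obtain ⟨c, rfl⟩ : p ∣ a := by_contra fun hpa =>
    hsq (hp.pow_dvd_of_dvd_mul_left 2 (mt hp.dvd_of_dvd_pow hpa) hae)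
  exact ⟨c • e + m, by rw [smul_add, smul_smul]⟩

lemma exists_not_dvd {ι : Type*} [Nontrivial ι] (b : Module.Basis ι R M) {q : QuadraticForm R M}
    {p : R} (h : HasSimpleDegenerationAt q p) (hp : ¬IsUnit p) : ∃ v, ¬p ∣ q v := by
  by_contra! hdvd
  obtain ⟨e, -, -, hline⟩ := h
  have hrep (z : M) : ∃ (a : R) (m : M), z = a • e + p • m :=
    hline z fun y => dvd_sub (dvd_sub (hdvd (z + y)) (hdvd z)) (hdvd y)
  -- modulo `p` every vector is a multiple of `e`, so its minors against `e` vanish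
  have hminor (z : M) (i j : ι) : p ∣ b.repr e j * b.repr z i - b.repr e i * b.repr z j := by
    obtain ⟨a, m, rfl⟩ := hrep z
    refine ⟨b.repr e j * b.repr m i - b.repr e i * b.repr m j, ?_⟩
    simp only [map_add, map_smul, Finsupp.add_apply, Finsupp.smul_apply, smul_eq_mul]
    ring
  have hcoord (j : ι) : p ∣ b.repr e j := by
    obtain ⟨i, hij⟩ := exists_ne j
    simpa [hij] using hminor (b i) i j
  obtain ⟨i⟩ := (inferInstance : Nonempty ι)
  obtain ⟨a, m, hi⟩ := hrep (b i)
  have hone : 1 = a * b.repr e i + p * b.repr m i := by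
    simpa using congrArg (fun x => b.repr x i) hi
  exact hp (isUnit_of_dvd_one (hone ▸ ((hcoord i).mul_left a).add (dvd_mul_right _ _)))

lemma weightedSumSquares {ι : Type*} [Fintype ι] [IsDomain R] [Invertible (2 : R)]
    {w : ι → R} {j : ι} {p : R} (hw : ∀ i ≠ j, IsUnit (w i)) (hp : Irreducible p)
    (hj : Associated p (w j)) :
    HasSimpleDegenerationAt (QuadraticMap.weightedSumSquares R w) p := by
  classical
  have hpolar (x : ι → R) (i : ι) :
      polar (QuadraticMap.weightedSumSquares R w) x (Pi.single i 1) = 2 * w i * x i := by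
    simp only [polar, QuadraticMap.weightedSumSquares_apply, ← Finset.sum_sub_distrib]
    rw [Finset.sum_eq_single i]
    · simp
      ring
    · intro k _ hk
      simp [hk]
    · simp
  refine ⟨Pi.single j 1, fun y => ?_, ?_, fun z hz => ?_⟩
  · rw [polar_comm, hpolar]
    exact (hj.dvd.mul_left 2).mul_right _
  · have : QuadraticMap.weightedSumSquares R w (Pi.single j 1) = w j := by
      simp [QuadraticMap.weightedSumSquares_apply, Pi.single_apply]
    rw [this, pow_two, ← hj.dvd_iff_dvd_right]
    exact fun h => hp.not_isUnit (hp.squarefree p h)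
  · have hdvd (i : ι) (hi : i ≠ j) : p ∣ z i :=
      ((isUnit_of_invertible 2).mul (hw i hi)).dvd_mul_left.1 (hpolar z i ▸ hz _)
    choose! m hm using hdvd
    refine ⟨z j, Function.update m j 0, funext fun i => ?_⟩
    obtain rfl | hi := eq_or_ne i j
    · simp
    · simp [hi, hm i hi]

end HasSimpleDegenerationAt

end SimpleDegeneration

section Localization

variable {R M : Type*} [CommRing R] [AddCommGroup M] [Module R M]

lemma mem_of_apply_mem_localized' {A M' : Type*} [CommRing A] [Algebra R A] [AddCommGroup M']
    [Module R M'] [Module A M'] [IsScalarTower R A M'] (I : Ideal R) [I.IsMaximal]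
    [IsLocalization I.primeCompl A] {f : M →ₗ[R] M'} [IsLocalizedModule I.primeCompl f]
    {N : Submodule R M} (hN : I • ⊤ ≤ N) {z : M} (hz : f z ∈ N.localized' A I.primeCompl f) :
    z ∈ N := by
  obtain ⟨m, hm, s, hs⟩ := hz
  obtain ⟨c, hc⟩ : ∃ c : I.primeCompl, c • s • z = c • m := by
    apply IsLocalizedModule.exists_of_eq (S := I.primeCompl) (f := f)
    rw [Submonoid.smul_def, map_smul, ← Submonoid.smul_def]
    exact (IsLocalizedModule.mk'_eq_iff.1 hs).symm
  obtain ⟨y, i, hi, hyi⟩ := Ideal.IsMaximal.exists_inv ‹_› (c * s).2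
  have hcz : ((c * s : I.primeCompl) : R) • z ∈ N := by
    rw [← Submonoid.smul_def, mul_smul, hc]
    exact N.smul_mem c hm
  rw [← one_smul R z, ← hyi, add_smul, mul_smul]
  exact N.add_mem (N.smul_mem y hcz) (hN (Submodule.smul_mem_smul hi Submodule.mem_top))

lemma dvd_of_algebraMap_dvd_algebraMap {A : Type*} [CommRing A] [Algebra R A] {p x : R}
    [(Ideal.span {p}).IsPrime] [IsLocalization.AtPrime A (Ideal.span {p})]
    (h : algebraMap R A p ∣ algebraMap R A x) : p ∣ x := by
  by_contra hpx
  have hx : IsUnit (algebraMap R A x) := (IsLocalization.AtPrime.isUnit_to_map_iff A _ x).2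
    (mt Ideal.mem_span_singleton.1 hpx)
  exact (IsLocalization.AtPrime.isUnit_to_map_iff A (Ideal.span {p}) p).1 (isUnit_of_dvd_unit h hx)
    (Ideal.mem_span_singleton_self p)

variable [Invertible (2 : R)] {A : Type*} [CommRing A] [Algebra R A]

lemma quadraticForm_baseChange_one_tmul (q : QuadraticForm R M) (x : M) :
    q.baseChange A (1 ⊗ₜ[R] x) = algebraMap R A (q x) := by
  rw [QuadraticForm.baseChange_tmul, mul_one, Algebra.algebraMap_eq_smul_one]

lemma polar_baseChange_one_tmul (q : QuadraticForm R M) (x y : M) :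
    polar (q.baseChange A) (1 ⊗ₜ[R] x) (1 ⊗ₜ[R] y) = algebraMap R A (polar q x y) := by
  simp only [polar, ← TensorProduct.tmul_add, quadraticForm_baseChange_one_tmul, map_sub]

lemma algebraMap_dvd_polar_baseChange {q : QuadraticForm R M} {p : R} {z : M}
    (hz : ∀ y, p ∣ polar q z y) (Y : A ⊗[R] M) :
    algebraMap R A p ∣ polar (q.baseChange A) (1 ⊗ₜ[R] z) Y := by
  induction Y using TensorProduct.induction_on with
  | zero => simp
  | tmul a y =>
    rw [← mul_one a, ← smul_eq_mul, ← TensorProduct.smul_tmul', polar_smul_right,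
      polar_baseChange_one_tmul]
    exact ((map_dvd (algebraMap R A) (hz y)).mul_left a)
  | add Y₁ Y₂ h₁ h₂ => exact polar_add_right (q.baseChange A) _ Y₁ Y₂ ▸ h₁.add h₂

namespace HasSimpleDegenerationAt

lemma of_baseChange {q : QuadraticForm R M} {p : R} [(Ideal.span {p}).IsMaximal]
    [IsLocalization.AtPrime A (Ideal.span {p})]
    (h : HasSimpleDegenerationAt (q.baseChange A) (algebraMap R A p)) :
    HasSimpleDegenerationAt q p := by
  let S := (Ideal.span {p}).primeCompl
  obtain ⟨E, hE, hsq, hline⟩ := h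
  obtain ⟨⟨e, s⟩, hes : (s : R) • E = 1 ⊗ₜ[R] e⟩ :=
    IsLocalizedModule.surj S (TensorProduct.mk R A M 1) E
  rw [← algebraMap_smul A] at hes
  have hs : IsUnit (algebraMap R A s) := IsLocalization.map_units A s
  refine ⟨e, fun y => ?_, fun hdvd => ?_, fun z hz => ?_⟩
  · apply dvd_of_algebraMap_dvd_algebraMap (A := A)
    rw [← polar_baseChange_one_tmul, ← hes, polar_smul_left]
    exact (hE _).mul_left _
  · have := map_dvd (algebraMap R A) hdvd
    rw [map_pow, ← quadraticForm_baseChange_one_tmul, ← hes, QuadraticMap.map_smul, smul_eq_mul,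
      (hs.mul hs).dvd_mul_left] at this
    exact hsq this
  · let N : Submodule R M := R ∙ e ⊔ Ideal.span {p} • ⊤
    suffices z ∈ N by
      obtain ⟨_, ha, _, hm, rfl⟩ := Submodule.mem_sup.1 this
      obtain ⟨a, rfl⟩ := Submodule.mem_span_singleton.1 ha
      rw [Submodule.ideal_span_singleton_smul] at hm
      obtain ⟨m, -, rfl⟩ := hm
      exact ⟨a, m, rfl⟩
    refine mem_of_apply_mem_localized' (A := A) (f := TensorProduct.mk R A M 1) (Ideal.span {p})
      le_sup_right ?_
    have hN {m : M} (hm : m ∈ N) : (1 : A) ⊗ₜ[R] m ∈ N.localized' A S (TensorProduct.mk R A M 1) :=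
      Submodule.map_le_localized₀ S _ N (Submodule.mem_map_of_mem hm)
    obtain ⟨α, m, hzαm⟩ := hline _ (algebraMap_dvd_polar_baseChange hz)
    rw [TensorProduct.mk_apply, hzαm]
    refine add_mem (Submodule.smul_mem _ α ?_) ?_
    · rw [← Submodule.smul_mem_iff_of_isUnit _ hs, hes]
      exact hN (Submodule.mem_sup_left (Submodule.mem_span_singleton_self e))
    · obtain ⟨⟨m₀, t⟩, ht : (t : R) • m = 1 ⊗ₜ[R] m₀⟩ :=
        IsLocalizedModule.surj S (TensorProduct.mk R A M 1) m
      rw [← Submodule.smul_mem_iff_of_isUnit _ (IsLocalization.map_units A t), smul_comm,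
        algebraMap_smul, algebraMap_smul, ht, ← TensorProduct.tmul_smul]
      exact hN (Submodule.mem_sup_right
        (Submodule.smul_mem_smul (Ideal.mem_span_singleton_self p) Submodule.mem_top))

lemma of_diag [IsDomain R] [IsDiscreteValuationRing R] {n : ℕ} {q : QuadraticForm R M} {p : R}
    (hp : Irreducible p) (h : HasSimpleDegenerationMultOneDiag n q) :
    HasSimpleDegenerationAt q p := by
  obtain ⟨w, j, hw, ⟨u, π, hu, hπ, hj⟩, hE⟩ := h
  refine (weightedSumSquares hw hp ?_).of_equivalent (QuadraticMap.Equivalent.symm hE)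
  rw [hj]
  exact (IsDiscreteValuationRing.associated_of_irreducible R hp hπ).trans
    (associated_unit_mul_left π u hu).symm

lemma of_localization [IsDomain R] [IsPrincipalIdealRing R] {n : ℕ} {q : QuadraticForm R M}
    (hq : ∀ P : Ideal R, (hP : P.IsMaximal) → P ≠ ⊥ →
      haveI := hP.isPrime
      HasSimpleDegenerationMultOneDiag n (q.baseChange (Localization.AtPrime P)))
    {p : R} (hp : Prime p) : HasSimpleDegenerationAt q p := by
  have hmax := PrincipalIdealRing.isMaximal_of_irreducible hp.irreducible
  have hbot : Ideal.span {p} ≠ ⊥ := mt Ideal.span_singleton_eq_bot.1 hp.ne_zero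
  let A := Localization.AtPrime (Ideal.span {p})
  have : IsDiscreteValuationRing A :=
    IsLocalization.AtPrime.isDiscreteValuationRing_of_dedekind_domain R hbot A
  have : Invertible (2 : A) :=
    (Invertible.map (algebraMap R A) 2).copy 2 (map_ofNat (algebraMap R A) 2).symm
  have hirr : Irreducible (algebraMap R A p) := by
    rw [IsDiscreteValuationRing.irreducible_iff_uniformizer,
      ← Localization.AtPrime.map_eq_maximalIdeal, Ideal.map_span, Set.image_singleton]
  exact of_baseChange (of_diag hirr (hq _ hmax hbot))

end HasSimpleDegenerationAt

end Localization

section Representation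

variable {R M : Type*} [CommRing R] [AddCommGroup M] [Module R M]

/-- Cassels–Pfister step. The line through `y` and `z / t` meets the quadric `q = u` in a second
point, whose denominator is `t * q (y - z / t) = t * (u + q y) - polar q z y`. -/
lemma exists_map_eq_of_isUnit {q : QuadraticForm R M} {u t : R} {y z : M} (hz : q z = u * t ^ 2)
    (h : IsUnit (t * (u + q y) - polar q z y)) : ∃ x, q x = u := by
  obtain ⟨w, hw⟩ := h.exists_left_inv
  refine ⟨(1 - (q y - u) * w * t) • y + ((q y - u) * w) • z, ?_⟩
  rw [quadraticForm_smul_add_smul, hz, polar_comm]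
  linear_combination ((q y - u) * (q y - u) * w * t - (q y - u)) * hw

lemma exists_primitive_representation [IsDomain R] [UniqueFactorizationMonoid R]
    {q : QuadraticForm R M} {u t : R} {z : M} (ht : t ≠ 0) (hz : q z = u * t ^ 2) :
    ∃ (s : R) (x : M), q x = u * s ^ 2 ∧ ∀ p, Prime p → p ∣ s → ¬∃ m, x = p • m := by
  obtain ⟨s, ⟨hs, x, hx⟩, hmin⟩ := wellFounded_dvdNotUnit.has_min
    {t : R | t ≠ 0 ∧ ∃ z, q z = u * t ^ 2} ⟨t, ht, z, hz⟩
  refine ⟨s, x, hx, ?_⟩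
  rintro p hp ⟨c, rfl⟩ ⟨m, rfl⟩
  have hc : c ≠ 0 := right_ne_zero_of_mul hs
  refine hmin c ⟨hc, m, mul_left_cancel₀ (pow_ne_zero 2 hp.ne_zero) ?_⟩
    ⟨hc, p, hp.not_isUnit, mul_comm p c⟩
  rw [QuadraticMap.map_smul, smul_eq_mul] at hx
  linear_combination hx

variable [IsDomain R] [IsPrincipalIdealRing R] [Finite (MaximalSpectrum R)]

lemma exists_isUnit_mul_add_sub_polar (hR : ¬IsField R)
    {q : QuadraticForm R M} (hq : ∀ p, Prime p → HasSimpleDegenerationAt q p) {u t : R} {z : M}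
    (hu : IsUnit u) (hz : q z = u * t ^ 2) (hprim : ∀ p, Prime p → p ∣ t → ¬∃ m, z = p • m) :
    ∃ y, IsUnit (t * (u + q y) - polar q z y) := by
  refine exists_isUnit_of_forall_prime hR (fun a y m => ?_) fun p hp => ?_
  · obtain ⟨b, hb⟩ := dvd_quadraticForm_add_smul_sub q a y m
    refine ⟨t * b - polar q z m, ?_⟩
    rw [polar_add_right, polar_smul_right, smul_eq_mul]
    linear_combination t * hb
  · by_cases hpt : p ∣ t
    · by_contra! hdvd
      -- `z` is radical modulo `p`, since the expression is `-polar q z y` modulo `p`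
      have hrad (y : M) : p ∣ polar q z y := by
        simpa using dvd_sub (hpt.mul_right (u + q y)) (hdvd y)
      exact hprim p hp hpt
        ((hq p hp).exists_eq_smul hp hrad (hz ▸ (pow_dvd_pow_of_dvd hpt 2).mul_left u))
    · refine ⟨0, ?_⟩
      rwa [QuadraticMap.map_zero, polar_zero_right, add_zero, sub_zero, hu.dvd_mul_right]

lemma exists_map_eq_of_map_eq_mul_sq (hR : ¬IsField R)
    {q : QuadraticForm R M} (hq : ∀ p, Prime p → HasSimpleDegenerationAt q p) {u t : R} {z : M}
    (hu : IsUnit u) (ht : t ≠ 0) (hz : q z = u * t ^ 2) : ∃ x, q x = u := by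
  obtain ⟨s, x, hx, hprim⟩ := exists_primitive_representation ht hz
  obtain ⟨y, hy⟩ := exists_isUnit_mul_add_sub_polar hR hq hu hx hprim
  exact exists_map_eq_of_isUnit hx hy

end Representation

section RationalIsometry

variable {R M M' : Type*} [CommRing R] [AddCommGroup M'] [Module R M'] [AddCommGroup M] [Module R M]

/-- A linear map over the fraction field that pulls `q'` back to `q`, encoded without denominators:
it is `denom⁻¹ • toLinearMap`. -/
structure RationalIsometry (q : QuadraticForm R M) (q' : QuadraticForm R M') where
  toLinearMap : M →ₗ[R] M'
  denom : R
  denom_ne_zero : denom ≠ 0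
  map_app (x : M) : q' (toLinearMap x) = denom ^ 2 * q x

/-- The reflection in the hyperplane orthogonal to `w`, multiplied by `q w`. -/
def scaledReflection (q : QuadraticForm R M) (w : M) : M →ₗ[R] M :=
  q w • LinearMap.id - (q.polarBilin w).smulRight w

lemma scaledReflection_apply (q : QuadraticForm R M) (w x : M) :
    scaledReflection q w x = q w • x - polar q w x • w := rfl

lemma map_scaledReflection (q : QuadraticForm R M) (w x : M) :
    q (scaledReflection q w x) = q w ^ 2 * q x := by
  rw [scaledReflection_apply, sub_eq_add_neg, ← neg_smul, quadraticForm_smul_add_smul, polar_comm]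
  ring

lemma scaledReflection_sub_apply {q : QuadraticForm R M} {x y : M} (h : q x = q y) :
    scaledReflection q (x - y) x = q (x - y) • y := by
  have hpolar : polar q (x - y) x = q (x - y) := by
    have := quadraticForm_smul_add_smul q 1 (-1) x y
    rw [one_smul, neg_one_smul, ← sub_eq_add_neg] at this
    rw [polar_sub_left, polar_self, polar_comm q y x, this, nsmul_eq_mul]
    push_cast
    linear_combination h
  rw [scaledReflection_apply, hpolar, ← smul_sub, sub_sub_cancel]

namespace RationalIsometry

variable {q : QuadraticForm R M} {q' : QuadraticForm R M'}

lemma polar_map_app (F : RationalIsometry q q') (x y : M) :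
    polar q' (F.toLinearMap x) (F.toLinearMap y) = F.denom ^ 2 * polar q x y := by
  simp only [polar, ← map_add, F.map_app]
  ring

/-- The negative of a rational isometry, encoded by changing the sign of the denominator. -/
def negDenom (F : RationalIsometry q q') : RationalIsometry q q' where
  __ := F
  denom := -F.denom
  denom_ne_zero := neg_ne_zero.2 F.denom_ne_zero
  map_app x := by rw [neg_sq, F.map_app]

variable [IsDomain R]

/-- A rational isometry followed by the reflection of `q'` in the hyperplane orthogonal to `w`. -/
def reflect (F : RationalIsometry q q') (w : M') (hw : q' w ≠ 0) : RationalIsometry q q' where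
  toLinearMap := scaledReflection q' w ∘ₗ F.toLinearMap
  denom := q' w * F.denom
  denom_ne_zero := mul_ne_zero hw F.denom_ne_zero
  map_app x := by
    rw [LinearMap.comp_apply, map_scaledReflection, F.map_app]
    ring

lemma exists_apply_eq_of_map_sub_ne_zero (F : RationalIsometry q q') {v : M} {v' : M'}
    (h : q v = q' v') (hne : q' (F.toLinearMap v - F.denom • v') ≠ 0) :
    ∃ G : RationalIsometry q q', G.toLinearMap v = G.denom • v' := by
  refine ⟨F.reflect _ hne, ?_⟩
  have hmap : q' (F.toLinearMap v) = q' (F.denom • v') := by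
    rw [F.map_app, QuadraticMap.map_smul, h, smul_eq_mul, pow_two]
  change scaledReflection q' _ (F.toLinearMap v) = (_ * _) • v'
  rw [scaledReflection_sub_apply hmap, mul_smul]

/-- Witt's theorem for vectors: for `x` and `y` of equal nonzero length, one of `x - y` and `x + y`
is anisotropic, and the corresponding reflection carries `x` to `± y`. -/
lemma exists_apply_eq [Invertible (2 : R)] (F : RationalIsometry q q') {v : M} {v' : M'}
    (hv : q v ≠ 0) (h : q v = q' v') :
    ∃ G : RationalIsometry q q', G.toLinearMap v = G.denom • v' := by
  by_cases hsub : q' (F.toLinearMap v - F.denom • v') = 0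
  · refine F.negDenom.exists_apply_eq_of_map_sub_ne_zero h fun hadd => ?_
    change q' (F.toLinearMap v - (-F.denom) • v') = 0 at hadd
    have h₁ := quadraticForm_smul_add_smul q' 1 (-F.denom) (F.toLinearMap v) v'
    have h₂ := quadraticForm_smul_add_smul q' 1 F.denom (F.toLinearMap v) v'
    rw [one_smul, neg_smul, ← sub_eq_add_neg, hsub, F.map_app] at h₁
    rw [one_smul, ← sub_neg_eq_add, ← neg_smul, hadd, F.map_app] at h₂
    have h2 : (2 : R) ≠ 0 := (isUnit_of_invertible 2).ne_zero
    refine mul_ne_zero (mul_ne_zero h2 h2) (mul_ne_zero (pow_ne_zero 2 F.denom_ne_zero) hv) ?_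
    linear_combination -h₁ - h₂ + 2 * F.denom ^ 2 * h
  · exact F.exists_apply_eq_of_map_sub_ne_zero h hsub

/-- The rational isometry induced between the orthogonal complements of `v` and its image `v'`. -/
def restrictPerp (F : RationalIsometry q q') {v : M} {v' : M'}
    (h : F.toLinearMap v = F.denom • v') :
    RationalIsometry (q.restrict (perp q v)) (q'.restrict (perp q' v')) where
  __ := F
  toLinearMap := F.toLinearMap.restrict fun x hx => by
    rw [mem_perp] at hx ⊢
    refine (mul_eq_zero_iff_left F.denom_ne_zero).1 ?_
    rw [← smul_eq_mul, ← polar_smul_left, ← h, F.polar_map_app, hx, mul_zero]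
  map_app x := F.map_app x

lemma nonempty_of_baseChange [Invertible (2 : R)] {K : Type*} [Field K] [Algebra R K]
    [IsFractionRing R K] [Module.FinitePresentation R M]
    (h : (q.baseChange K).Equivalent (q'.baseChange K)) : Nonempty (RationalIsometry q q') := by
  obtain ⟨E⟩ := h
  let S := nonZeroDivisors R
  obtain ⟨F, s, hF⟩ := Module.FinitePresentation.exists_lift_of_isLocalizedModule S
    (TensorProduct.mk R K M' 1)
    (E.toLinearEquiv.toLinearMap.restrictScalars R ∘ₗ TensorProduct.mk R K M 1)
  refine ⟨F, s, nonZeroDivisors.coe_ne_zero s, fun x => IsFractionRing.injective R K ?_⟩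
  have hFx : (1 : K) ⊗ₜ[R] F x = algebraMap R K s • E (1 ⊗ₜ[R] x) := by
    rw [algebraMap_smul]
    exact LinearMap.congr_fun hF x
  rw [← quadraticForm_baseChange_one_tmul, hFx, QuadraticMap.map_smul, E.map_app,
    quadraticForm_baseChange_one_tmul, map_mul, map_pow, smul_eq_mul, pow_two]

end RationalIsometry

end RationalIsometry

section LocalGlobal

variable {R M M' : Type*} [CommRing R] [IsDomain R] [IsPrincipalIdealRing R]
  [AddCommGroup M] [Module R M] [AddCommGroup M'] [Module R M']

lemma squarefree_of_hasSimpleDegenerationAt {ι : Type*} [Unique ι] (hR : ¬IsField R)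
    (b : Module.Basis ι R M) {q : QuadraticForm R M}
    (hq : ∀ p, Prime p → HasSimpleDegenerationAt q p) : Squarefree (q (b default)) := by
  have hsq (p : R) (hp : Prime p) : ¬p ^ 2 ∣ q (b default) := by
    obtain ⟨e, -, he, -⟩ := hq p hp
    obtain ⟨a, rfl⟩ : ∃ a : R, e = a • b default :=
      ⟨b.repr e default, by simpa using (b.sum_repr e).symm⟩
    rw [QuadraticMap.map_smul, smul_eq_mul] at he
    exact fun h => he (h.mul_left _)
  obtain ⟨I, hI, hprime⟩ := Ring.not_isField_iff_exists_prime.1 hR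
  have hgen := Submodule.IsPrincipal.prime_generator_of_isPrime I hI
  have hne : q (b default) ≠ 0 := fun h => hsq _ hgen (h ▸ dvd_zero _)
  rw [squarefree_iff_irreducible_sq_not_dvd_of_ne_zero hne]
  exact fun p hp => by simpa [pow_two] using hsq p hp.prime

namespace RationalIsometry

variable {q : QuadraticForm R M} {q' : QuadraticForm R M'}

lemma equivalent_of_unique {ι : Type*} [Unique ι] (hR : ¬IsField R) (b : Module.Basis ι R M)
    (b' : Module.Basis ι R M') (hq : ∀ p, Prime p → HasSimpleDegenerationAt q p)
    (hq' : ∀ p, Prime p → HasSimpleDegenerationAt q' p) (F : RationalIsometry q q') :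
    q.Equivalent q' := by
  obtain ⟨c, hc⟩ : ∃ c : R, F.toLinearMap (b default) = c • b' default :=
    ⟨b'.repr (F.toLinearMap (b default)) default, by simpa using (b'.sum_repr _).symm⟩
  have hF := F.map_app (b default)
  rw [hc, QuadraticMap.map_smul, smul_eq_mul, ← pow_two] at hF
  obtain ⟨u, hu⟩ := exists_units_sq_mul_eq (squarefree_of_hasSimpleDegenerationAt hR b hq)
    (squarefree_of_hasSimpleDegenerationAt hR b' hq') F.denom_ne_zero hF
  exact equivalent_of_unique_basis b b' u hu

variable [Finite (MaximalSpectrum R)] [Invertible (2 : R)]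

lemma exists_apply_eq_of_isUnit (hR : ¬IsField R)
    (hq' : ∀ p, Prime p → HasSimpleDegenerationAt q' p) (F : RationalIsometry q q') {v : M}
    (hv : IsUnit (q v)) :
    ∃ (v' : M') (G : RationalIsometry q q'), q' v' = q v ∧ G.toLinearMap v = G.denom • v' := by
  obtain ⟨v', hv'⟩ := exists_map_eq_of_map_eq_mul_sq hR hq' hv F.denom_ne_zero
    ((F.map_app v).trans (mul_comm _ _))
  obtain ⟨G, hG⟩ := F.exists_apply_eq hv.ne_zero hv'.symm
  exact ⟨v', G, hv', hG⟩

theorem equivalent [Module.Free R M] [Module.Finite R M] [Module.Free R M'] [Module.Finite R M']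
    (hR : ¬IsField R) (hrank : Module.finrank R M = Module.finrank R M')
    (hq : ∀ p, Prime p → HasSimpleDegenerationAt q p)
    (hq' : ∀ p, Prime p → HasSimpleDegenerationAt q' p) (F : RationalIsometry q q') :
    q.Equivalent q' := by
  induction hn : Module.finrank R M generalizing M M' with
  | zero =>
    have := Module.finrank_zero_iff.1 hn
    have := Module.finrank_zero_iff.1 (hrank ▸ hn)
    exact ⟨⟨0, fun x => by simp [Subsingleton.elim x 0]⟩⟩
  | succ n ih =>
    obtain rfl | hpos := n.eq_zero_or_pos
    · exact F.equivalent_of_unique hR (Module.basisUnique Unit hn)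
        (Module.basisUnique Unit (hrank ▸ hn)) hq hq'
    have : Nontrivial (Fin (Module.finrank R M)) := Fin.nontrivial_iff_two_le.2 (by omega)
    obtain ⟨v, hv⟩ := exists_isUnit_of_forall_prime hR (dvd_quadraticForm_add_smul_sub q)
      fun p hp => (hq p hp).exists_not_dvd (Module.finBasis R M) hp.not_isUnit
    obtain ⟨v', G, hv', hG⟩ := F.exists_apply_eq_of_isUnit hR hq' hv
    have hfinrank := finrank_perp_add_one q hv
    have hfinrank' := finrank_perp_add_one q' (hv' ▸ hv)
    exact equivalent_of_equivalent_restrict_perp hv hv' (ih (by omega)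
      (fun p hp => (hq p hp).restrict_perp hv) (fun p hp => (hq' p hp).restrict_perp (hv' ▸ hv))
      (G.restrictPerp hG) (by omega))

end RationalIsometry

end LocalGlobal

section BijectiveBaseChange

variable {R A M M' : Type*} [CommRing R] [CommRing A] [Algebra R A] [AddCommGroup M] [Module R M]
  [AddCommGroup M'] [Module R M']

lemma exists_linearEquiv_apply_eq_one_tmul (hA : Function.Bijective (algebraMap R A)) :
    ∃ E : M ≃ₗ[R] A ⊗[R] M, ∀ x, E x = 1 ⊗ₜ[R] x :=
  ⟨(TensorProduct.lid R M).symm ≪≫ₗ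
      LinearEquiv.rTensor M (LinearEquiv.ofBijective (Algebra.linearMap R A) hA),
    fun x => congrArg (· ⊗ₜ[R] x) (map_one (algebraMap R A))⟩

lemma equivalent_of_baseChange_of_bijective [Invertible (2 : R)] {q : QuadraticForm R M}
    {q' : QuadraticForm R M'} (hA : Function.Bijective (algebraMap R A))
    (h : (q.baseChange A).Equivalent (q'.baseChange A)) : q.Equivalent q' := by
  obtain ⟨E⟩ := h
  obtain ⟨B, hB⟩ := exists_linearEquiv_apply_eq_one_tmul (M := M) hA
  obtain ⟨B', hB'⟩ := exists_linearEquiv_apply_eq_one_tmul (M := M') hA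
  let F : M ≃ₗ[R] M' := B ≪≫ₗ E.toLinearEquiv.restrictScalars R ≪≫ₗ B'.symm
  have hF (x : M) : 1 ⊗ₜ[R] F x = E (1 ⊗ₜ[R] x) := by
    rw [← hB', ← hB]
    exact B'.apply_symm_apply _
  refine ⟨⟨F, fun x => hA.injective ?_⟩⟩
  change algebraMap R A (q' (F x)) = _
  rw [← quadraticForm_baseChange_one_tmul, hF, E.map_app, quadraticForm_baseChange_one_tmul]

end BijectiveBaseChange

theorem isometric_of_isometric_over_fractions_general {R K M M' : Type*} [CommRing R] [IsDomain R]
    [IsPrincipalIdealRing R] [Finite (MaximalSpectrum R)] [Invertible (2 : R)]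
    [Field K] [Algebra R K] [IsFractionRing R K]
    [AddCommGroup M] [Module R M] [Module.Free R M] [Module.Finite R M]
    [AddCommGroup M'] [Module R M'] [Module.Free R M'] [Module.Finite R M']
    {n n' : ℕ} {q : QuadraticForm R M} {q' : QuadraticForm R M'}
    (hq : ∀ P : Ideal R, (hP : P.IsMaximal) → P ≠ ⊥ →
      haveI := hP.isPrime
      HasSimpleDegenerationMultOneDiag n (q.baseChange (Localization.AtPrime P)))
    (hq' : ∀ P : Ideal R, (hP : P.IsMaximal) → P ≠ ⊥ →
      haveI := hP.isPrime
      HasSimpleDegenerationMultOneDiag n' (q'.baseChange (Localization.AtPrime P)))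
    (hK : (q.baseChange K).Equivalent (q'.baseChange K)) : q.Equivalent q' := by
  by_cases hR : IsField R
  · exact equivalent_of_baseChange_of_bijective
      (hR.localization_map_bijective (M := nonZeroDivisors R) (by simp)) hK
  have := Module.finitePresentation_of_projective R M
  obtain ⟨F⟩ := RationalIsometry.nonempty_of_baseChange hK
  have hrank : Module.finrank R M = Module.finrank R M' := by
    obtain ⟨E⟩ := hK
    rw [← Module.finrank_baseChange (R := K) (M' := M), E.toLinearEquiv.finrank_eq,
      Module.finrank_baseChange]
  exact F.equivalent hR hrank (fun p hp => .of_localization hq hp)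
    fun p hp => .of_localization hq' hp

theorem isometric_of_isometric_over_fractions
    {R : Type*} [CommRing R] [IsDomain R] [IsPrincipalIdealRing R]
    (hsemilocal : {I : Ideal R | I.IsMaximal}.Finite) [Invertible (2 : R)]
    (n : ℕ) (q q' : QuadraticForm R (Fin n → R))
    (hq : ∀ P : Ideal R, (hP : P.IsMaximal) → P ≠ ⊥ →
      haveI := hP.isPrime
      HasSimpleDegenerationMultOneDiag n (q.baseChange (Localization.AtPrime P)))
    (hq' : ∀ P : Ideal R, (hP : P.IsMaximal) → P ≠ ⊥ →
      haveI := hP.isPrime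
      HasSimpleDegenerationMultOneDiag n (q'.baseChange (Localization.AtPrime P)))
    (hK : Nonempty ((q.baseChange (FractionRing R)).IsometryEquiv
      (q'.baseChange (FractionRing R)))) :
    Nonempty (q.IsometryEquiv q') := by
  have : Finite {I : Ideal R // I.IsMaximal} := hsemilocal
  have := Finite.of_equiv _ (MaximalSpectrum.equivSubtype R).symm
  exact isometric_of_isometric_over_fractions_general hq hq' hK
end

section
/- Let q be a quadratic form of rank 4 over a field K of characteristic ≠ 2 with nontrivial (nonsquare) discriminant d, and let L = K(√d) be the discriminant extension. Then q is isotropic over K if and only if the even Clifford algebra C₀(q), a quaternion algebra over L, is split over L. -/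
open Polynomial Matrix

/-!
Let `e₀, e₁, e₂, e₃` be an orthogonal basis of the quadratic space, with values `aᵢ = q(eᵢ)`, and
let `ω = e₀e₁e₂e₃`, so that `ω² = a₀a₁a₂a₃`. The even Clifford algebra is the quaternion algebra
`(-a₀a₁, -a₀a₂)` over `L = K(ω)`. If `q` is isotropic it contains a hyperbolic plane, and one can
take `a₀ = 1` and `a₁ = -1`: the algebra is `(1, -a₂)`, which is split.

Conversely, `ψ(v) = e₀v` embeds the quadratic space in the even Clifford algebra, and every element
of the latter is `ψ(v) + ωψ(w)` for some vectors `v` and `w`, with quaternion norm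
`a₀(q(v) + ω²q(w) + ωb(v, w))`, where `b` is the polar form. If the algebra is split, it has a
nonzero element of square zero. The norm of that element vanishes, so `v` and `w` are orthogonal and
`q(v) = -ω²q(w)`. Unless `q(w) = 0`, the plane they span has discriminant `-ω²` up to squares;
since `q` itself has discriminant `ω²`, the orthogonal complement of this plane has discriminant
`-1` and is hyperbolic.
-/

open Module
open QuadraticMap (associated polar)

section QuadraticForm

theorem discr_toQuadraticForm' {R n : Type*} [CommRing R] [Invertible (2 : R)] [Fintype n]
    [DecidableEq n] {G : Matrix n n R} (hG : G.IsSymm) :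
    G.toQuadraticForm'.discr (Pi.basisFun R n) = G.det := by
  rw [QuadraticForm.discr_eq_discr', QuadraticForm.discr', QuadraticForm.toMatrix',
    Matrix.toQuadraticForm', QuadraticMap.associated_left_inverse]
  · rw [LinearMap.toMatrix'_toLinearMap₂']
  · exact (isSymm_toBilin'_iff_isSymm.mpr hG).eq

variable {K V ι : Type*} [Field K] [Invertible (2 : K)] [AddCommGroup V] [Module K V]
  {Q : QuadraticForm K V}

theorem discr_eq_sq_mul_discr [Fintype ι] [DecidableEq ι] (Q : QuadraticForm K V)
    (b e : Basis ι K V) : ∃ s : K, s ≠ 0 ∧ Q.discr e = s ^ 2 * Q.discr b := by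
  refine ⟨(b.toMatrix e).det, (b.isUnit_det e).ne_zero, ?_⟩
  have h : Q.comp LinearMap.id = Q := QuadraticMap.ext fun _ => rfl
  have := QuadraticForm.discr_comp (b := e) b Q LinearMap.id
  rwa [h, LinearMap.toMatrix_id_eq_basis_toMatrix, ← sq] at this

theorem discr_eq_prod_of_isOrthoᵢ [Fintype ι] [DecidableEq ι] {e : Basis ι K V}
    (he : (associated Q).IsOrthoᵢ e) : Q.discr e = ∏ i, Q (e i) := by
  have : Q.toMatrix e = diagonal fun i => Q (e i) := by
    ext i j
    rw [QuadraticForm.toMatrix, LinearMap.toMatrix₂_apply]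
    obtain rfl | hij := eq_or_ne i j
    · rw [diagonal_apply_eq, QuadraticMap.associated_eq_self_apply K]
    · rw [diagonal_apply_ne _ hij, he hij]
  rw [QuadraticForm.discr, this, det_diagonal]

theorem apply_ne_zero_of_isOrthoᵢ (hQ : (associated Q).Nondegenerate) {e : Basis ι K V}
    (he : (associated Q).IsOrthoᵢ e) (i : ι) : Q (e i) ≠ 0 := by
  simpa only [QuadraticMap.associated_eq_self_apply K] using
    he.not_isOrtho_basis_self_of_separatingLeft hQ.1 i

theorem prod_apply_eq_sq_mul_prod_apply [Fintype ι] {e f : Basis ι K V}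
    (he : (associated Q).IsOrthoᵢ e) (hf : (associated Q).IsOrthoᵢ f) :
    ∃ s : K, s ≠ 0 ∧ ∏ i, Q (f i) = s ^ 2 * ∏ i, Q (e i) := by
  classical
  simpa only [discr_eq_prod_of_isOrthoᵢ he, discr_eq_prod_of_isOrthoᵢ hf] using
    discr_eq_sq_mul_discr Q e f

theorem exists_isOrthoᵢ_basis_extending [FiniteDimensional K V] [Fintype ι]
    {B : LinearMap.BilinForm K V} (hB : LinearMap.IsSymm B) {v : ι → V} (hv : B.IsOrthoᵢ v)
    (hv₀ : ∀ i, B (v i) (v i) ≠ 0) {n : ℕ} (hn : Fintype.card ι + n = finrank K V) :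
    ∃ e : Basis (ι ⊕ Fin n) K V, B.IsOrthoᵢ e ∧ ∀ i, e (.inl i) = v i := by
  have hli := LinearMap.linearIndependent_of_isOrthoᵢ hv hv₀
  set W := Submodule.span K (Set.range v)
  let b : Basis ι K W := Basis.span hli
  have hb (i) : (b i : V) = v i := Basis.coe_span_apply hli i
  have hcompl : IsCompl W (B.orthogonal W) := by
    refine LinearMap.BilinForm.isCompl_orthogonal_of_restrict_nondegenerate hB.isRefl <|
      LinearMap.IsOrthoᵢ.nondegenerate_of_not_isOrtho_basis_self b (fun i j hij => ?_) fun i => ?_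
    · change B (b i) (b j) = 0
      rw [hb, hb, hv hij]
    · change ¬ B (b i) (b i) = 0
      rw [hb]
      exact hv₀ i
  have hrank : finrank K (B.orthogonal W) = n := by
    have := Submodule.finrank_add_eq_of_isCompl hcompl
    rw [finrank_eq_card_basis b] at this
    omega
  obtain ⟨c, hc⟩ := LinearMap.BilinForm.exists_orthogonal_basis
    (hB.domRestrict (B.orthogonal W))
  have hbc (i j) : B (v i) (c j) = 0 := hb i ▸ (c j).2 _ (b i).2
  let e := (b.prod (c.reindex (finCongr hrank))).map (Submodule.prodEquivOfIsCompl _ _ hcompl)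
  have he_inl (i) : e (.inl i) = v i := by simp [e, hb]
  have he_inr (j) : e (.inr j) = c ((finCongr hrank).symm j) := by simp [e]
  refine ⟨e, ?_, he_inl⟩
  rintro (i | i) (j | j) hij
  · change B (e _) (e _) = 0
    rw [he_inl, he_inl, hv (Sum.inl_injective.ne_iff.mp hij)]
  · change B (e _) (e _) = 0
    rw [he_inl, he_inr, hbc]
  · change B (e _) (e _) = 0
    rw [he_inl, he_inr, hB.isRefl _ _ (hbc _ _)]
  · change B (e _) (e _) = 0
    rw [he_inr, he_inr]
    exact hc ((finCongr hrank).symm.injective.ne (Sum.inr_injective.ne_iff.mp hij))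

theorem exists_isOrthoᵢ_basis_fin_four (hV : finrank K V = 4) {v w : V}
    (hvw : Q.IsOrtho v w) (hv : Q v ≠ 0) (hw : Q w ≠ 0) :
    ∃ e : Basis (Fin 4) K V, (associated Q).IsOrthoᵢ e ∧ e 0 = v ∧ e 1 = w := by
  have := Module.finite_of_finrank_eq_succ hV
  have hsymm := QuadraticForm.associated_isSymm K Q
  have hortho : (associated Q).IsOrthoᵢ ![v, w] := by
    intro i j hij
    fin_cases i <;> fin_cases j
    exacts [absurd rfl hij, QuadraticMap.associated_isOrtho.mpr hvw,
      QuadraticMap.associated_isOrtho.mpr hvw.symm, absurd rfl hij]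
  have hne : ∀ i, associated Q (![v, w] i) (![v, w] i) ≠ 0 := by
    simpa only [QuadraticMap.associated_eq_self_apply K, Fin.forall_fin_two] using ⟨hv, hw⟩
  obtain ⟨e, he, hvw'⟩ := exists_isOrthoᵢ_basis_extending hsymm hortho hne (n := 2) (by simp [hV])
  refine ⟨e.reindex finSumFinEquiv, fun i j hij => ?_, ?_, ?_⟩
  · simpa using! he (finSumFinEquiv.symm.injective.ne hij)
  · simpa using! hvw' 0
  · simpa using! hvw' 1

theorem exists_isOrtho_apply_eq_one_neg_one (hQ : (associated Q).Nondegenerate) {u : V}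
    (hu : u ≠ 0) (hQu : Q u = 0) :
    ∃ v w, Q.IsOrtho v w ∧ Q v = 1 ∧ Q w = -1 := by
  obtain ⟨x, hx⟩ : ∃ x, polar Q u x ≠ 0 := by
    by_contra! h
    exact hu <| hQ.1 u fun x =>
      QuadraticMap.associated_isOrtho.mpr (QuadraticMap.isOrtho_polarBilin.mp (h x))
  obtain ⟨y, huy⟩ : ∃ y, polar Q u y = 1 :=
    ⟨(polar Q u x)⁻¹ • x, by rw [QuadraticMap.polar_smul_right, smul_eq_mul, inv_mul_cancel₀ hx]⟩
  -- `u` and `y - Q y • u` form a hyperbolic pair, so `Q` takes the values `±1` on its sum and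
  -- its difference.
  obtain ⟨z, huz, hQz⟩ : ∃ z, polar Q u z = 1 ∧ Q z = 0 := by
    refine ⟨y - Q y • u, ?_, ?_⟩
    · simp [QuadraticMap.polar_sub_right, huy, hQu]
    · simp [sub_eq_add_neg, QuadraticMap.map_add Q, QuadraticMap.map_smul, hQu,
        QuadraticMap.polar_comm Q y u, huy]
  refine ⟨u + z, u - z, ?_, ?_, ?_⟩
  · rw [← QuadraticMap.isOrtho_polarBilin]
    simp [QuadraticMap.polar_sub_right, QuadraticMap.polar_comm Q z u, huz, hQu, hQz]
  · simp [QuadraticMap.map_add, huz, hQu, hQz]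
  · simp [sub_eq_add_neg, QuadraticMap.map_add Q, huz, hQu, hQz]

theorem exists_isotropic_of_apply_add_mul_apply_eq_zero (hQ : (associated Q).Nondegenerate)
    {e : Basis (Fin 4) K V} (he : (associated Q).IsOrthoᵢ e) {v w : V} (hvw : v ≠ 0 ∨ w ≠ 0)
    (h : Q v + (∏ i, Q (e i)) * Q w = 0) (hortho : Q.IsOrtho v w) :
    ∃ x, x ≠ 0 ∧ Q x = 0 := by
  by_cases hw : Q w = 0
  · have hv : Q v = 0 := by simpa [hw] using h
    exact hvw.elim (⟨v, ·, hv⟩) (⟨w, ·, hw⟩)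
  have he₀ := apply_ne_zero_of_isOrthoᵢ hQ he
  have hv : Q v ≠ 0 := fun hv => by simp [hv, hw, Finset.prod_eq_zero_iff, he₀] at h
  obtain ⟨f, hf, rfl, rfl⟩ := exists_isOrthoᵢ_basis_fin_four (finrank_eq_card_basis e)
    hortho hv hw
  obtain ⟨t, -, ht⟩ := prod_apply_eq_sq_mul_prod_apply he hf
  rw [Fin.prod_univ_four] at ht
  -- Comparing discriminants, the plane spanned by `f 2` and `f 3` has discriminant `-1` up to
  -- squares, so it is hyperbolic.
  have hplane : Q (f 2) * Q (f 3) = -(t / Q (f 1)) ^ 2 := by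
    field_simp
    have : Q (f 0) * (Q (f 1) ^ 2 * (Q (f 2) * Q (f 3)) + t ^ 2) = 0 := by
      linear_combination Q (f 1) * ht + t ^ 2 * h
    linear_combination (mul_eq_zero.mp this).resolve_left hv
  refine ⟨(t / Q (f 1)) • f 2 + Q (f 2) • f 3, fun hx => ?_, ?_⟩
  · have := congrArg (f.repr · 3) hx
    exact apply_ne_zero_of_isOrthoᵢ hQ hf 2 (by simpa using this)
  · have h23 : polar Q (f 2) (f 3) = 0 :=
      (QuadraticMap.associated_isOrtho.mp (hf (by decide))).polar_eq_zero
    simp only [QuadraticMap.map_add, QuadraticMap.map_smul, QuadraticMap.polar_smul_left,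
      QuadraticMap.polar_smul_right, h23, smul_eq_mul]
    linear_combination Q (f 2) * hplane

end QuadraticForm

section QuadraticAlgebra

open scoped QuadraticAlgebra
open QuadraticAlgebra (omega)

theorem isReduced_quadraticAlgebra_zero {R : Type*} [CommRing R] [IsReduced R] {d : R}
    (h2d : IsUnit (2 * d)) : IsReduced (QuadraticAlgebra R d 0) := by
  refine (isReduced_iff_pow_one_lt 2 one_lt_two).mpr fun x hx => ?_
  have hre : x.re * x.re + d * x.im * x.im = 0 := by simpa [sq] using congrArg (·.re) hx
  have him : x.re * x.im + x.im * x.re = 0 := by simpa [sq] using congrArg (·.im) hx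
  have hd : IsUnit d := isUnit_of_mul_isUnit_right h2d
  have h2 : IsUnit (2 : R) := isUnit_of_mul_isUnit_left h2d
  have h0 : x.re * x.im = 0 := h2.mul_left_cancel (by linear_combination him)
  have hre0 : x.re = 0 := by
    refine (pow_eq_zero_iff three_ne_zero).mp ?_
    linear_combination x.re * hre - d * x.im * h0
  have him0 : x.im = 0 := by
    refine (pow_eq_zero_iff two_ne_zero).mp (hd.mul_left_cancel ?_)
    linear_combination hre - x.re * hre0
  exact QuadraticAlgebra.ext hre0 him0

/-- Adjoining a square root of `d` amounts to adjoining a square root of `s² d`, for a unit `s`. -/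
noncomputable def adjoinRootEquivQuadraticAlgebra {R : Type*} [CommRing R] (d : R) (s : Rˣ) :
    AdjoinRoot (X ^ 2 - C d) ≃ₐ[R] QuadraticAlgebra R (s ^ 2 * d) 0 :=
  AlgEquiv.ofAlgHom
    (AdjoinRoot.liftAlgHom _ (Algebra.ofId _ _) ((↑s⁻¹ : R) • omega) <| by
      ext <;> simp [sq, ← mul_assoc])
    (QuadraticAlgebra.lift ⟨(s : R) • AdjoinRoot.root _, by
      have h : AdjoinRoot.root (X ^ 2 - C d) ^ 2 = algebraMap R _ d := by
        rw [← sub_eq_zero, ← AdjoinRoot.eval₂_root (X ^ 2 - C d), eval₂_sub, eval₂_X_pow, eval₂_C,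
          AdjoinRoot.algebraMap_eq]
      rw [smul_mul_smul_comm, ← sq, ← sq, h, zero_smul, add_zero, Algebra.algebraMap_eq_smul_one,
        smul_smul]⟩)
    (QuadraticAlgebra.algHom_ext <| by simp [QuadraticAlgebra.lift, smul_smul])
    (AdjoinRoot.algHom_ext <| by simp [QuadraticAlgebra.lift, smul_smul])

end QuadraticAlgebra

section Quaternion

open scoped Quaternion

variable {R : Type*} [CommRing R]

theorem exists_matrix_fin_two_ne_zero_mul_self_eq_zero (R : Type*) [Semiring R] [Nontrivial R] :
    ∃ x : Matrix (Fin 2) (Fin 2) R, x ≠ 0 ∧ x * x = 0 :=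
  ⟨single 0 1 1, fun h => one_ne_zero (α := R) (by simpa using congrFun₂ h 0 1), by simp⟩

theorem quaternionAlgebra_star_mul_self_eq_zero_of_mul_self_eq_zero [IsReduced R] {c₁ c₂ c₃ : R}
    {x : ℍ[R,c₁,c₂,c₃]} (hx : x * x = 0) : star x * x = 0 := by
  have hnorm := QuaternionAlgebra.star_mul_eq_coe x
  have hsq : (star x * x) * (star x * x) = 0 := by
    rw [mul_assoc, ← mul_assoc x, ← star_comm_self' x, mul_assoc (star x), hx, mul_zero, mul_zero]
  rw [hnorm, ← QuaternionAlgebra.coe_mul, ← QuaternionAlgebra.coe_zero,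
    QuaternionAlgebra.coe_inj, ← sq, pow_eq_zero_iff two_ne_zero] at hsq
  rw [hnorm, hsq, QuaternionAlgebra.coe_zero]

/-- The splitting of the quaternion algebra `(1, c)`: the imaginary unit `i`, of square `1`, acts
as `diag(1, -1)`. -/
noncomputable def quaternionAlgebraOneEquivMatrix [Invertible (2 : R)] (c : Rˣ) :
    ℍ[R,1,0,c] ≃ₐ[R] Matrix (Fin 2) (Fin 2) R where
  toFun x := !![x.re + x.imI, c * (x.imJ + x.imK); x.imJ - x.imK, x.re - x.imI]
  invFun m := ⟨⅟2 * (m 0 0 + m 1 1), ⅟2 * (m 0 0 - m 1 1),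
    ⅟2 * (↑c⁻¹ * m 0 1 + m 1 0), ⅟2 * (↑c⁻¹ * m 0 1 - m 1 0)⟩
  left_inv x := by
    have h2 := invOf_mul_self (2 : R)
    ext <;> simp <;> grind
  right_inv m := by
    have h2 := invOf_mul_self (2 : R)
    have hc := c.mul_inv
    ext i j
    fin_cases i <;> fin_cases j <;> simp <;> grind
  map_mul' x y := by
    ext i j
    fin_cases i <;> fin_cases j <;> simp <;> ring
  map_add' x y := by
    ext i j
    fin_cases i <;> fin_cases j <;> simp <;> ring
  commutes' r := by
    ext i j
    fin_cases i <;> fin_cases j <;> simp [algebraMap_matrix_apply]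

end Quaternion

section EvenClifford

open CliffordAlgebra (ι even evenOdd)

variable {K V : Type*} [Field K] [Invertible (2 : K)] [AddCommGroup V] [Module K V]

instance finiteDimensional_cliffordAlgebra [FiniteDimensional K V] (Q : QuadraticForm K V) :
    FiniteDimensional K (CliffordAlgebra Q) :=
  ((finBasis K V).ExteriorAlgebra.map
    (CliffordAlgebra.equivExterior Q).symm).finiteDimensional_of_finite

theorem finrank_cliffordAlgebra [FiniteDimensional K V] (Q : QuadraticForm K V) :
    finrank K (CliffordAlgebra Q) = 2 ^ finrank K V := by
  rw [(CliffordAlgebra.equivExterior Q).finrank_eq,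
    finrank_eq_card_basis (finBasis K V).ExteriorAlgebra, Fintype.card_finset, Fintype.card_fin]

variable [FiniteDimensional K V] {Q : QuadraticForm K V}

theorem finrank_evenOdd_le_finrank_evenOdd_add_one {v : V} (hv : Q v ≠ 0) (i : ZMod 2) :
    finrank K (evenOdd Q i) ≤ finrank K (evenOdd Q (i + 1)) := by
  have hmem : ∀ x ∈ evenOdd Q i, LinearMap.mulLeft K (ι Q v) x ∈ evenOdd Q (i + 1) := fun x hx =>
    add_comm 1 i ▸ SetLike.mul_mem_graded (CliffordAlgebra.ι_mem_evenOdd_one Q v) hx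
  refine LinearMap.finrank_le_finrank_of_injective
    (f := (LinearMap.mulLeft K (ι Q v)).restrict hmem) fun x y hxy => Subtype.ext ?_
  exact (CliffordAlgebra.isUnit_ι_of_isUnit Q hv.isUnit).mul_left_cancel (congrArg Subtype.val hxy)

theorem two_mul_finrank_even {v : V} (hv : Q v ≠ 0) :
    2 * finrank K (even Q) = 2 ^ finrank K V := by
  have heq : finrank K (evenOdd Q 0) = finrank K (evenOdd Q 1) :=
    (finrank_evenOdd_le_finrank_evenOdd_add_one hv 0).antisymm
      (finrank_evenOdd_le_finrank_evenOdd_add_one hv 1)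
  have hsum := Submodule.finrank_add_eq_of_isCompl (CliffordAlgebra.evenOdd_isCompl Q)
  rw [finrank_cliffordAlgebra, ← heq, ← two_mul] at hsum
  exact hsum

end EvenClifford

section Isometry

open CliffordAlgebra (even)

variable {R M₁ M₂ : Type*} [CommRing R] [AddCommGroup M₁] [Module R M₁] [AddCommGroup M₂]
  [Module R M₂] {Q₁ : QuadraticForm R M₁} {Q₂ : QuadraticForm R M₂}

/-- The homomorphism of even Clifford algebras induced by an isometry. -/
def evenMap (f : Q₁ →qᵢ Q₂) : even Q₁ →ₐ[R] even Q₂ :=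
  CliffordAlgebra.even.lift Q₁
    { bilin := (CliffordAlgebra.even.ι Q₂).bilin.compl₁₂ f.toLinearMap f.toLinearMap
      contract := fun m => by simp [(CliffordAlgebra.even.ι Q₂).contract]
      contract_mid := fun m₁ m₂ m₃ => by simp [(CliffordAlgebra.even.ι Q₂).contract_mid] }

theorem evenMap_ι (f : Q₁ →qᵢ Q₂) (u v : M₁) :
    evenMap f ((CliffordAlgebra.even.ι Q₁).bilin u v) =
      (CliffordAlgebra.even.ι Q₂).bilin (f u) (f v) :=
  CliffordAlgebra.even.lift_ι ..

/-- The isomorphism of even Clifford algebras induced by an invertible isometry. -/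
def evenEquivOfIsometry (f : Q₁.IsometryEquiv Q₂) : even Q₁ ≃ₐ[R] even Q₂ :=
  AlgEquiv.ofAlgHom (evenMap f.toIsometry) (evenMap f.symm.toIsometry)
    (CliffordAlgebra.even.algHom_ext _ <| by
      ext u v : 3
      simp [evenMap_ι])
    (CliffordAlgebra.even.algHom_ext _ <| by
      ext u v : 3
      simp [evenMap_ι])

theorem isOrtho_isometryEquiv_iff (f : Q₁.IsometryEquiv Q₂) {v w : M₁} :
    Q₂.IsOrtho (f v) (f w) ↔ Q₁.IsOrtho v w := by
  rw [QuadraticMap.isOrtho_def, QuadraticMap.isOrtho_def, ← map_add, f.map_app, f.map_app,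
    f.map_app]

end Isometry

section VectorToQuaternion

open scoped Quaternion
open QuadraticMap (weightedSumSquares)

section CommRing

variable {K L : Type*} [CommRing K] [CommRing L] [Algebra K L] {a : Fin 4 → K} {θ : L}

/-- The realisation of the quadratic space `⟨a₀, a₁, a₂, a₃⟩` inside a quaternion algebra, which
replaces a vector `v` by the product of the basis vector `e₀` with `v` in the Clifford algebra:
the units `i`, `j` are `e₀e₁`, `e₀e₂`, and `θ` stands for `e₀e₃ / ij`. -/
@[simps]
def vectorToQuaternion (a : Fin 4 → K) (θ : L) :
    (Fin 4 → K) →ₗ[K] ℍ[L,algebraMap K L (-(a 0 * a 1)),0,algebraMap K L (-(a 0 * a 2))] where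
  toFun v := ⟨algebraMap K L (a 0 * v 0), algebraMap K L (v 1), algebraMap K L (v 2),
    algebraMap K L (v 3) * θ⟩
  map_add' v w := by ext <;> simp <;> ring
  map_smul' c v := by
    ext <;> simp only [Pi.smul_apply, smul_eq_mul, map_mul, RingHom.id_apply,
      QuaternionAlgebra.smul_mk, Algebra.smul_def c (_ : L)] <;> ring

theorem star_mul_self_vectorToQuaternion
    (hθ : algebraMap K L (a 0 * a 1 * a 2) * θ ^ 2 = algebraMap K L (a 3)) (v : Fin 4 → K) :
    star (vectorToQuaternion a θ v) * vectorToQuaternion a θ v =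
      algebraMap K _ (a 0 * weightedSumSquares K a v) := by
  simp only [map_mul] at hθ
  rw [IsScalarTower.algebraMap_apply K L ℍ[L,_,_,_], QuaternionAlgebra.algebraMap_eq]
  ext <;> simp [Fin.sum_univ_four]
  · linear_combination algebraMap K L (a 0) * algebraMap K L (v 3) ^ 2 * hθ
  · ring
  · ring
  · ring

theorem star_mul_self_vectorToQuaternion_add_smul
    (hθ : algebraMap K L (a 0 * a 1 * a 2) * θ ^ 2 = algebraMap K L (a 3)) (δ : L)
    (v w : Fin 4 → K) :
    star (vectorToQuaternion a θ v + δ • vectorToQuaternion a θ w) *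
        (vectorToQuaternion a θ v + δ • vectorToQuaternion a θ w) =
      ↑(algebraMap K L (a 0) * (algebraMap K L (weightedSumSquares K a v) +
        δ * δ * algebraMap K L (weightedSumSquares K a w) +
        δ * algebraMap K L (polar (weightedSumSquares K a) v w))) := by
  simp only [map_mul] at hθ
  ext <;> simp [Fin.sum_univ_four, polar]
  · linear_combination
      algebraMap K L (a 0) * (algebraMap K L (v 3) + δ * algebraMap K L (w 3)) ^ 2 * hθ
  · ring
  · ring
  · ring

end CommRing

variable {K L : Type*} [Field K] [CommRing L] [Algebra K L] {a : Fin 4 → K} {θ : L}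

/-- The even Clifford map induced by `vectorToQuaternion`, which sends the vectors `u`, `v` to
`a₀⁻¹ (ue₀)(e₀v)`; this stands for `uv` because `e₀² = a₀`. -/
def evenHomVectorToQuaternion (ha : a 0 ≠ 0)
    (hθ : algebraMap K L (a 0 * a 1 * a 2) * θ ^ 2 = algebraMap K L (a 3)) :
    CliffordAlgebra.EvenHom (weightedSumSquares K a)
      ℍ[L,algebraMap K L (-(a 0 * a 1)),0,algebraMap K L (-(a 0 * a 2))] where
  bilin := LinearMap.mk₂ K
    (fun u v => (a 0)⁻¹ • (star (vectorToQuaternion a θ u) * vectorToQuaternion a θ v))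
    (fun u u' v => by rw [map_add, star_add, add_mul, smul_add])
    (fun c u v => by
      rw [map_smul, QuaternionAlgebra.star_smul', smul_mul_assoc, smul_comm])
    (fun u v v' => by rw [map_add, mul_add, smul_add])
    (fun c u v => by rw [map_smul, mul_smul_comm, smul_comm])
  contract v := by
    simp only [LinearMap.mk₂_apply]
    rw [star_mul_self_vectorToQuaternion hθ, map_mul, ← Algebra.smul_def, inv_smul_smul₀ ha]
  contract_mid u v w := by
    simp only [LinearMap.mk₂_apply]
    rw [smul_mul_smul_comm, mul_assoc, ← mul_assoc _ (star _), ← star_comm_self',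
      star_mul_self_vectorToQuaternion hθ, ← Algebra.smul_def, mul_smul_comm, smul_smul, smul_smul]
    congr 1
    field_simp

end VectorToQuaternion

section DiagonalForm

open scoped Quaternion QuadraticAlgebra
open QuadraticMap (weightedSumSquares)

variable {K : Type*} [Field K] {a : Fin 4 → K}

/-- The discriminant algebra of the diagonal form `⟨a₀, a₁, a₂, a₃⟩`, generated by a square root
`ω` of `a₀a₁a₂a₃`. -/
abbrev DiscrAlgebra (a : Fin 4 → K) : Type _ :=
  QuadraticAlgebra K (∏ i, a i) 0

/-- The quaternion algebra `(-a₀a₁, -a₀a₂)` over the discriminant algebra, which is the even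
Clifford algebra of the diagonal form `⟨a₀, a₁, a₂, a₃⟩`. -/
abbrev DiagonalQuaternion (a : Fin 4 → K) : Type _ :=
  ℍ[DiscrAlgebra a,algebraMap K _ (-(a 0 * a 1)),0,algebraMap K _ (-(a 0 * a 2))]

/-- The element `e₀e₃ / (e₀e₁e₀e₂)` of the discriminant algebra, where `ω = e₀e₁e₂e₃`. -/
noncomputable abbrev scaledOmega (a : Fin 4 → K) : DiscrAlgebra a :=
  (a 0 * a 1 * a 2)⁻¹ • ω

/-- The embedding of a diagonal quadratic space in its even Clifford algebra, given by
multiplication by `e₀`. -/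
noncomputable abbrev diagonalToQuaternion (a : Fin 4 → K) :
    (Fin 4 → K) →ₗ[K] DiagonalQuaternion a :=
  vectorToQuaternion a (scaledOmega a)

theorem algebraMap_mul_scaledOmega_sq (ha : ∀ i, a i ≠ 0) :
    algebraMap K _ (a 0 * a 1 * a 2) * scaledOmega a ^ 2 = algebraMap K _ (a 3) := by
  have h0 := ha 0
  have h1 := ha 1
  have h2 := ha 2
  rw [← Algebra.smul_def]
  ext
  · simp [sq, Fin.prod_univ_four]
    field_simp
  · simp [sq]

theorem exists_eq_diagonalToQuaternion_add_omega_smul (ha : ∀ i, a i ≠ 0)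
    (x : DiagonalQuaternion a) :
    ∃ v w, x = diagonalToQuaternion a v + (ω : DiscrAlgebra a) • diagonalToQuaternion a w := by
  have h0 := ha 0
  have h1 := ha 1
  have h2 := ha 2
  have h3 := ha 3
  refine ⟨![x.re.re / a 0, x.imI.re, x.imJ.re, a 0 * a 1 * a 2 * x.imK.im],
    ![x.re.im / a 0, x.imI.im, x.imJ.im, x.imK.re / a 3], ?_⟩
  ext <;> simp [Fin.prod_univ_four] <;> field_simp

theorem apply_add_mul_apply_eq_zero_and_isOrtho (ha : ∀ i, a i ≠ 0) {v w : Fin 4 → K}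
    {x : DiagonalQuaternion a}
    (hx : x = diagonalToQuaternion a v + (ω : DiscrAlgebra a) • diagonalToQuaternion a w)
    (h : star x * x = 0) :
    weightedSumSquares K a v + (∏ i, a i) * weightedSumSquares K a w = 0 ∧
      (weightedSumSquares K a).IsOrtho v w := by
  rw [hx, star_mul_self_vectorToQuaternion_add_smul (algebraMap_mul_scaledOmega_sq ha),
    ← QuaternionAlgebra.coe_zero, QuaternionAlgebra.coe_inj, ← Algebra.smul_def,
    smul_eq_zero_iff_right (ha 0)] at h
  rw [← QuadraticMap.isOrtho_polarBilin]
  constructor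
  · simpa [-QuadraticMap.weightedSumSquares_apply] using congrArg (·.re) h
  · simpa [-QuadraticMap.weightedSumSquares_apply] using congrArg (·.im) h

/-- The homomorphism from the even Clifford algebra of a diagonal form induced by
`diagonalToQuaternion`. -/
noncomputable def evenToDiagonalQuaternion (ha : ∀ i, a i ≠ 0) :
    CliffordAlgebra.even (weightedSumSquares K a) →ₐ[K] DiagonalQuaternion a :=
  CliffordAlgebra.even.lift _
    (evenHomVectorToQuaternion (ha 0) (algebraMap_mul_scaledOmega_sq ha))

theorem evenToDiagonalQuaternion_ι (ha : ∀ i, a i ≠ 0) (u v : Fin 4 → K) :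
    evenToDiagonalQuaternion ha ((CliffordAlgebra.even.ι (weightedSumSquares K a)).bilin u v) =
      (a 0)⁻¹ • (star (diagonalToQuaternion a u) * diagonalToQuaternion a v) :=
  CliffordAlgebra.even.lift_ι ..

theorem diagonalToQuaternion_mem_range (ha : ∀ i, a i ≠ 0) (v : Fin 4 → K) :
    diagonalToQuaternion a v ∈ (evenToDiagonalQuaternion ha).range := by
  have h0 := ha 0
  refine (AlgHom.mem_range _).mpr
    ⟨(CliffordAlgebra.even.ι (weightedSumSquares K a)).bilin (Pi.single 0 1) v, ?_⟩
  rw [evenToDiagonalQuaternion_ι]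
  ext <;> simp [h0]
  field_simp

theorem omega_mem_range (ha : ∀ i, a i ≠ 0) :
    algebraMap _ _ (ω : DiscrAlgebra a) ∈ (evenToDiagonalQuaternion ha).range := by
  have h0 := ha 0
  have h1 := ha 1
  have h2 := ha 2
  let ι₂ := (CliffordAlgebra.even.ι (weightedSumSquares K a)).bilin
  refine (AlgHom.mem_range _).mpr
    ⟨ι₂ (Pi.single 0 1) (Pi.single 1 1) * ι₂ (Pi.single 2 1) (Pi.single 3 1), ?_⟩
  rw [map_mul, evenToDiagonalQuaternion_ι, evenToDiagonalQuaternion_ι]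
  ext <;> simp [Fin.prod_univ_four, QuaternionAlgebra.algebraMap_eq]
  field_simp

theorem evenToDiagonalQuaternion_surjective (ha : ∀ i, a i ≠ 0) :
    Function.Surjective (evenToDiagonalQuaternion ha) := by
  intro x
  obtain ⟨v, w, rfl⟩ := exists_eq_diagonalToQuaternion_add_omega_smul ha x
  rw [Algebra.smul_def]
  exact add_mem (diagonalToQuaternion_mem_range ha v)
    (mul_mem (omega_mem_range ha) (diagonalToQuaternion_mem_range ha w))

theorem finrank_diagonalQuaternion : finrank K (DiagonalQuaternion a) = 8 := by
  rw [← finrank_mul_finrank K (DiscrAlgebra a), QuadraticAlgebra.finrank_eq_two,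
    QuaternionAlgebra.finrank_eq_four]

theorem isReduced_discrAlgebra (h2 : (2 : K) ≠ 0) (ha : ∀ i, a i ≠ 0) :
    IsReduced (DiscrAlgebra a) :=
  isReduced_quadraticAlgebra_zero
    (mul_ne_zero h2 (Finset.prod_ne_zero_iff.mpr fun i _ => ha i)).isUnit

variable [Invertible (2 : K)]

theorem nonempty_diagonalQuaternion_equiv_matrix (h₀ : a 0 = 1) (h₁ : a 1 = -1) (h₂ : a 2 ≠ 0) :
    Nonempty (DiagonalQuaternion a ≃ₐ[K] Matrix (Fin 2) (Fin 2) (DiscrAlgebra a)) := by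
  have : Invertible (2 : DiscrAlgebra a) :=
    (Invertible.map (algebraMap K (DiscrAlgebra a)) 2).copy _ (map_ofNat _ 2).symm
  have h01 : algebraMap K (DiscrAlgebra a) (-(a 0 * a 1)) = 1 := by simp [h₀, h₁]
  obtain ⟨c, hc⟩ : IsUnit (algebraMap K (DiscrAlgebra a) (-(a 0 * a 2))) :=
    (neg_ne_zero.mpr (mul_ne_zero (h₀ ▸ one_ne_zero) h₂)).isUnit.map _
  change Nonempty (ℍ[DiscrAlgebra a,algebraMap K _ (-(a 0 * a 1)),0,_] ≃ₐ[K] _)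
  rw [h01, ← hc]
  exact ⟨(quaternionAlgebraOneEquivMatrix c).restrictScalars K⟩

theorem finrank_even_weightedSumSquares (ha : a 0 ≠ 0) :
    finrank K (CliffordAlgebra.even (weightedSumSquares K a)) = 8 := by
  have h : weightedSumSquares K a (Pi.single 0 1) ≠ 0 := by simpa [Pi.single_apply] using ha
  have := two_mul_finrank_even h
  rw [finrank_fin_fun] at this
  omega

/-- The even Clifford algebra of a nondegenerate diagonal form of rank four is a quaternion algebra
over the discriminant algebra. -/
noncomputable def evenEquivDiagonalQuaternion (ha : ∀ i, a i ≠ 0) :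
    CliffordAlgebra.even (weightedSumSquares K a) ≃ₐ[K] DiagonalQuaternion a := by
  have h_even := finrank_even_weightedSumSquares (ha 0)
  have := Module.finite_of_finrank_eq_succ h_even
  have := Module.finite_of_finrank_eq_succ (finrank_diagonalQuaternion (a := a))
  have h_surj := evenToDiagonalQuaternion_surjective ha
  exact AlgEquiv.ofBijective (evenToDiagonalQuaternion ha)
    ⟨(LinearMap.injective_iff_surjective_of_finrank_eq_finrank
      (f := (evenToDiagonalQuaternion ha).toLinearMap)
      (h_even.trans finrank_diagonalQuaternion.symm)).mpr h_surj, h_surj⟩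

end DiagonalForm

section Splitting

open QuadraticMap (weightedSumSquares)

variable {K V : Type*} [Field K] [Invertible (2 : K)] [AddCommGroup V] [Module K V]
  {Q : QuadraticForm K V}

/-- The diagonalisation of a quadratic form in an orthogonal basis, for a basis indexed by any
finite type. -/
noncomputable def isometryEquivWeightedSumSquaresOfIsOrthoᵢ {ι : Type*} [Fintype ι]
    {e : Basis ι K V} (he : (associated Q).IsOrthoᵢ e) :
    Q.IsometryEquiv (weightedSumSquares K fun i => Q (e i)) where
  __ := e.equivFun
  map_app' m := by
    rw [← QuadraticMap.basisRepr_eq_of_iIsOrtho Q e he]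
    exact (Q.isometryEquivBasisRepr e).map_app m

/-- The diagonal quaternion algebra of an orthogonal basis, as the even Clifford algebra. -/
noncomputable def evenEquivDiagonalQuaternionOfIsOrthoᵢ (hQ : (associated Q).Nondegenerate)
    {e : Basis (Fin 4) K V} (he : (associated Q).IsOrthoᵢ e) :
    CliffordAlgebra.even Q ≃ₐ[K] DiagonalQuaternion fun i => Q (e i) :=
  (evenEquivOfIsometry (isometryEquivWeightedSumSquaresOfIsOrthoᵢ he)).trans
    (evenEquivDiagonalQuaternion (apply_ne_zero_of_isOrthoᵢ hQ he))

theorem nonempty_adjoinRoot_discr_equiv_discrAlgebra (b : Basis (Fin 4) K V)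
    {e : Basis (Fin 4) K V} (he : (associated Q).IsOrthoᵢ e) :
    Nonempty (AdjoinRoot (X ^ 2 - C (Q.discr b)) ≃ₐ[K] DiscrAlgebra fun i => Q (e i)) := by
  obtain ⟨s, hs, h⟩ := discr_eq_sq_mul_discr Q b e
  rw [discr_eq_prod_of_isOrthoᵢ he] at h
  change Nonempty (_ ≃ₐ[K] QuadraticAlgebra K (∏ i, Q (e i)) 0)
  rw [h]
  exact ⟨adjoinRootEquivQuadraticAlgebra _ (Units.mk0 s hs)⟩

theorem exists_isotropic_of_star_mul_self_eq_zero (hQ : (associated Q).Nondegenerate)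
    {e : Basis (Fin 4) K V} (he : (associated Q).IsOrthoᵢ e)
    {x : DiagonalQuaternion fun i => Q (e i)} (hx : x ≠ 0) (hxx : star x * x = 0) :
    ∃ v, v ≠ 0 ∧ Q v = 0 := by
  have he₀ := apply_ne_zero_of_isOrthoᵢ hQ he
  let f := isometryEquivWeightedSumSquaresOfIsOrthoᵢ he
  obtain ⟨v, w, h⟩ := exists_eq_diagonalToQuaternion_add_omega_smul he₀ x
  obtain ⟨v, rfl⟩ := EquivLike.surjective f v
  obtain ⟨w, rfl⟩ := EquivLike.surjective f w
  obtain ⟨hvw, hortho⟩ := apply_add_mul_apply_eq_zero_and_isOrtho he₀ h hxx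
  rw [f.map_app, f.map_app] at hvw
  refine exists_isotropic_of_apply_add_mul_apply_eq_zero hQ he ?_ hvw
    ((isOrtho_isometryEquiv_iff f).mp hortho)
  contrapose! hx
  simp only [h, hx, map_zero, smul_zero, add_zero]

theorem exists_isotropic_of_even_equiv_matrix (hQ : (associated Q).Nondegenerate)
    {e : Basis (Fin 4) K V} (he : (associated Q).IsOrthoᵢ e)
    (f : CliffordAlgebra.even Q ≃ₐ[K] Matrix (Fin 2) (Fin 2) (DiscrAlgebra fun i => Q (e i))) :
    ∃ v, v ≠ 0 ∧ Q v = 0 := by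
  have := isReduced_discrAlgebra (Invertible.ne_zero 2) (apply_ne_zero_of_isOrthoᵢ hQ he)
  obtain ⟨x, hx, hxx⟩ := exists_matrix_fin_two_ne_zero_mul_self_eq_zero
    (DiscrAlgebra fun i => Q (e i))
  let g := f.symm.trans (evenEquivDiagonalQuaternionOfIsOrthoᵢ hQ he)
  have hgx : g x * g x = 0 := by rw [← map_mul, hxx, map_zero]
  exact exists_isotropic_of_star_mul_self_eq_zero hQ he ((map_ne_zero_iff g g.injective).mpr hx)
    (quaternionAlgebra_star_mul_self_eq_zero_of_mul_self_eq_zero hgx)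

theorem isotropic_iff_evenClifford_split_general {K V : Type*} [Field K] [Invertible (2 : K)]
    [AddCommGroup V] [Module K V] (Q : QuadraticForm K V) (hQ : (associated Q).Nondegenerate)
    (b : Basis (Fin 4) K V) :
    (∃ v, v ≠ 0 ∧ Q v = 0) ↔
      Nonempty (CliffordAlgebra.even Q ≃ₐ[K]
        Matrix (Fin 2) (Fin 2) (AdjoinRoot (X ^ 2 - C (Q.discr b)))) := by
  have hV : finrank K V = 4 := finrank_eq_card_basis b
  have := Module.finite_of_finrank_eq_succ hV
  constructor
  · rintro ⟨u, hu, hQu⟩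
    obtain ⟨v, w, hvw, hv, hw⟩ := exists_isOrtho_apply_eq_one_neg_one hQ hu hQu
    obtain ⟨e, he, rfl, rfl⟩ := exists_isOrthoᵢ_basis_fin_four hV hvw
      (hv ▸ one_ne_zero) (hw ▸ neg_ne_zero.mpr one_ne_zero)
    obtain ⟨f⟩ := nonempty_diagonalQuaternion_equiv_matrix (a := fun i => Q (e i)) hv hw
      (apply_ne_zero_of_isOrthoᵢ hQ he 2)
    obtain ⟨g⟩ := nonempty_adjoinRoot_discr_equiv_discrAlgebra b he
    exact ⟨(evenEquivDiagonalQuaternionOfIsOrthoᵢ hQ he).trans (f.trans g.symm.mapMatrix)⟩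
  · rintro ⟨f⟩
    obtain ⟨e, he⟩ : ∃ e : Basis (Fin 4) K V, (associated Q).IsOrthoᵢ e :=
      hV ▸ LinearMap.BilinForm.exists_orthogonal_basis (QuadraticForm.associated_isSymm K Q)
    obtain ⟨g⟩ := nonempty_adjoinRoot_discr_equiv_discrAlgebra b he
    exact exists_isotropic_of_even_equiv_matrix hQ he (f.trans g.mapMatrix)

end Splitting

theorem isotropic_iff_evenClifford_split
    {K : Type*} [Field K] [Invertible (2 : K)]
    (G : Matrix (Fin 4) (Fin 4) K) (hsymm : Gᵀ = G)
    (hnonsquare : ¬ IsSquare G.det) :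
    (∃ v : Fin 4 → K, v ≠ 0 ∧ G.toQuadraticMap' v = 0) ↔
      Nonempty (↥(CliffordAlgebra.even G.toQuadraticMap') ≃ₐ[K]
        Matrix (Fin 2) (Fin 2) (AdjoinRoot (X ^ 2 - C G.det))) := by
  have hdet : G.det ≠ 0 := fun h => hnonsquare (h ▸ IsSquare.zero)
  rw [← discr_toQuadraticForm' hsymm] at hdet ⊢
  exact isotropic_iff_evenClifford_split_general _
    (LinearMap.nondegenerate_of_det_ne_zero (Pi.basisFun K (Fin 4)) hdet) _
end
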